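/- arXiv:1910.08771 — 5 statements merged into one kernel-verified Lean document; each statement's English description precedes it below -/
import Mathlib

section
/- Let Φ : ℝ^{n×n} → ℝ^m be a linear operator and X = (x_1, …, x_n) ∈ ℝ^{n×n} a matrix with support S = S₁ ∪ … ∪ S_n (S_j = supp(x_j)). If X is a minimizer of inf ‖Z‖₁ subject to Φ(Z) = Φ(X), then there exist λ₁, …, λ_n ≥ 0 with λ₁ + … + λ_n = 1 such that for every H = (h_1, …, h_n) ∈ ker Φ one has |Σ_{j=1}^n λ_j ⟨h_{j|S_j}, sgn(x_j)⟩| ≤ ‖H_{−S}‖₁. -/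
open scoped BigOperators
open scoped Classical

noncomputable section

/-- The l1 norm of the j-th column of X. -/
def colNorm1 {n : ℕ} (X : Matrix (Fin n) (Fin n) ℝ) (j : Fin n) : ℝ := ∑ i, |X i j|

/-- The matrix norm ‖X‖₁ := max_j |x_j|₁. -/
def mnorm1 {n : ℕ} (X : Matrix (Fin n) (Fin n) ℝ) : ℝ := ⨆ j, colNorm1 X j

/-- Trace inner product on matrices. -/
def minner {n : ℕ} (A B : Matrix (Fin n) (Fin n) ℝ) : ℝ := ∑ i, ∑ j, A i j * B i j

/-- Euclidean norm on ℝ^m. -/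
def vnorm2 {m : ℕ} (y : Fin m → ℝ) : ℝ := Real.sqrt (∑ k, (y k)^2)

/-- Frobenius norm. -/
def frob {n : ℕ} (X : Matrix (Fin n) (Fin n) ℝ) : ℝ := Real.sqrt (∑ i, ∑ j, (X i j)^2)

/-- H_S : the matrix agreeing with H on the sparsity pattern S and zero elsewhere. -/
def restrict {n : ℕ} (S : Fin n → Finset (Fin n)) (H : Matrix (Fin n) (Fin n) ℝ) :
    Matrix (Fin n) (Fin n) ℝ := Matrix.of fun i j => if i ∈ S j then H i j else 0

/-- An s-sparsity pattern: S_j ⊆ rows, |S_j| ≤ s for every column j. -/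
def SparsityPattern (n s : ℕ) (S : Fin n → Finset (Fin n)) : Prop := ∀ j, (S j).card ≤ s

/-- Σ_s^{n×n}: every column has at most s nonzero entries. -/
def ColSparse {n : ℕ} (s : ℕ) (X : Matrix (Fin n) (Fin n) ℝ) : Prop :=
  ∀ j, ((Finset.univ : Finset (Fin n)).filter fun i => X i j ≠ 0).card ≤ s

/-- l1-column-flat: all columns have the same l1-norm. -/
def Flat {n : ℕ} (X : Matrix (Fin n) (Fin n) ℝ) : Prop :=
  ∀ j k, colNorm1 X j = colNorm1 X k

/-! The column norms `H ↦ |x_j + h_j|₁` are convex, and minimality of `X` says that on `ker Φ` they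
never all drop below `M = ‖X‖₁`. Separating the epigraph of the vector of excesses over `M` from
the open negative orthant yields convex weights `λ` with `∑ λ_j |x_j + h_j|₁ ≥ M` on `ker Φ`. Since
`∑ λ_j |x_j|₁ ≤ M`, the weighted one-sided directional derivative at `X` is nonnegative:
`0 ≤ ∑ λ_j (⟨h_{j|S_j}, sgn x_j⟩ + |(h_{-S})_j|₁)`. The first term is odd in `H`, and the second is
even and averages to at most `‖H_{-S}‖₁`, so comparing `H` with `-H` bounds the absolute value. -/

section Weights

open Set Filter Topology

variable {ι : Type*} [Fintype ι]

lemma dotProduct_le_iSup_of_mem_stdSimplex {w : ι → ℝ} (hw : w ∈ stdSimplex ℝ ι) (y : ι → ℝ) :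
    w ⬝ᵥ y ≤ ⨆ j, y j :=
  calc ∑ j, w j * y j ≤ ∑ j, w j * ⨆ k, y k := Finset.sum_le_sum fun j _ =>
        mul_le_mul_of_nonneg_left (le_ciSup (finite_range y).bddAbove j) (hw.1 j)
    _ = ⨆ k, y k := by rw [← Finset.sum_mul, hw.2, one_mul]

lemma nonpos_and_nonneg_of_forall_pos_mul_lt {a c : ℝ} (h : ∀ t > 0, t * a < c) :
    a ≤ 0 ∧ 0 ≤ c := by
  constructor
  · by_contra! ha
    have := h ((|c| + 1) / a) (by positivity)
    rw [div_mul_cancel₀ _ ha.ne'] at this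
    linarith [le_abs_self c]
  · have hlim : Tendsto (fun t : ℝ => t * a) (𝓝[>] 0) (𝓝 0) := by
      simpa using ((continuous_mul_const a).tendsto 0).mono_left nhdsWithin_le_nhds
    exact le_of_tendsto hlim (eventually_mem_nhdsWithin.mono fun t ht => (h t ht).le)

lemma inv_sum_smul_mem_stdSimplex {a : ι → ℝ} (ha : 0 ≤ a) (hne : a ≠ 0) :
    (∑ j, a j)⁻¹ • a ∈ stdSimplex ℝ ι := by
  have hsum : 0 < ∑ j, a j := Fintype.sum_pos (ha.lt_of_ne' hne)
  refine ⟨fun j => mul_nonneg (inv_nonneg.2 hsum.le) (ha j), ?_⟩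
  simp only [Pi.smul_apply, smul_eq_mul, ← Finset.mul_sum, inv_mul_cancel₀ hsum.ne']

lemma exists_mem_stdSimplex_dotProduct_nonneg {C : Set (ι → ℝ)} (hC : Convex ℝ C)
    (hne : C.Nonempty) (h : ∀ y ∈ C, ∃ j, 0 ≤ y j) :
    ∃ w ∈ stdSimplex ℝ ι, ∀ y ∈ C, 0 ≤ w ⬝ᵥ y := by
  set N : Set (ι → ℝ) := univ.pi fun _ => Iio 0
  have hdisj : Disjoint N C := disjoint_left.2 fun y hyN hyC =>
    let ⟨j, hj⟩ := h y hyC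
    (hyN j trivial).not_ge hj
  obtain ⟨f, u, hfN, hfC⟩ := geometric_hahn_banach_open (convex_pi fun _ _ => convex_Iio 0)
    (isOpen_set_pi finite_univ fun _ _ => isOpen_Iio) hC hdisj
  obtain ⟨a, ha⟩ := (dotProductEquiv ℝ ι).surjective f.toLinearMap
  have hfa (y : ι → ℝ) : f y = a ⬝ᵥ y := (DFunLike.congr_fun ha y).symm
  -- `N` is a cone, so the separation persists along rays.
  have hsign {y z : ι → ℝ} (hy : y ∈ N) (hz : z ∈ C) : f y ≤ 0 ∧ 0 ≤ f z :=
    nonpos_and_nonneg_of_forall_pos_mul_lt fun t ht => by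
      have hty : t • y ∈ N := fun j _ => mul_neg_of_pos_of_neg ht (hy j trivial)
      simpa using (hfN _ hty).trans_le (hfC z hz)
  obtain ⟨z, hz⟩ := hne
  have hneg : (-1 : ι → ℝ) ∈ N := fun _ _ => mem_Iio.2 neg_one_lt_zero
  have ha_nonneg : 0 ≤ a := fun j => by
    have hmem : -Pi.single j 1 ∈ closure N := by
      simp only [N, closure_pi_set, closure_Iio, mem_univ_pi, mem_Iic, Pi.neg_apply,
        Left.neg_nonpos_iff]
      exact (Pi.single_nonneg.2 zero_le_one : (0 : ι → ℝ) ≤ Pi.single j 1)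
    have hle : f (-Pi.single j 1) ≤ 0 := closure_minimal (fun y hy => (hsign hy hz).1)
      (isClosed_le f.continuous continuous_const) hmem
    simpa [hfa] using hle
  have ha_ne : a ≠ 0 := by
    rintro rfl
    simpa [hfa] using (hfN _ hneg).trans_le (hfC z hz)
  refine ⟨_, inv_sum_smul_mem_stdSimplex ha_nonneg ha_ne, fun y hy => ?_⟩
  rw [smul_dotProduct, ← hfa]
  exact mul_nonneg (inv_nonneg.2 (Finset.sum_nonneg fun j _ => ha_nonneg j)) (hsign hneg hy).2

lemma exists_mem_stdSimplex_dotProduct_nonneg_of_convexOn {E : Type*} [AddCommGroup E]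
    [Module ℝ E] {K : Set E} (hK : K.Nonempty) {F : E → ι → ℝ} (hF : ConvexOn ℝ K F)
    (h : ∀ x ∈ K, ∃ j, 0 ≤ F x j) :
    ∃ w ∈ stdSimplex ℝ ι, ∀ x ∈ K, 0 ≤ w ⬝ᵥ F x := by
  set C : Set (ι → ℝ) := LinearMap.snd ℝ E (ι → ℝ) '' {p | p.1 ∈ K ∧ F p.1 ≤ p.2}
  have hFC {x : E} (hx : x ∈ K) : F x ∈ C := ⟨(x, F x), ⟨hx, le_rfl⟩, rfl⟩
  have hC : ∀ y ∈ C, ∃ j, 0 ≤ y j := by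
    rintro _ ⟨⟨x, y⟩, ⟨hx, hxy⟩, rfl⟩
    exact (h x hx).imp fun j hj => hj.trans (hxy j)
  obtain ⟨w, hw, hwC⟩ := exists_mem_stdSimplex_dotProduct_nonneg
    (hF.convex_epigraph.linear_image _) (hK.elim fun x hx => ⟨F x, hFC hx⟩) hC
  exact ⟨w, hw, fun x hx => hwC _ (hFC hx)⟩

/-- In the hypothesis `hD`, the vector `D v` plays the role of the one-sided directional derivative
of `f` at `x` along `v`. -/
lemma exists_mem_stdSimplex_dotProduct_nonneg_of_forall_iSup_le [Nonempty ι] {E : Type*}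
    [AddCommGroup E] [Module ℝ E] (V : Submodule ℝ E) {f D : E → ι → ℝ} {x : E}
    (hf : ConvexOn ℝ univ f) (hmin : ∀ v ∈ V, ⨆ j, f x j ≤ ⨆ j, f (x + v) j)
    (hD : ∀ v ∈ V, ∃ t > (0 : ℝ), f (x + t • v) ≤ f x + t • D v) :
    ∃ w ∈ stdSimplex ℝ ι, ∀ v ∈ V, 0 ≤ w ⬝ᵥ D v := by
  set M : ι → ℝ := fun _ => ⨆ j, f x j
  have hexcess : ConvexOn ℝ V fun v => f (x + v) - M :=
    (((hf.translate_right x).add_const (-M)).subset (subset_univ _) V.convex).congr fun v _ => by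
      simp [sub_eq_add_neg]
  obtain ⟨w, hw, hwV⟩ := exists_mem_stdSimplex_dotProduct_nonneg_of_convexOn ⟨0, V.zero_mem⟩
    hexcess fun v hv => by
      obtain ⟨j, hj⟩ := exists_eq_ciSup_of_finite (f := f (x + v))
      exact ⟨j, sub_nonneg.2 (hj ▸ hmin v hv)⟩
  refine ⟨w, hw, fun v hv => ?_⟩
  obtain ⟨t, ht, hft⟩ := hD v hv
  have hslope : f (x + t • v) - M ≤ t • D v := fun j => by
    have hM : f x j ≤ M j := le_ciSup (finite_range (f x)).bddAbove j
    calc f (x + t • v) j - M j ≤ f x j + (t • D v) j - M j := sub_le_sub_right (hft j) _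
      _ ≤ (t • D v) j := by linarith
  refine nonneg_of_mul_nonneg_right ?_ ht
  calc 0 ≤ w ⬝ᵥ (f (x + t • v) - M) := hwV _ (V.smul_mem t hv)
    _ ≤ w ⬝ᵥ (t • D v) := dotProduct_le_dotProduct_of_nonneg_left hslope hw.1
    _ = t * w ⬝ᵥ D v := dotProduct_smul t w (D v)

end Weights

section AbsSum

open Set Filter Topology

variable {ι κ : Type*} [Fintype ι]

lemma eventually_abs_add_mul (x h : ℝ) :
    ∀ᶠ t in 𝓝[>] 0,
      |x + t * h| = |x| + t * (h * Real.sign x + if x = 0 then |h| else 0) := by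
  have hlim : Tendsto (fun t : ℝ => x + t * h) (𝓝[>] 0) (𝓝 x) := by
    have hcont : Continuous fun t : ℝ => x + t * h := by fun_prop
    simpa using (hcont.tendsto 0).mono_left nhdsWithin_le_nhds
  rcases lt_trichotomy x 0 with hx | rfl | hx
  · filter_upwards [hlim.eventually_lt_const hx] with t ht
    rw [abs_of_neg ht, abs_of_neg hx, Real.sign_of_neg hx, if_neg hx.ne]
    ring
  · filter_upwards [self_mem_nhdsWithin] with t ht
    simp [abs_mul, abs_of_pos (mem_Ioi.1 ht)]
  · filter_upwards [hlim.eventually_const_lt hx] with t ht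
    rw [abs_of_pos ht, abs_of_pos hx, Real.sign_of_pos hx, if_neg hx.ne']
    ring

lemma eventually_sum_abs_add_mul [DecidableEq ι] {x : ι → ℝ} {s : Finset ι}
    (hs : ∀ i, i ∈ s ↔ x i ≠ 0) (h : ι → ℝ) :
    ∀ᶠ t in 𝓝[>] 0, ∑ i, |x i + t * h i| =
      ∑ i, |x i| + t * (∑ i ∈ s, h i * Real.sign (x i) + ∑ i ∈ sᶜ, |h i|) := by
  have hsgn : ∑ i, h i * Real.sign (x i) = ∑ i ∈ s, h i * Real.sign (x i) :=
    (Finset.sum_subset s.subset_univ fun i _ hi => by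
      simp [not_ne_iff.1 (mt (hs i).2 hi)]).symm
  have habs : ∑ i, (if x i = 0 then |h i| else 0) = ∑ i ∈ sᶜ, |h i| := by
    rw [← Finset.sum_filter]
    congr 1
    ext i
    simp [hs]
  filter_upwards [eventually_all.2 fun i => eventually_abs_add_mul (x i) (h i)] with t ht
  simp only [ht, Finset.sum_add_distrib, ← Finset.mul_sum, hsgn, habs]

lemma convexOn_sum_abs_col :
    ConvexOn ℝ univ fun (X : Matrix ι κ ℝ) j => ∑ i, |X i j| := by
  refine ⟨convex_univ, fun X _ Y _ a b ha hb _ j => ?_⟩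
  calc ∑ i, |a * X i j + b * Y i j| ≤ ∑ i, (a * |X i j| + b * |Y i j|) :=
        Finset.sum_le_sum fun i _ => (abs_add_le _ _).trans_eq (by
          rw [abs_mul, abs_mul, abs_of_nonneg ha, abs_of_nonneg hb])
    _ = a * ∑ i, |X i j| + b * ∑ i, |Y i j| := by
        rw [Finset.sum_add_distrib, Finset.mul_sum, Finset.mul_sum]

end AbsSum

theorem nonuniform_necessary_condition_general {ι κ F : Type*} [Fintype ι] [DecidableEq ι]
    [Fintype κ] [Nonempty κ] [AddCommGroup F] [Module ℝ F] (Φ : Matrix ι κ ℝ →ₗ[ℝ] F)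
    (X : Matrix ι κ ℝ) (S : κ → Finset ι) (hS : ∀ j i, i ∈ S j ↔ X i j ≠ 0)
    (hmin : ∀ Z : Matrix ι κ ℝ, Φ Z = Φ X → ⨆ j, ∑ i, |X i j| ≤ ⨆ j, ∑ i, |Z i j|) :
    ∃ lam ∈ stdSimplex ℝ κ, ∀ H : Matrix ι κ ℝ, Φ H = 0 →
      |∑ j, lam j * ∑ i ∈ S j, H i j * Real.sign (X i j)| ≤ ⨆ j, ∑ i ∈ (S j)ᶜ, |H i j| := by
  set L : Matrix ι κ ℝ → κ → ℝ := fun H j => ∑ i ∈ S j, H i j * Real.sign (X i j)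
  set P : Matrix ι κ ℝ → κ → ℝ := fun H j => ∑ i ∈ (S j)ᶜ, |H i j|
  obtain ⟨lam, hlam, hderiv⟩ := exists_mem_stdSimplex_dotProduct_nonneg_of_forall_iSup_le
    (D := fun H => L H + P H) (LinearMap.ker Φ) convexOn_sum_abs_col
    (fun H hH => hmin (X + H) (by rw [map_add, hH, add_zero])) fun H _ => by
      obtain ⟨t, hexp, ht⟩ := ((Filter.eventually_all.2 fun j =>
        eventually_sum_abs_add_mul (hS j) (H · j)).and self_mem_nhdsWithin).exists
      exact ⟨t, ht, fun j => (hexp j).le⟩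
  have hlower (H : Matrix ι κ ℝ) (hH : Φ H = 0) : -(lam ⬝ᵥ L H) ≤ ⨆ j, P H j := by
    have hnonneg := hderiv H hH
    rw [dotProduct_add] at hnonneg
    linarith [dotProduct_le_iSup_of_mem_stdSimplex hlam (P H)]
  refine ⟨lam, hlam, fun H hH => abs_le'.2 ⟨?_, hlower H hH⟩⟩
  have hL : L (-H) = -L H := by ext; simp [L]
  have hP : P (-H) = P H := by ext; simp [P]
  have hupper := hlower (-H) (by rw [map_neg, hH, neg_zero])
  rwa [hL, hP, dotProduct_neg, neg_neg] at hupper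

lemma colNorm1_sub_restrict {n : ℕ} (S : Fin n → Finset (Fin n)) (H : Matrix (Fin n) (Fin n) ℝ)
    (j : Fin n) : colNorm1 (H - restrict S H) j = ∑ i ∈ (S j)ᶜ, |H i j| := by
  rw [Finset.compl_eq_univ_sdiff, ← Finset.filter_notMem_eq_sdiff, Finset.sum_filter]
  refine Finset.sum_congr rfl fun i _ => ?_
  by_cases hi : i ∈ S j <;> simp [restrict, hi]

/-- non-uniform necessary condition for minimality (Remark 3.2, (3.7)). -/
theorem nonuniform_necessary_condition {n m : ℕ} (hn : 0 < n)
    (Φ : Matrix (Fin n) (Fin n) ℝ →ₗ[ℝ] (Fin m → ℝ))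
    (X : Matrix (Fin n) (Fin n) ℝ)
    (S : Fin n → Finset (Fin n))
    (hS : ∀ j i, i ∈ S j ↔ X i j ≠ 0)
    (hmin : ∀ Z : Matrix (Fin n) (Fin n) ℝ, Φ Z = Φ X → mnorm1 X ≤ mnorm1 Z) :
    ∃ lam : Fin n → ℝ, (∀ j, 0 ≤ lam j) ∧ (∑ j, lam j = 1) ∧
      ∀ H : Matrix (Fin n) (Fin n) ℝ, Φ H = 0 →
        |∑ j, lam j * ∑ i ∈ S j, H i j * Real.sign (X i j)|
          ≤ mnorm1 (H - restrict S H) := by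
  have : Nonempty (Fin n) := ⟨⟨0, hn⟩⟩
  obtain ⟨lam, ⟨hnonneg, hsum⟩, hle⟩ := nonuniform_necessary_condition_general Φ X S hS hmin
  exact ⟨lam, hnonneg, hsum, by simpa only [mnorm1, colNorm1_sub_restrict] using hle⟩

end
end

section
/- Let s be a positive integer and Φ : ℝ^{n×n} → ℝ^m a linear operator satisfying the s-‖·‖₁ Stable Null Space Property with constant 0 < ρ < 1: ‖H_S‖₁ ≤ ρ‖H_{−S}‖₁ for every H ∈ ker Φ and every s-sparsity pattern S. Let X = (x_1, …, x_n) ∈ ℝ^{n×n}, y = Φ(X), and let Z = (z_1, …, z_n) be any matrix with Φ(Z) = y. Then ‖Z − X‖₁ ≤ (1−ρ)^{−1}(1+ρ)(2 max_j σ_s(x_j)₁ + max_j (|z_j|₁ − |x_j|₁)). In particular, if X is l₁-column-flat and X* is a minimizer of inf ‖Z‖₁ subject to Φ(Z) = y, then ‖X* − X‖₁ ≤ 2(1−ρ)^{−1}(1+ρ) max_j σ_s(x_j)₁. -/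
/-!
Let `H = Z - X` and let `S` mark the `s` largest entries of each column of `X`. In absolute value,
the entries of `Z` are at least those of `X` minus those of `H` on `S`, and at least those of `H`
minus those of `X` off `S`. So, column by column, the part of `H` off `S` exceeds its part on `S`
by at most `2 σ_s(x)₁` plus the excess of `|z|₁` over `|x|₁`. The null space property bounds the
part on `S` by `ρ` times the part off `S`, so it can be absorbed, and all of `H` is controlled by
these two errors. When `X` is column-flat, no column of a minimizer is longer than the common length
of the columns of `X`, so the excess is nonpositive.
-/

open scoped BigOperators
open scoped Classical

noncomputable section

/-- σ_s(v)₁ : the l1-error of the best s-term approximation of v. -/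
def sigmas {n : ℕ} (s : ℕ) (v : Fin n → ℝ) : ℝ :=
  ⨅ T : {T : Finset (Fin n) // T.card ≤ s}, ∑ i ∈ (T.1)ᶜ, |v i|

section General

variable {ι κ E F : Type*} [SeminormedAddCommGroup E] [AddGroup F]

/-- The norm `‖H_S‖₁` of a matrix `H` restricted to the pattern `S`, whose `j`-th column is `S j`.
Thus `S = ⊤` gives `‖H‖₁`, and the pointwise complement `Sᶜ` gives `‖H_{-S}‖₁`. -/
def maxColNormOn (S : κ → Finset ι) (H : Matrix ι κ E) : ℝ := ⨆ j, ∑ i ∈ S j, ‖H i j‖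

lemma sum_norm_le_maxColNormOn [Finite κ] (S : κ → Finset ι) (H : Matrix ι κ E) (j : κ) :
    ∑ i ∈ S j, ‖H i j‖ ≤ maxColNormOn S H :=
  le_ciSup (f := fun j => ∑ i ∈ S j, ‖H i j‖) (Set.finite_range _).bddAbove j

lemma iSup_sum_norm_sub_sum_norm_nonpos [Fintype ι] [Finite κ] [Nonempty κ] {X Z : Matrix ι κ E}
    (hflat : ∀ j k, ∑ i, ‖X i j‖ = ∑ i, ‖X i k‖) (hZX : maxColNormOn ⊤ Z ≤ maxColNormOn ⊤ X) :
    ⨆ j, (∑ i, ‖Z i j‖ - ∑ i, ‖X i j‖) ≤ 0 :=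
  ciSup_le fun j => sub_nonpos.2 <|
    calc ∑ i, ‖Z i j‖ ≤ maxColNormOn ⊤ Z := sum_norm_le_maxColNormOn ⊤ Z j
      _ ≤ maxColNormOn ⊤ X := hZX
      _ ≤ ∑ i, ‖X i j‖ := ciSup_le fun k => (hflat k j).le

variable [Fintype ι] [DecidableEq ι]

/-- The error `σ_s(v)₁` of the best `s`-term approximation of `v`, as the least `l₁`-mass left
outside a set of at most `s` indices. -/
def sparseApproxError (s : ℕ) (v : ι → E) : ℝ :=
  ⨅ T : {T : Finset ι // T.card ≤ s}, ∑ i ∈ T.1ᶜ, ‖v i‖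

lemma exists_sum_compl_norm_eq_sparseApproxError (s : ℕ) (v : ι → E) :
    ∃ T : Finset ι, T.card ≤ s ∧ ∑ i ∈ Tᶜ, ‖v i‖ = sparseApproxError s v := by
  have : Nonempty {T : Finset ι // T.card ≤ s} := ⟨⟨∅, by simp⟩⟩
  obtain ⟨⟨T, hcard⟩, hT⟩ := exists_eq_ciInf_of_finite
    (f := fun T : {T : Finset ι // T.card ≤ s} => ∑ i ∈ T.1ᶜ, ‖v i‖)
  exact ⟨T, hcard, hT⟩

lemma sum_compl_norm_sub_le (T : Finset ι) (x z : ι → E) :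
    ∑ i ∈ Tᶜ, ‖z i - x i‖ ≤
      ∑ i ∈ T, ‖z i - x i‖ + (2 * ∑ i ∈ Tᶜ, ‖x i‖ + (∑ i, ‖z i‖ - ∑ i, ‖x i‖)) := by
  have off_T : ∑ i ∈ Tᶜ, ‖z i - x i‖ ≤ ∑ i ∈ Tᶜ, ‖z i‖ + ∑ i ∈ Tᶜ, ‖x i‖ := by
    rw [← Finset.sum_add_distrib]
    exact Finset.sum_le_sum fun i _ => norm_sub_le _ _
  have on_T : ∑ i ∈ T, ‖x i‖ ≤ ∑ i ∈ T, ‖z i‖ + ∑ i ∈ T, ‖z i - x i‖ := by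
    rw [← Finset.sum_add_distrib]
    exact Finset.sum_le_sum fun i _ => norm_le_norm_add_norm_sub _ _
  rw [← Finset.sum_add_sum_compl T fun i => ‖z i‖, ← Finset.sum_add_sum_compl T fun i => ‖x i‖]
  linarith

variable [Finite κ] [Nonempty κ]

lemma maxColNormOn_top_le_add_compl (S : κ → Finset ι) (H : Matrix ι κ E) :
    maxColNormOn ⊤ H ≤ maxColNormOn S H + maxColNormOn Sᶜ H :=
  ciSup_le fun j =>
    calc ∑ i, ‖H i j‖ = ∑ i ∈ S j, ‖H i j‖ + ∑ i ∈ Sᶜ j, ‖H i j‖ :=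
          (Finset.sum_add_sum_compl (S j) _).symm
      _ ≤ maxColNormOn S H + maxColNormOn Sᶜ H :=
          add_le_add (sum_norm_le_maxColNormOn S H j) (sum_norm_le_maxColNormOn Sᶜ H j)

lemma maxColNormOn_compl_sub_le (S : κ → Finset ι) (X Z : Matrix ι κ E) :
    maxColNormOn Sᶜ (Z - X) ≤ maxColNormOn S (Z - X) +
      (2 * maxColNormOn Sᶜ X + ⨆ j, (∑ i, ‖Z i j‖ - ∑ i, ‖X i j‖)) := by
  refine ciSup_le fun j => (sum_compl_norm_sub_le (S j) (X.col j) (Z.col j)).trans ?_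
  gcongr
  · exact sum_norm_le_maxColNormOn S (Z - X) j
  · exact sum_norm_le_maxColNormOn Sᶜ X j
  · exact le_ciSup (f := fun j => ∑ i, ‖Z i j‖ - ∑ i, ‖X i j‖) (Set.finite_range _).bddAbove j

lemma maxColNormOn_top_sub_le {ρ : ℝ} (hρ0 : 0 ≤ ρ) (hρ1 : ρ < 1) {S : κ → Finset ι}
    {X Z : Matrix ι κ E} (hS : maxColNormOn S (Z - X) ≤ ρ * maxColNormOn Sᶜ (Z - X)) :
    maxColNormOn ⊤ (Z - X) ≤ (1 - ρ)⁻¹ * (1 + ρ) *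
      (2 * maxColNormOn Sᶜ X + ⨆ j, (∑ i, ‖Z i j‖ - ∑ i, ‖X i j‖)) := by
  set B := 2 * maxColNormOn Sᶜ X + ⨆ j, (∑ i, ‖Z i j‖ - ∑ i, ‖X i j‖)
  have off_S : maxColNormOn Sᶜ (Z - X) ≤ (1 - ρ)⁻¹ * B := by
    rw [le_inv_mul_iff₀ (sub_pos.2 hρ1)]
    linarith [maxColNormOn_compl_sub_le S X Z]
  calc maxColNormOn ⊤ (Z - X) ≤ maxColNormOn S (Z - X) + maxColNormOn Sᶜ (Z - X) :=
        maxColNormOn_top_le_add_compl S (Z - X)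
    _ ≤ (1 + ρ) * maxColNormOn Sᶜ (Z - X) := by linarith
    _ ≤ (1 + ρ) * ((1 - ρ)⁻¹ * B) := by gcongr
    _ = (1 - ρ)⁻¹ * (1 + ρ) * B := by ring

theorem stable_nullspace_reconstruction_general {s : ℕ} (Φ : Matrix ι κ E →+ F) {ρ : ℝ}
    (hρ0 : 0 ≤ ρ) (hρ1 : ρ < 1)
    (hSNSP : ∀ H : Matrix ι κ E, Φ H = 0 → ∀ S : κ → Finset ι, (∀ j, (S j).card ≤ s) →
      maxColNormOn S H ≤ ρ * maxColNormOn Sᶜ H)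
    (X : Matrix ι κ E) :
    (∀ Z : Matrix ι κ E, Φ Z = Φ X →
      maxColNormOn ⊤ (Z - X) ≤ (1 - ρ)⁻¹ * (1 + ρ) *
        (2 * (⨆ j, sparseApproxError s (X.col j)) + ⨆ j, (∑ i, ‖Z i j‖ - ∑ i, ‖X i j‖))) ∧
    ((∀ j k, ∑ i, ‖X i j‖ = ∑ i, ‖X i k‖) → ∀ Xstar : Matrix ι κ E, Φ Xstar = Φ X →
      (∀ Z : Matrix ι κ E, Φ Z = Φ X → maxColNormOn ⊤ Xstar ≤ maxColNormOn ⊤ Z) →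
        maxColNormOn ⊤ (Xstar - X) ≤
          2 * (1 - ρ)⁻¹ * (1 + ρ) * ⨆ j, sparseApproxError s (X.col j)) := by
  choose S hcard hS using fun j => exists_sum_compl_norm_eq_sparseApproxError s (X.col j)
  have tail_eq : maxColNormOn Sᶜ X = ⨆ j, sparseApproxError s (X.col j) := iSup_congr hS
  rw [← tail_eq]
  have stable (Z : Matrix ι κ E) (hZ : Φ Z = Φ X) :=
    maxColNormOn_top_sub_le hρ0 hρ1
      (hSNSP (Z - X) (by rw [map_sub, hZ, sub_self]) S hcard)
  refine ⟨stable, fun hflat Xstar hXstar hmin => (stable Xstar hXstar).trans ?_⟩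
  have excess_nonpos := iSup_sum_norm_sub_sum_norm_nonpos hflat (hmin X rfl)
  have : 0 ≤ 1 - ρ := sub_nonneg.2 hρ1.le
  calc _ ≤ (1 - ρ)⁻¹ * (1 + ρ) * (2 * maxColNormOn Sᶜ X + 0) := by gcongr
    _ = 2 * (1 - ρ)⁻¹ * (1 + ρ) * maxColNormOn Sᶜ X := by ring

end General

lemma mnorm1_restrict {n : ℕ} (S : Fin n → Finset (Fin n)) (H : Matrix (Fin n) (Fin n) ℝ) :
    mnorm1 (restrict S H) = maxColNormOn S H := by
  simp [mnorm1, colNorm1, restrict, maxColNormOn, apply_ite abs, Finset.sum_ite_mem]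

lemma sub_restrict {n : ℕ} (S : Fin n → Finset (Fin n)) (H : Matrix (Fin n) (Fin n) ℝ) :
    H - restrict S H = restrict Sᶜ H := by
  ext i j
  by_cases hi : i ∈ S j <;> simp [restrict, hi]

/-- stable reconstruction under the s-‖·‖₁ Stable Null Space Property
(Theorem 3.2). -/
theorem stable_nullspace_reconstruction {n m s : ℕ} (hn : 0 < n) (hs : 0 < s)
    (Φ : Matrix (Fin n) (Fin n) ℝ →ₗ[ℝ] (Fin m → ℝ))
    (ρ : ℝ) (hρ0 : 0 < ρ) (hρ1 : ρ < 1)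
    (hSNSP : ∀ H : Matrix (Fin n) (Fin n) ℝ, Φ H = 0 →
        ∀ S : Fin n → Finset (Fin n), SparsityPattern n s S →
          mnorm1 (restrict S H) ≤ ρ * mnorm1 (H - restrict S H))
    (X : Matrix (Fin n) (Fin n) ℝ) :
    (∀ Z : Matrix (Fin n) (Fin n) ℝ, Φ Z = Φ X →
        mnorm1 (Z - X) ≤ (1 - ρ)⁻¹ * (1 + ρ) *
          (2 * (⨆ j, sigmas s (fun i => X i j)) + ⨆ j, (colNorm1 Z j - colNorm1 X j)))
    ∧ (Flat X → ∀ Xstar : Matrix (Fin n) (Fin n) ℝ, Φ Xstar = Φ X →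
        (∀ Z : Matrix (Fin n) (Fin n) ℝ, Φ Z = Φ X → mnorm1 Xstar ≤ mnorm1 Z) →
          mnorm1 (Xstar - X) ≤ 2 * (1 - ρ)⁻¹ * (1 + ρ) * ⨆ j, sigmas s (fun i => X i j)) := by
  have : Nonempty (Fin n) := ⟨⟨0, hn⟩⟩
  refine stable_nullspace_reconstruction_general (s := s) Φ.toAddMonoidHom hρ0.le hρ1
    (fun H hH S hS => ?_) X
  simpa only [sub_restrict, mnorm1_restrict] using hSNSP H hH S hS

end
end

section
/- Let Φ : ℝ^{n×n} → ℝ^m be a linear operator, X a matrix with support S = S₁ ∪ … ∪ S_n, and y = Φ(X) + e with |e|₂ ≤ η, η > 0. If X* is a minimizer of inf ‖Z‖₁ subject to |y − Φ(Z)|₂ ≤ η having the same support S and the same signs of nonzero entries as X, then there exist β > 0 and λ₁, …, λ_n ≥ 0 with λ₁ + … + λ_n = 1 such that for every H = (h_1, …, h_n) ∈ ℝ^{n×n}: |Σ_{j=1}^n λ_j ⟨h_{j|S_j}, sgn(x_j)⟩| ≤ ‖H_{−S}‖₁ + β|Φ(H)|₂. -/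
/-!
The minimizer `X*` also minimizes `‖·‖₁` over `X* + ker Φ`. At `X*`, in the direction `H`, the
`j`-th column norm has the one-sided derivative `ℓ_j(H) + p_j(H)`, where the functional
`ℓ_j(H) = ⟨h_{j|S_j}, sgn(x_j)⟩` is linear and `p_j(H) = |h_{j|S_jᶜ}|₁` is a seminorm. If all these
derivatives were negative for some `H ∈ ker Φ`, a small step along `H` would shrink every column and
hence `‖X*‖₁`. So the maximum over `j` of the convex functions `ℓ_j + p_j` is nonnegative on
`ker Φ`, and separating hyperplanes turn this into `0 ≤ ∑ λ_j (ℓ_j + p_j)` on `ker Φ` for convex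
weights `λ`.

Read at `-H`, this bounds the functional `∑ λ_j ℓ_j` on `ker Φ` by the seminorm `∑ λ_j p_j`. By
Hahn–Banach the restriction to `ker Φ` extends to a functional with the same bound everywhere; the
error made by the extension vanishes on `ker Φ`, so it factors through `Φ` and is at most
`β|Φ(H)|₂`.
-/

open scoped BigOperators
open scoped Classical

noncomputable section

section Separation

variable {ι E : Type*} [Fintype ι]

lemma exists_mem_stdSimplex_forall_sum_mul_pos {C : Set (ι → ℝ)} (hconv : Convex ℝ C)
    (hopen : IsOpen C) (hupper : IsUpperSet C) (hne : C.Nonempty) (hzero : 0 ∉ C) :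
    ∃ lam ∈ stdSimplex ℝ ι, ∀ v ∈ C, 0 < ∑ j, lam j * v j := by
  obtain ⟨f, hf⟩ := geometric_hahn_banach_open_point hconv hopen hzero
  rw [map_zero] at hf
  obtain ⟨v₀, hv₀⟩ := hne
  let μ : ι → ℝ := fun j ↦ -f (Pi.single j 1)
  have neg_apply_eq (v : ι → ℝ) : -f v = ∑ j, μ j * v j := by
    conv_lhs => rw [pi_eq_sum_univ' v]
    simp [μ, mul_comm]
  have sum_pos (v : ι → ℝ) (hv : v ∈ C) : 0 < ∑ j, μ j * v j := by
    rw [← neg_apply_eq]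
    exact neg_pos.mpr (hf v hv)
  -- Otherwise `f` would reach `0` on the ray from `v₀` in the `j`-th coordinate direction.
  have μ_nonneg (j : ι) : 0 ≤ μ j := by
    by_contra! hj
    have hfj : 0 < f (Pi.single j 1) := neg_neg_iff_pos.mp hj
    have ht : 0 ≤ -f v₀ / f (Pi.single j 1) := div_nonneg (neg_nonneg.mpr (hf v₀ hv₀).le) hfj.le
    have hmem : v₀ + (-f v₀ / f (Pi.single j 1)) • Pi.single j 1 ∈ C :=
      hupper (le_add_of_nonneg_right (smul_nonneg ht (Pi.single_nonneg.mpr zero_le_one))) hv₀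
    have hlt := hf _ hmem
    rw [map_add, map_smul, smul_eq_mul, div_mul_cancel₀ _ hfj.ne', add_neg_cancel] at hlt
    exact hlt.false
  have total_pos : 0 < ∑ j, μ j := by
    obtain ⟨j, -, hj⟩ := Finset.exists_ne_zero_of_sum_ne_zero (sum_pos v₀ hv₀).ne'
    exact Finset.sum_pos' (fun j _ ↦ μ_nonneg j)
      ⟨j, Finset.mem_univ j, (μ_nonneg j).lt_of_ne' (left_ne_zero_of_mul hj)⟩
  refine ⟨fun j ↦ μ j / ∑ k, μ k, ⟨fun j ↦ div_nonneg (μ_nonneg j) total_pos.le, ?_⟩,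
    fun v hv ↦ ?_⟩
  · rw [← Finset.sum_div, div_self total_pos.ne']
  · simp only [div_mul_eq_mul_div, ← Finset.sum_div]
    exact div_pos (sum_pos v hv) total_pos

lemma sum_mul_le_ciSup_of_mem_stdSimplex {lam : ι → ℝ} (hlam : lam ∈ stdSimplex ℝ ι)
    (v : ι → ℝ) : ∑ j, lam j * v j ≤ ⨆ j, v j :=
  calc ∑ j, lam j * v j ≤ ∑ j, lam j * ⨆ k, v k :=
        Finset.sum_le_sum fun j _ ↦ mul_le_mul_of_nonneg_left (Finite.le_ciSup v j) (hlam.1 j)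
    _ = ⨆ j, v j := by rw [← Finset.sum_mul, hlam.2, one_mul]

variable [AddCommGroup E] [Module ℝ E]

theorem exists_mem_stdSimplex_forall_sum_mul_nonneg {s : Set E} (hs : s.Nonempty)
    {F : ι → E → ℝ} (hF : ∀ j, ConvexOn ℝ s (F j)) (hnonneg : ∀ x ∈ s, ∃ j, 0 ≤ F j x) :
    ∃ lam ∈ stdSimplex ℝ ι, ∀ x ∈ s, 0 ≤ ∑ j, lam j * F j x := by
  let C : Set (ι → ℝ) := {v | ∃ x ∈ s, ∀ j, F j x < v j}
  have add_mem {x} (hx : x ∈ s) {ε : ℝ} (hε : 0 < ε) : (fun j ↦ F j x + ε) ∈ C :=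
    ⟨x, hx, fun _ ↦ lt_add_of_pos_right _ hε⟩
  have hne : C.Nonempty := hs.elim fun _ hx ↦ ⟨_, add_mem hx one_pos⟩
  have hopen : IsOpen C := by
    have hC : C = ⋃ x ∈ s, Set.univ.pi fun j ↦ Set.Ioi (F j x) := by ext; simp [C]
    rw [hC]
    exact isOpen_biUnion fun x _ ↦ isOpen_set_pi Set.finite_univ fun j _ ↦ isOpen_Ioi
  have hupper : IsUpperSet C :=
    fun v w hvw ⟨x, hx, hlt⟩ ↦ ⟨x, hx, fun j ↦ (hlt j).trans_le (hvw j)⟩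
  have hzero : 0 ∉ C := fun ⟨x, hx, hlt⟩ ↦
    let ⟨j, hj⟩ := hnonneg x hx
    (hlt j).not_ge hj
  have hconv : Convex ℝ C := by
    rintro v ⟨x, hx, hxv⟩ w ⟨y, hy, hyw⟩ a b ha hb hab
    have hepi (j : ι) := (hF j).convex_strict_epigraph (x := (x, v j)) ⟨hx, hxv j⟩
      (y := (y, w j)) ⟨hy, hyw j⟩ ha hb hab
    obtain ⟨k, -⟩ := hnonneg x hx
    exact ⟨a • x + b • y, (hepi k).1, fun j ↦ (hepi j).2⟩
  obtain ⟨lam, hlam, hpos⟩ :=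
    exists_mem_stdSimplex_forall_sum_mul_pos hconv hopen hupper hne hzero
  refine ⟨lam, hlam, fun x hx ↦ le_of_forall_pos_le_add fun ε hε ↦ ?_⟩
  have h := hpos _ (add_mem hx hε)
  simp only [mul_add, Finset.sum_add_distrib, ← Finset.sum_mul, hlam.2, one_mul] at h
  exact h.le

end Separation

section Penalty

variable {ι E F : Type*} [AddCommGroup E] [Module ℝ E] [NormedAddCommGroup F] [NormedSpace ℝ F]

lemma exists_abs_le_mul_norm_of_ker_le_ker (Φ : E →ₗ[ℝ] F)
    [FiniteDimensional ℝ (LinearMap.range Φ)] (L : E →ₗ[ℝ] ℝ)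
    (hL : LinearMap.ker Φ ≤ LinearMap.ker L) : ∃ β : ℝ, 0 < β ∧ ∀ x, |L x| ≤ β * ‖Φ x‖ := by
  let q : LinearMap.range Φ →L[ℝ] ℝ := LinearMap.toContinuousLinearMap
    ((LinearMap.ker Φ).liftQ L hL ∘ₗ Φ.quotKerEquivRange.symm)
  have hq (x : E) : q (Φ.rangeRestrict x) = L x := by
    have h : Φ.quotKerEquivRange.symm (Φ.rangeRestrict x) = (LinearMap.ker Φ).mkQ x :=
      Φ.quotKerEquivRange_symm_apply_image x _
    simp [q, h]
  -- `‖q‖` may vanish.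
  refine ⟨‖q‖ + 1, by positivity, fun x ↦ ?_⟩
  calc |L x| = ‖q (Φ.rangeRestrict x)‖ := by rw [hq, Real.norm_eq_abs]
    _ ≤ ‖q‖ * ‖Φ x‖ := q.le_opNorm _
    _ ≤ (‖q‖ + 1) * ‖Φ x‖ := by gcongr; exact le_add_of_nonneg_right zero_le_one

lemma exists_abs_le_add_mul_norm_of_le_on_ker (Φ : E →ₗ[ℝ] F)
    [FiniteDimensional ℝ (LinearMap.range Φ)] (L : E →ₗ[ℝ] ℝ) (p : Seminorm ℝ E)
    (hL : ∀ x ∈ LinearMap.ker Φ, L x ≤ p x) :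
    ∃ β : ℝ, 0 < β ∧ ∀ x, |L x| ≤ p x + β * ‖Φ x‖ := by
  obtain ⟨g, g_eq, g_le⟩ := exists_extension_of_le_sublinear
    ⟨LinearMap.ker Φ, L.domRestrict (LinearMap.ker Φ)⟩ p
    (fun c hc x ↦ by rw [map_smul_eq_mul, Real.norm_of_nonneg hc.le]) (map_add_le_add p)
    (fun x ↦ hL x x.2)
  have abs_g_le (x : E) : |g x| ≤ p x :=
    abs_le'.mpr ⟨g_le x, by simpa only [map_neg, map_neg_eq_map] using g_le (-x)⟩
  obtain ⟨β, hβ, hbound⟩ := exists_abs_le_mul_norm_of_ker_le_ker Φ (L - g) fun x hx ↦ by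
    rw [LinearMap.mem_ker, LinearMap.sub_apply, sub_eq_zero]
    exact (g_eq ⟨x, hx⟩).symm
  refine ⟨β, hβ, fun x ↦ ?_⟩
  calc |L x| = |g x + (L - g) x| := by rw [LinearMap.sub_apply, add_sub_cancel]
    _ ≤ |g x| + |(L - g) x| := abs_add_le _ _
    _ ≤ p x + β * ‖Φ x‖ := add_le_add (abs_g_le x) (hbound x)

theorem exists_mem_stdSimplex_abs_sum_mul_le [Fintype ι] (Φ : E →ₗ[ℝ] F)
    [FiniteDimensional ℝ (LinearMap.range Φ)] (ℓ : ι → E →ₗ[ℝ] ℝ) (p : ι → Seminorm ℝ E)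
    (hnonneg : ∀ x ∈ LinearMap.ker Φ, ∃ j, 0 ≤ ℓ j x + p j x) :
    ∃ β : ℝ, 0 < β ∧ ∃ lam ∈ stdSimplex ℝ ι,
      ∀ x, |∑ j, lam j * ℓ j x| ≤ ∑ j, lam j * p j x + β * ‖Φ x‖ := by
  have hconvex (j : ι) : ConvexOn ℝ (LinearMap.ker Φ : Set E) fun x ↦ ℓ j x + p j x :=
    ((ℓ j).convexOn (LinearMap.ker Φ).convex).add
      ((p j).convexOn.subset (Set.subset_univ _) (LinearMap.ker Φ).convex)
  obtain ⟨lam, hlam, hsum⟩ :=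
    exists_mem_stdSimplex_forall_sum_mul_nonneg ⟨0, zero_mem _⟩ hconvex hnonneg
  let L : E →ₗ[ℝ] ℝ := ∑ j, lam j • ℓ j
  let P : Seminorm ℝ E := ∑ j, (lam j).toNNReal • p j
  have L_apply (x : E) : L x = ∑ j, lam j * ℓ j x := by simp [L]
  have P_apply (x : E) : P x = ∑ j, lam j * p j x := by
    simp [P, NNReal.smul_def, Real.coe_toNNReal _ (hlam.1 _)]
  have L_le_P : ∀ x ∈ LinearMap.ker Φ, L x ≤ P x := fun x hx ↦ by
    have h := hsum (-x) (neg_mem hx)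
    simp only [map_neg, map_neg_eq_map, mul_add, mul_neg, Finset.sum_add_distrib,
      Finset.sum_neg_distrib, ← L_apply, ← P_apply] at h
    linarith
  obtain ⟨β, hβ, hbound⟩ := exists_abs_le_add_mul_norm_of_le_on_ker Φ L P L_le_P
  exact ⟨β, hβ, lam, hlam, fun x ↦ by simpa only [L_apply, P_apply] using hbound x⟩

end Penalty

section OneSidedDerivative

lemma hasDerivAt_abs_add_mul {a : ℝ} (ha : a ≠ 0) (h : ℝ) :
    HasDerivAt (fun t ↦ |a + t * h|) (h * Real.sign a) 0 := by
  have hline : HasDerivAt (fun t ↦ a + t * h) h 0 := by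
    simpa using ((hasDerivAt_id (0 : ℝ)).mul_const h).const_add a
  rcases ha.lt_or_gt with ha | ha
  · simpa [Real.sign_of_neg ha, Function.comp_def] using
      (hasDerivAt_abs_neg (by simpa using ha)).comp 0 hline
  · simpa [Real.sign_of_pos ha, Function.comp_def] using
      (hasDerivAt_abs_pos (by simpa using ha)).comp 0 hline

lemma hasDerivWithinAt_abs_mul (h : ℝ) :
    HasDerivWithinAt (fun t ↦ |t * h|) |h| (Set.Ioi 0) 0 := by
  have hlin : HasDerivWithinAt (fun t ↦ t * |h|) |h| (Set.Ioi 0) 0 := by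
    simpa using ((hasDerivAt_id (0 : ℝ)).mul_const |h|).hasDerivWithinAt
  refine hlin.congr (fun t ht ↦ ?_) (by simp)
  rw [abs_mul, abs_of_pos ht]

lemma hasDerivWithinAt_sum_abs_add_mul {ι : Type*} [Fintype ι] [DecidableEq ι] {S : Finset ι}
    {y : ι → ℝ} (hS : ∀ i, i ∈ S ↔ y i ≠ 0) (h : ι → ℝ) :
    HasDerivWithinAt (fun t ↦ ∑ i, |y i + t * h i|)
      (∑ i ∈ S, h i * Real.sign (y i) + ∑ i ∈ Sᶜ, |h i|) (Set.Ioi 0) 0 := by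
  simp only [← Finset.sum_add_sum_compl S]
  refine (HasDerivWithinAt.fun_sum fun i hi ↦ ?_).add (HasDerivWithinAt.fun_sum fun i hi ↦ ?_)
  · exact (hasDerivAt_abs_add_mul ((hS i).mp hi) (h i)).hasDerivWithinAt
  · have hyi : y i = 0 := by simpa [hS] using hi
    simpa only [hyi, zero_add] using hasDerivWithinAt_abs_mul (h i)

lemma exists_nonneg_of_hasDerivWithinAt_of_isLocalMinOn_ciSup {κ : Type*} [Finite κ] [Nonempty κ]
    {f : κ → ℝ → ℝ} {f' : κ → ℝ} {a : ℝ}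
    (hf : ∀ j, HasDerivWithinAt (f j) (f' j) (Set.Ioi a) a)
    (hmin : IsLocalMinOn (fun t ↦ ⨆ j, f j t) (Set.Ioi a) a) : ∃ j, 0 ≤ f' j := by
  by_contra! hneg
  have hslope : ∀ᶠ t in nhdsWithin a (Set.Ioi a), ∀ j, slope (f j) a t < 0 :=
    Filter.eventually_all.mpr fun j ↦ (hf j).limsup_slope_le' Set.self_notMem_Ioi (hneg j)
  obtain ⟨t, ⟨ht, hle⟩, hat⟩ := ((hslope.and hmin).and self_mem_nhdsWithin).exists
  obtain ⟨j, hj⟩ := exists_eq_ciSup_of_finite (f := fun j ↦ f j t)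
  have hdecr : f j t < f j a := (slope_neg_iff_of_le (le_of_lt hat)).mp (ht j)
  refine hdecr.not_ge ?_
  calc f j a ≤ ⨆ j, f j a := Finite.le_ciSup (fun j ↦ f j a) j
    _ ≤ ⨆ j, f j t := hle
    _ = f j t := hj.symm

end OneSidedDerivative

section ColumnNorms

variable {ι κ F : Type*}

/-- The functional `H ↦ ⟨h_{j|S_j}, sgn(x_j)⟩`, the smooth part of the one-sided derivative of the
`j`-th column norm at a matrix with support `S` and the signs of `X`. -/
def signPairing (S : κ → Finset ι) (X : Matrix ι κ ℝ) (j : κ) : Matrix ι κ ℝ →ₗ[ℝ] ℝ :=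
  ∑ i ∈ S j, Real.sign (X i j) • Matrix.entryLinearMap ℝ ℝ i j

/-- The seminorm `H ↦ |h_{j|T_j}|₁`. With `T_j` the complement of the support of the `j`-th column
it is the nonsmooth part of the one-sided derivative of that column's norm. -/
def colSeminormOn (T : κ → Finset ι) (j : κ) : Seminorm ℝ (Matrix ι κ ℝ) :=
  ∑ i ∈ T j, (normSeminorm ℝ ℝ).comp (Matrix.entryLinearMap ℝ ℝ i j)

lemma signPairing_apply (S : κ → Finset ι) (X : Matrix ι κ ℝ) (j : κ) (H : Matrix ι κ ℝ) :
    signPairing S X j H = ∑ i ∈ S j, H i j * Real.sign (X i j) := by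
  simp [signPairing, mul_comm]

lemma colSeminormOn_apply (T : κ → Finset ι) (j : κ) (H : Matrix ι κ ℝ) :
    colSeminormOn T j H = ∑ i ∈ T j, |H i j| := by
  simp [colSeminormOn]

variable [Fintype ι] [DecidableEq ι] [Nonempty κ]

lemma exists_signPairing_add_colSeminormOn_nonneg [Finite κ] {S : κ → Finset ι} {Y : Matrix ι κ ℝ}
    (hS : ∀ j i, i ∈ S j ↔ Y i j ≠ 0) (H : Matrix ι κ ℝ)
    (hmin : IsLocalMinOn (fun t : ℝ ↦ ⨆ j, ∑ i, |Y i j + t * H i j|) (Set.Ioi 0) 0) :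
    ∃ j, 0 ≤ signPairing S Y j H + colSeminormOn (fun j ↦ (S j)ᶜ) j H := by
  simp only [signPairing_apply, colSeminormOn_apply]
  exact exists_nonneg_of_hasDerivWithinAt_of_isLocalMinOn_ciSup
    (fun j ↦ hasDerivWithinAt_sum_abs_add_mul (hS j) fun i ↦ H i j) hmin

theorem noisy_necessary_condition_general [Fintype κ] [NormedAddCommGroup F] [NormedSpace ℝ F]
    (Φ : Matrix ι κ ℝ →ₗ[ℝ] F) (X Y : Matrix ι κ ℝ) (S : κ → Finset ι)
    (hS : ∀ j i, i ∈ S j ↔ Y i j ≠ 0)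
    (hsign : ∀ j, ∀ i ∈ S j, Real.sign (Y i j) = Real.sign (X i j))
    (hmin : ∀ Z, Φ Z = Φ Y → ⨆ j, ∑ i, |Y i j| ≤ ⨆ j, ∑ i, |Z i j|) :
    ∃ β : ℝ, 0 < β ∧ ∃ lam : κ → ℝ, (∀ j, 0 ≤ lam j) ∧ (∑ j, lam j = 1) ∧
      ∀ H : Matrix ι κ ℝ, |∑ j, lam j * ∑ i ∈ S j, H i j * Real.sign (X i j)|
        ≤ (⨆ j, ∑ i ∈ (S j)ᶜ, |H i j|) + β * ‖Φ H‖ := by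
  obtain ⟨β, hβ, lam, hlam, hbound⟩ := exists_mem_stdSimplex_abs_sum_mul_le Φ (signPairing S Y)
    (colSeminormOn fun j ↦ (S j)ᶜ) fun H hH ↦
      exists_signPairing_add_colSeminormOn_nonneg hS H <| .of_forall fun t ↦ by
        simpa using hmin (Y + t • H) (by simp [LinearMap.mem_ker.mp hH])
  refine ⟨β, hβ, lam, hlam.1, hlam.2, fun H ↦ ?_⟩
  calc |∑ j, lam j * ∑ i ∈ S j, H i j * Real.sign (X i j)|
      = |∑ j, lam j * signPairing S Y j H| := by
        simp +contextual only [signPairing_apply, hsign]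
    _ ≤ ∑ j, lam j * colSeminormOn (fun j ↦ (S j)ᶜ) j H + β * ‖Φ H‖ := hbound H
    _ ≤ (⨆ j, ∑ i ∈ (S j)ᶜ, |H i j|) + β * ‖Φ H‖ := by
        simp only [colSeminormOn_apply]
        gcongr
        exact sum_mul_le_ciSup_of_mem_stdSimplex hlam _

lemma mnorm1_sub_restrict {n : ℕ} (S : Fin n → Finset (Fin n)) (H : Matrix (Fin n) (Fin n) ℝ) :
    mnorm1 (H - restrict S H) = ⨆ j, ∑ i ∈ (S j)ᶜ, |H i j| := by
  refine iSup_congr fun j ↦ ?_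
  have on_pattern : ∑ i ∈ S j, |(H - restrict S H) i j| = 0 :=
    Finset.sum_eq_zero fun i hi ↦ by simp [restrict, hi]
  have off_pattern : ∑ i ∈ (S j)ᶜ, |(H - restrict S H) i j| = ∑ i ∈ (S j)ᶜ, |H i j| :=
    Finset.sum_congr rfl fun i hi ↦ by simp [restrict, Finset.mem_compl.mp hi]
  rw [colNorm1, ← Finset.sum_add_sum_compl (S j), on_pattern, off_pattern, zero_add]

lemma vnorm2_eq_norm_toLp {m : ℕ} (y : Fin m → ℝ) : vnorm2 y = ‖WithLp.toLp 2 y‖ := by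
  simp [vnorm2, EuclideanSpace.norm_eq]

end ColumnNorms

/-- non-uniform necessary condition in the noisy case (Remark 3.7). -/
theorem noisy_necessary_condition {n m : ℕ} (hn : 0 < n)
    (Φ : Matrix (Fin n) (Fin n) ℝ →ₗ[ℝ] (Fin m → ℝ))
    (X : Matrix (Fin n) (Fin n) ℝ)
    (S : Fin n → Finset (Fin n))
    (hS : ∀ j i, i ∈ S j ↔ X i j ≠ 0)
    (η : ℝ) (hη : 0 < η) (e : Fin m → ℝ) (he : vnorm2 e ≤ η)
    (Xstar : Matrix (Fin n) (Fin n) ℝ)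
    (hfeas : vnorm2 ((Φ X + e) - Φ Xstar) ≤ η)
    (hmin : ∀ Z : Matrix (Fin n) (Fin n) ℝ, vnorm2 ((Φ X + e) - Φ Z) ≤ η →
        mnorm1 Xstar ≤ mnorm1 Z)
    (hsupp : ∀ i j, Xstar i j ≠ 0 ↔ X i j ≠ 0)
    (hsign : ∀ i j, X i j ≠ 0 → Real.sign (Xstar i j) = Real.sign (X i j)) :
    ∃ β : ℝ, 0 < β ∧ ∃ lam : Fin n → ℝ, (∀ j, 0 ≤ lam j) ∧ (∑ j, lam j = 1) ∧
      ∀ H : Matrix (Fin n) (Fin n) ℝ,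
        |∑ j, lam j * ∑ i ∈ S j, H i j * Real.sign (X i j)|
          ≤ mnorm1 (H - restrict S H) + β * vnorm2 (Φ H) := by
  have : Nonempty (Fin n) := ⟨⟨0, hn⟩⟩
  simpa [mnorm1_sub_restrict, vnorm2_eq_norm_toLp] using noisy_necessary_condition_general
    ((WithLp.linearEquiv 2 ℝ (Fin m → ℝ)).symm.toLinearMap ∘ₗ Φ) X Xstar S
    (fun j i ↦ (hS j i).trans (hsupp i j).symm) (fun j i hi ↦ hsign i j ((hS j i).mp hi))
    fun Z hZ ↦ hmin Z (by rwa [show Φ Z = Φ Xstar from WithLp.toLp_injective 2 hZ])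

end
end

section
/- There is an absolute constant C > 0 such that for every n×n matrix X = (x_1, …, x_n) with each column s-sparse, if r denotes the number of columns j with |x_j|₁ = max_k |x_k|₁, then the conic Gaussian width satisfies w²(D(‖·‖₁, X)) ≤ 1 + n² − r(n − s·log(Cn⁴r²)). In particular, if r = n (X is l₁-column-flat) then w²(D(‖·‖₁, X)) ≤ 1 + n·s·log(Cn⁶). -/
/-!
For a cone `K` and any `Z` in its polar cone, `⟨G, U⟩ ≤ ⟨G - Z, U⟩ ≤ ‖G - Z‖_F` for every unit
vector `U ∈ K`, so `w(K)² ≤ E ‖G - Z‖_F²` by Jensen, even when `Z` depends on `G`; here `w(K) ≥ 0`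
because each `⟨G, U⟩` has mean zero. For the descent cone of `‖·‖₁` at `X`, the polar cone contains
every matrix whose columns of maximal `l₁`-norm lie in `τ ∂|·|₁(x_j)` and whose other columns
vanish. Take for `Z` the matrix of this kind nearest to `G`. The expected squared residual of one
entry is then `1` outside the maximal columns, `1 + τ²` on the support of a maximal column, and at
most `4 τ⁻² exp (-τ² / 2)` off that support, where the residual is the soft-thresholding of a
Gaussian. The choice `τ² = 2 + 2 log n` gives the bound.
-/

open scoped BigOperators
open scoped Classical

noncomputable section

open MeasureTheory ProbabilityTheory

/-- The law of an n×n random matrix with i.i.d. standard Gaussian N(0,1) entries. -/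
def gaussPi (n : ℕ) : Measure (Fin n → Fin n → ℝ) :=
  Measure.pi fun _ => Measure.pi fun _ => gaussianReal 0 1

/-- The descent cone D(‖·‖₁, X). -/
def descCone {n : ℕ} (X : Matrix (Fin n) (Fin n) ℝ) : Set (Matrix (Fin n) (Fin n) ℝ) :=
  {V | ∃ t : ℝ, 0 < t ∧ mnorm1 (X + t • V) ≤ mnorm1 X}

/-- The conic Gaussian width of a cone K of matrices, w.r.t. the Frobenius norm. -/
def gwidth {n : ℕ} (K : Set (Matrix (Fin n) (Fin n) ℝ)) : ℝ :=
  ∫ G, sSup {c : ℝ | ∃ U ∈ K, frob U = 1 ∧ c = minner (Matrix.of G) U} ∂(gaussPi n)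


/-! ### One-dimensional estimates -/

lemma sq_integral_le_integral_sq {Ω : Type*} [MeasurableSpace Ω] {μ : Measure Ω}
    [IsProbabilityMeasure μ] {f : Ω → ℝ} (hf : MemLp f 2 μ) :
    (∫ ω, f ω ∂μ) ^ 2 ≤ ∫ ω, f ω ^ 2 ∂μ := by
  have h := variance_nonneg f μ
  rw [variance_eq_sub hf] at h
  exact sub_nonneg.1 h

lemma integral_sub_const_sq {Ω : Type*} [MeasurableSpace Ω] {μ : Measure Ω}
    [IsProbabilityMeasure μ] {f : Ω → ℝ} (hf : MemLp f 2 μ) (c : ℝ) :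
    ∫ ω, (f ω - c) ^ 2 ∂μ = Var[f; μ] + (∫ ω, f ω ∂μ - c) ^ 2 := by
  have h := variance_eq_sub (hf.sub (memLp_const c))
  have hmean : ∫ ω, (f ω - c) ∂μ = ∫ ω, f ω ∂μ - c := by
    simp [integral_sub (hf.integrable one_le_two) (integrable_const c)]
  rw [show f - (fun _ => c) = fun ω => f ω - c from rfl,
    variance_sub_const hf.aestronglyMeasurable, hmean] at h
  simp only [Pi.pow_apply] at h
  linarith

lemma integral_sub_const_sq_gaussianReal (m : ℝ) (v : NNReal) (c : ℝ) :
    ∫ g, (g - c) ^ 2 ∂gaussianReal m v = v + (m - c) ^ 2 := by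
  simpa using integral_sub_const_sq (memLp_id_gaussianReal (μ := m) (v := v) 2) c

lemma hasSubgaussianMGF_id_gaussianReal (v : NNReal) :
    HasSubgaussianMGF id v (gaussianReal 0 v) where
  integrable_exp_mul := integrable_exp_mul_gaussianReal
  mgf_le t := by simp [mgf_id_gaussianReal]

/-- The projection of `x` onto `[-τ, τ]`, for `0 ≤ τ`. -/
def clamp (τ x : ℝ) : ℝ := max (-τ) (min x τ)

lemma continuous_clamp (τ : ℝ) : Continuous (clamp τ) := by
  unfold clamp
  fun_prop

lemma abs_clamp_le {τ : ℝ} (hτ : 0 ≤ τ) (x : ℝ) : |clamp τ x| ≤ τ :=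
  abs_le.2 ⟨le_max_left _ _, max_le (by linarith) (min_le_right _ _)⟩

lemma abs_sub_clamp {τ : ℝ} (hτ : 0 ≤ τ) (x : ℝ) : |x - clamp τ x| = max 0 (|x| - τ) := by
  unfold clamp
  grind

lemma sq_le_two_div_sq_mul_exp {l y : ℝ} (hl : 0 < l) (hy : 0 ≤ y) :
    y ^ 2 ≤ 2 / l ^ 2 * Real.exp (l * y) := by
  have hly : 0 ≤ l * y := by positivity
  calc y ^ 2 = 2 / l ^ 2 * ((l * y) ^ 2 / 2) := by field_simp
    _ ≤ 2 / l ^ 2 * Real.exp (l * y) := by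
      gcongr
      linarith [Real.quadratic_le_exp_of_nonneg hly]

lemma sq_sub_clamp_le {τ l : ℝ} (hτ : 0 ≤ τ) (hl : 0 < l) (x : ℝ) :
    (x - clamp τ x) ^ 2 ≤
      2 / l ^ 2 * Real.exp (-(l * τ)) * (Real.exp (l * x) + Real.exp (-l * x)) := by
  rw [← sq_abs, abs_sub_clamp hτ]
  rcases le_total |x| τ with hx | hx
  · rw [max_eq_left (sub_nonpos.2 hx), zero_pow two_ne_zero]
    positivity
  · rw [max_eq_right (sub_nonneg.2 hx)]
    calc (|x| - τ) ^ 2 ≤ 2 / l ^ 2 * Real.exp (l * (|x| - τ)) :=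
          sq_le_two_div_sq_mul_exp hl (sub_nonneg.2 hx)
      _ = 2 / l ^ 2 * Real.exp (-(l * τ)) * Real.exp |l * x| := by
          rw [mul_assoc, ← Real.exp_add, abs_mul, abs_of_pos hl]
          ring_nf
      _ ≤ 2 / l ^ 2 * Real.exp (-(l * τ)) * (Real.exp (l * x) + Real.exp (-l * x)) := by
          rw [neg_mul]
          gcongr
          exact Real.exp_abs_le _

lemma integral_sq_sub_clamp_le {Ω : Type*} [MeasurableSpace Ω] {μ : Measure Ω} {X : Ω → ℝ}
    {c : NNReal} (hX : HasSubgaussianMGF X c μ) {τ l : ℝ} (hτ : 0 ≤ τ) (hl : 0 < l) :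
    ∫ ω, (X ω - clamp τ (X ω)) ^ 2 ∂μ ≤ 4 / l ^ 2 * Real.exp (c * l ^ 2 / 2 - l * τ) := by
  have hpos := hX.integrable_exp_mul l
  have hneg := hX.integrable_exp_mul (-l)
  have hmgf : mgf X μ l + mgf X μ (-l) ≤ 2 * Real.exp (c * l ^ 2 / 2) := by
    have h := hX.mgf_le (-l)
    rw [neg_sq] at h
    linarith [hX.mgf_le l]
  calc ∫ ω, (X ω - clamp τ (X ω)) ^ 2 ∂μ
      ≤ ∫ ω, 2 / l ^ 2 * Real.exp (-(l * τ)) *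
          (Real.exp (l * X ω) + Real.exp (-l * X ω)) ∂μ :=
        integral_mono_of_nonneg (.of_forall fun _ => sq_nonneg _) ((hpos.add hneg).const_mul _)
          (.of_forall fun ω => sq_sub_clamp_le hτ hl (X ω))
    _ = 2 / l ^ 2 * Real.exp (-(l * τ)) * (mgf X μ l + mgf X μ (-l)) := by
        rw [integral_const_mul, integral_add hpos hneg, mgf, mgf]
    _ ≤ 2 / l ^ 2 * Real.exp (-(l * τ)) * (2 * Real.exp (c * l ^ 2 / 2)) := by gcongr
    _ = 4 / l ^ 2 * Real.exp (c * l ^ 2 / 2 - l * τ) := by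
        rw [sub_eq_add_neg, Real.exp_add]
        ring

/-- The point of `τ ∂|·|(x)` nearest to `g`, for `0 ≤ τ`. -/
def nearestSubgradient (τ x g : ℝ) : ℝ := if x = 0 then clamp τ g else τ * SignType.sign x

lemma abs_nearestSubgradient_le {τ : ℝ} (hτ : 0 ≤ τ) (x g : ℝ) :
    |nearestSubgradient τ x g| ≤ τ := by
  unfold nearestSubgradient
  split_ifs with hx
  · exact abs_clamp_le hτ g
  · rcases lt_or_gt_of_ne hx with h | h <;> simp [h, abs_of_nonneg hτ]

lemma nearestSubgradient_mul_self (τ x g : ℝ) : nearestSubgradient τ x g * x = τ * |x| := by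
  unfold nearestSubgradient
  split_ifs with hx
  · simp [hx]
  · rw [mul_assoc, sign_mul_self]

lemma nearestSubgradient_zero_left (x g : ℝ) : nearestSubgradient 0 x g = 0 :=
  abs_nonpos_iff.1 (abs_nearestSubgradient_le le_rfl x g)

lemma continuous_nearestSubgradient (τ x : ℝ) : Continuous (nearestSubgradient τ x) := by
  unfold nearestSubgradient
  split_ifs
  · exact continuous_clamp τ
  · exact continuous_const

lemma memLp_sub_nearestSubgradient {τ : ℝ} (hτ : 0 ≤ τ) (x : ℝ) :
    MemLp (fun g => g - nearestSubgradient τ x g) 2 (gaussianReal 0 1) :=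
  (memLp_id_gaussianReal 2).sub <| MemLp.of_bound
    (continuous_nearestSubgradient τ x).aestronglyMeasurable τ
    (.of_forall (abs_nearestSubgradient_le hτ x))

lemma integral_sq_sub_nearestSubgradient_of_ne_zero (τ : ℝ) {x : ℝ} (hx : x ≠ 0) :
    ∫ g, (g - nearestSubgradient τ x g) ^ 2 ∂gaussianReal 0 1 = 1 + τ ^ 2 := by
  have hsign : (SignType.sign x : ℝ) ^ 2 = 1 := by
    rcases lt_or_gt_of_ne hx with h | h <;> simp [h]
  simp [nearestSubgradient, hx, integral_sub_const_sq_gaussianReal, mul_pow, hsign]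

lemma integral_sq_sub_nearestSubgradient_zero_le {τ : ℝ} (hτ : 0 < τ) :
    ∫ g, (g - nearestSubgradient τ 0 g) ^ 2 ∂gaussianReal 0 1 ≤
      4 / τ ^ 2 * Real.exp (-(τ ^ 2 / 2)) := by
  have h := integral_sq_sub_clamp_le (hasSubgaussianMGF_id_gaussianReal 1) hτ.le hτ
  rw [show ((1 : NNReal) : ℝ) * τ ^ 2 / 2 - τ * τ = -(τ ^ 2 / 2) by push_cast; ring] at h
  simpa [nearestSubgradient] using h

/-- The bound on the expected squared distance from a standard Gaussian vector in `ℝᵐ` to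
`τ ∂|·|₁(x)`, for an `s`-sparse `x`. -/
def subdifferentialDistBound (m s : ℕ) (τ : ℝ) : ℝ :=
  s * (1 + τ ^ 2) + m * (4 / τ ^ 2 * Real.exp (-(τ ^ 2 / 2)))

lemma sum_integral_sq_sub_nearestSubgradient_le {ι : Type*} [Fintype ι] {s : ℕ} (x : ι → ℝ)
    (hx : (Finset.univ.filter fun i => x i ≠ 0).card ≤ s) {τ : ℝ} (hτ : 0 < τ) :
    ∑ i, ∫ g, (g - nearestSubgradient τ (x i) g) ^ 2 ∂gaussianReal 0 1 ≤
      subdifferentialDistBound (Fintype.card ι) s τ := by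
  unfold subdifferentialDistBound
  set tail := 4 / τ ^ 2 * Real.exp (-(τ ^ 2 / 2))
  have htail : 0 ≤ tail := by positivity
  calc ∑ i, ∫ g, (g - nearestSubgradient τ (x i) g) ^ 2 ∂gaussianReal 0 1
      ≤ ∑ i, ((if x i ≠ 0 then 1 + τ ^ 2 else 0) + tail) := by
        refine Finset.sum_le_sum fun i _ => ?_
        by_cases hi : x i = 0
        · simpa [hi] using integral_sq_sub_nearestSubgradient_zero_le hτ
        · simpa [hi, integral_sq_sub_nearestSubgradient_of_ne_zero τ hi] using htail
    _ = (Finset.univ.filter fun i => x i ≠ 0).card * (1 + τ ^ 2) + Fintype.card ι * tail := by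
        rw [Finset.sum_add_distrib, ← Finset.sum_filter]
        simp only [Finset.sum_const, nsmul_eq_mul, Finset.card_univ]
    _ ≤ s * (1 + τ ^ 2) + Fintype.card ι * tail := by gcongr

lemma subdifferentialDistBound_sqrt_le {m s : ℕ} (hm : 0 < m) (hs : 0 < s) :
    subdifferentialDistBound m s √(2 + 2 * Real.log m) ≤ s * (5 + 2 * Real.log m) := by
  have hlog : 0 ≤ Real.log m := Real.log_natCast_nonneg m
  have hs1 : (1 : ℝ) ≤ s := by exact_mod_cast hs
  have hexp : Real.exp (-((2 + 2 * Real.log m) / 2)) ≤ (m : ℝ)⁻¹ := by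
    rw [← Real.exp_log (show (0 : ℝ) < (m : ℝ)⁻¹ by positivity), Real.log_inv]
    exact Real.exp_le_exp.2 (by linarith)
  have hdiv : 4 / (2 + 2 * Real.log m) ≤ 2 := by
    rw [div_le_iff₀ (by positivity)]
    linarith
  rw [subdifferentialDistBound, Real.sq_sqrt (by positivity)]
  calc s * (1 + (2 + 2 * Real.log m)) +
        m * (4 / (2 + 2 * Real.log m) * Real.exp (-((2 + 2 * Real.log m) / 2)))
      ≤ s * (1 + (2 + 2 * Real.log m)) + m * (2 * (m : ℝ)⁻¹) := by gcongr
    _ = s * (3 + 2 * Real.log m) + 2 := by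
        field_simp
        ring
    _ ≤ s * (5 + 2 * Real.log m) := by linarith

/-! ### Gaussian matrices -/

section GaussianMatrix

variable {n : ℕ}

instance isProbabilityMeasure_gaussPi : IsProbabilityMeasure (gaussPi n) := by
  unfold gaussPi
  infer_instance

lemma measurePreserving_entry (i j : Fin n) :
    MeasurePreserving (fun G : Fin n → Fin n → ℝ => G i j) (gaussPi n) (gaussianReal 0 1) :=
  (measurePreserving_eval (fun _ : Fin n => gaussianReal 0 1) j).comp
    (measurePreserving_eval
      (fun _ : Fin n => Measure.pi fun _ : Fin n => gaussianReal 0 1) i)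

lemma sq_frob (A : Matrix (Fin n) (Fin n) ℝ) : frob A ^ 2 = ∑ i, ∑ j, A i j ^ 2 :=
  Real.sq_sqrt (by positivity)

lemma minner_le_frob_mul_frob (A B : Matrix (Fin n) (Fin n) ℝ) :
    minner A B ≤ frob A * frob B := by
  simpa only [minner, frob, Fintype.sum_prod_type] using
    Real.sum_mul_le_sqrt_mul_sqrt Finset.univ (fun p : Fin n × Fin n => A p.1 p.2)
      fun p => B p.1 p.2

lemma continuous_minner_left (U : Matrix (Fin n) (Fin n) ℝ) :
    Continuous fun A => minner A U := by
  unfold minner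
  fun_prop

section Entrywise

variable {f : Fin n → Fin n → ℝ → ℝ}

lemma integrable_sq_entry (hf : ∀ i j, MemLp (f i j) 2 (gaussianReal 0 1)) (i j : Fin n) :
    Integrable (fun G : Fin n → Fin n → ℝ => f i j (G i j) ^ 2) (gaussPi n) :=
  ((hf i j).comp_measurePreserving (measurePreserving_entry i j)).integrable_sq

lemma memLp_frob_entrywise (hf : ∀ i j, MemLp (f i j) 2 (gaussianReal 0 1)) :
    MemLp (fun G => frob (Matrix.of fun i j => f i j (G i j))) 2 (gaussPi n) := by
  have hsum : Integrable (fun G : Fin n → Fin n → ℝ => ∑ i, ∑ j, f i j (G i j) ^ 2) (gaussPi n) :=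
    integrable_finsetSum _ fun i _ => integrable_finsetSum _ fun j _ => integrable_sq_entry hf i j
  refine (memLp_two_iff_integrable_sq ?_).2 (by simpa only [sq_frob, Matrix.of_apply] using hsum)
  exact Real.continuous_sqrt.comp_aestronglyMeasurable hsum.aestronglyMeasurable

lemma integral_sq_frob_entrywise (hf : ∀ i j, MemLp (f i j) 2 (gaussianReal 0 1)) :
    ∫ G, frob (Matrix.of fun i j => f i j (G i j)) ^ 2 ∂gaussPi n =
      ∑ i, ∑ j, ∫ g, f i j g ^ 2 ∂gaussianReal 0 1 := by
  simp only [sq_frob, Matrix.of_apply]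
  rw [integral_finsetSum _ fun i _ =>
    integrable_finsetSum _ fun j _ => integrable_sq_entry hf i j]
  refine Finset.sum_congr rfl fun i _ => ?_
  rw [integral_finsetSum _ fun j _ => integrable_sq_entry hf i j]
  exact Finset.sum_congr rfl fun j _ =>
    (measurePreserving_entry i j).hasLaw.integral_comp ((hf i j).aestronglyMeasurable.pow 2)

end Entrywise

lemma memLp_frob : MemLp (fun G => frob (Matrix.of G)) 2 (gaussPi n) :=
  memLp_frob_entrywise (f := fun _ _ => id) fun _ _ => memLp_id_gaussianReal 2

lemma integrable_entry_mul (c : ℝ) (i j : Fin n) :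
    Integrable (fun G : Fin n → Fin n → ℝ => G i j * c) (gaussPi n) :=
  (((memLp_id_gaussianReal 1).comp_measurePreserving
    (measurePreserving_entry i j)).integrable le_rfl).mul_const c

lemma integrable_minner (U : Matrix (Fin n) (Fin n) ℝ) :
    Integrable (fun G => minner (Matrix.of G) U) (gaussPi n) :=
  integrable_finsetSum _ fun i _ => integrable_finsetSum _ fun j _ =>
    integrable_entry_mul (U i j) i j

lemma integral_minner (U : Matrix (Fin n) (Fin n) ℝ) :
    ∫ G, minner (Matrix.of G) U ∂gaussPi n = 0 := by
  have hentry (i j : Fin n) : ∫ G, G i j ∂gaussPi n = 0 :=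
    (measurePreserving_entry i j).hasLaw.integral_eq.trans integral_id_gaussianReal
  simp only [minner, Matrix.of_apply]
  rw [integral_finsetSum _ fun i _ =>
    integrable_finsetSum _ fun j _ => integrable_entry_mul (U i j) i j]
  refine Finset.sum_eq_zero fun i _ => ?_
  rw [integral_finsetSum _ fun j _ => integrable_entry_mul (U i j) i j]
  exact Finset.sum_eq_zero fun j _ => by rw [integral_mul_const, hentry, zero_mul]

/-! ### Gaussian width and the polar cone -/

/-- The supremum of `⟨G, U⟩` over the unit vectors `U` of `K`, whose expectation is `gwidth K`.
It is `0` if `K` has no unit vector. -/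
def sphereSup (K : Set (Matrix (Fin n) (Fin n) ℝ)) (G : Matrix (Fin n) (Fin n) ℝ) : ℝ :=
  sSup {c : ℝ | ∃ U ∈ K, frob U = 1 ∧ c = minner G U}

/-- The polar cone of `K`, with respect to the trace inner product. -/
def polarCone (K : Set (Matrix (Fin n) (Fin n) ℝ)) : Set (Matrix (Fin n) (Fin n) ℝ) :=
  {Z | ∀ U ∈ K, minner Z U ≤ 0}

variable {K : Set (Matrix (Fin n) (Fin n) ℝ)}

lemma minner_le_frob (G : Matrix (Fin n) (Fin n) ℝ) {U : Matrix (Fin n) (Fin n) ℝ}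
    (hU : frob U = 1) : minner G U ≤ frob G := by
  simpa [hU] using minner_le_frob_mul_frob G U

lemma bddAbove_range_minner (G : Matrix (Fin n) (Fin n) ℝ) :
    BddAbove (Set.range fun U : {U // U ∈ K ∧ frob U = 1} => minner G U) := by
  refine ⟨frob G, ?_⟩
  rintro _ ⟨U, rfl⟩
  exact minner_le_frob G U.2.2

lemma sphereSup_eq_iSup (G : Matrix (Fin n) (Fin n) ℝ) :
    sphereSup K G = ⨆ U : {U // U ∈ K ∧ frob U = 1}, minner G U := by
  unfold sphereSup iSup
  congr 1
  ext c
  simp [eq_comm, and_assoc]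

lemma minner_le_sphereSup (G : Matrix (Fin n) (Fin n) ℝ) {U : Matrix (Fin n) (Fin n) ℝ}
    (hUK : U ∈ K) (hU : frob U = 1) : minner G U ≤ sphereSup K G := by
  rw [sphereSup_eq_iSup]
  exact le_ciSup (bddAbove_range_minner G) ⟨U, hUK, hU⟩

lemma sphereSup_le_frob_sub {G Z : Matrix (Fin n) (Fin n) ℝ} (hZ : Z ∈ polarCone K) :
    sphereSup K G ≤ frob (G - Z) := by
  refine Real.sSup_le ?_ (Real.sqrt_nonneg _)
  rintro _ ⟨U, hUK, hU, rfl⟩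
  have hsub : minner (G - Z) U = minner G U - minner Z U := by
    simp [minner, sub_mul]
  linarith [minner_le_frob (G - Z) hU, hZ U hUK]

lemma zero_mem_polarCone : (0 : Matrix (Fin n) (Fin n) ℝ) ∈ polarCone K := fun U _ => by
  simp [minner]

lemma sphereSup_le_frob (G : Matrix (Fin n) (Fin n) ℝ) : sphereSup K G ≤ frob G := by
  simpa using sphereSup_le_frob_sub (G := G) (zero_mem_polarCone (K := K))

lemma sphereSup_eq_zero (hK : ¬ ∃ U ∈ K, frob U = 1) (G : Matrix (Fin n) (Fin n) ℝ) :
    sphereSup K G = 0 := by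
  have hempty : {c : ℝ | ∃ U ∈ K, frob U = 1 ∧ c = minner G U} = ∅ :=
    Set.eq_empty_of_forall_notMem fun _ ⟨U, hUK, hU, _⟩ => hK ⟨U, hUK, hU⟩
  rw [sphereSup, hempty, Real.sSup_empty]

lemma lowerSemicontinuous_sphereSup : LowerSemicontinuous (sphereSup K) := by
  rw [funext sphereSup_eq_iSup]
  exact lowerSemicontinuous_ciSup bddAbove_range_minner
    fun U => (continuous_minner_left U.1).lowerSemicontinuous

lemma integrable_sphereSup : Integrable (fun G => sphereSup K (Matrix.of G)) (gaussPi n) := by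
  by_cases hK : ∃ U ∈ K, frob U = 1
  · obtain ⟨U, hUK, hU⟩ := hK
    have hmeas : Measurable fun G : Fin n → Fin n → ℝ => sphereSup K (Matrix.of G) :=
      LowerSemicontinuous.measurable (δ := Fin n → Fin n → ℝ) lowerSemicontinuous_sphereSup
    exact integrable_of_le_of_le hmeas.aestronglyMeasurable
      (.of_forall fun G => minner_le_sphereSup (Matrix.of G) hUK hU)
      (.of_forall fun G => sphereSup_le_frob (Matrix.of G))
      (integrable_minner U) (memLp_frob.integrable one_le_two)
  · simp [sphereSup_eq_zero hK]

lemma gwidth_nonneg (K : Set (Matrix (Fin n) (Fin n) ℝ)) : 0 ≤ gwidth K := by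
  by_cases hK : ∃ U ∈ K, frob U = 1
  · obtain ⟨U, hUK, hU⟩ := hK
    calc 0 = ∫ G, minner (Matrix.of G) U ∂gaussPi n := (integral_minner U).symm
      _ ≤ ∫ G, sphereSup K (Matrix.of G) ∂gaussPi n :=
        integral_mono (integrable_minner U) integrable_sphereSup
          fun G => minner_le_sphereSup (Matrix.of G) hUK hU
  · exact integral_nonneg fun G => (sphereSup_eq_zero hK (Matrix.of G)).ge

theorem sq_gwidth_le_of_mem_polarCone
    {Z : (Fin n → Fin n → ℝ) → Matrix (Fin n) (Fin n) ℝ} (hZ : ∀ G, Z G ∈ polarCone K)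
    (hmem : MemLp (fun G => frob (Matrix.of G - Z G)) 2 (gaussPi n)) :
    gwidth K ^ 2 ≤ ∫ G, frob (Matrix.of G - Z G) ^ 2 ∂gaussPi n := by
  have hle : gwidth K ≤ ∫ G, frob (Matrix.of G - Z G) ∂gaussPi n :=
    integral_mono integrable_sphereSup (hmem.integrable one_le_two)
      fun G => sphereSup_le_frob_sub (hZ G)
  calc gwidth K ^ 2 ≤ (∫ G, frob (Matrix.of G - Z G) ∂gaussPi n) ^ 2 :=
        pow_le_pow_left₀ (gwidth_nonneg K) hle 2
    _ ≤ ∫ G, frob (Matrix.of G - Z G) ^ 2 ∂gaussPi n := sq_integral_le_integral_sq hmem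

/-! ### The descent cone of `‖·‖₁` -/

lemma colNorm1_le_mnorm1 (X : Matrix (Fin n) (Fin n) ℝ) (j : Fin n) : colNorm1 X j ≤ mnorm1 X :=
  le_ciSup (f := colNorm1 X) (Set.finite_range _).bddAbove j

lemma mem_polarCone_descCone {X Z : Matrix (Fin n) (Fin n) ℝ} {τ : Fin n → ℝ}
    (hτ : ∀ j, colNorm1 X j ≠ mnorm1 X → τ j = 0) (hle : ∀ i j, |Z i j| ≤ τ j)
    (heq : ∀ i j, Z i j * X i j = τ j * |X i j|) : Z ∈ polarCone (descCone X) := by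
  rintro V ⟨t, ht, hV⟩
  have hentry (i j : Fin n) :
      t * (Z i j * V i j) ≤ τ j * (|(X + t • V) i j| - |X i j|) := by
    have hY : Z i j * (X + t • V) i j ≤ τ j * |(X + t • V) i j| :=
      (le_abs_self _).trans <| by rw [abs_mul]; gcongr; exact hle i j
    have hexpand : Z i j * (X + t • V) i j = Z i j * X i j + t * (Z i j * V i j) := by
      simp only [Matrix.add_apply, Matrix.smul_apply, smul_eq_mul]
      ring
    linarith [heq i j]
  have hcol (j : Fin n) : τ j * (colNorm1 (X + t • V) j - colNorm1 X j) ≤ 0 := by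
    by_cases hj : colNorm1 X j = mnorm1 X
    · refine mul_nonpos_of_nonneg_of_nonpos ((abs_nonneg _).trans (hle j j)) (sub_nonpos.2 ?_)
      exact ((colNorm1_le_mnorm1 _ j).trans hV).trans hj.ge
    · rw [hτ j hj, zero_mul]
  have hsum : t * minner Z V ≤ 0 := calc
    t * minner Z V = ∑ j, ∑ i, t * (Z i j * V i j) := by
      rw [minner, Finset.sum_comm]
      simp only [Finset.mul_sum]
    _ ≤ ∑ j, ∑ i, τ j * (|(X + t • V) i j| - |X i j|) :=
      Finset.sum_le_sum fun j _ => Finset.sum_le_sum fun i _ => hentry i j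
    _ = ∑ j, τ j * (colNorm1 (X + t • V) j - colNorm1 X j) := by
      simp only [colNorm1, ← Finset.mul_sum, Finset.sum_sub_distrib]
    _ ≤ 0 := Finset.sum_nonpos fun j _ => hcol j
  exact nonpos_of_mul_nonpos_right hsum ht

lemma sq_gwidth_descCone_le_sum {X : Matrix (Fin n) (Fin n) ℝ} {τ : Fin n → ℝ}
    (hτ : ∀ j, colNorm1 X j ≠ mnorm1 X → τ j = 0) (hτ_nonneg : ∀ j, 0 ≤ τ j) :
    gwidth (descCone X) ^ 2 ≤
      ∑ j, ∑ i, ∫ g, (g - nearestSubgradient (τ j) (X i j) g) ^ 2 ∂gaussianReal 0 1 := by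
  let residual (i j : Fin n) (g : ℝ) : ℝ := g - nearestSubgradient (τ j) (X i j) g
  have hmem (i j : Fin n) : MemLp (residual i j) 2 (gaussianReal 0 1) :=
    memLp_sub_nearestSubgradient (hτ_nonneg j) (X i j)
  let Z (G : Fin n → Fin n → ℝ) : Matrix (Fin n) (Fin n) ℝ :=
    Matrix.of fun i j => nearestSubgradient (τ j) (X i j) (G i j)
  have hZ (G : Fin n → Fin n → ℝ) : Z G ∈ polarCone (descCone X) :=
    mem_polarCone_descCone hτ
      (fun i j => abs_nearestSubgradient_le (hτ_nonneg j) (X i j) (G i j))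
      fun i j => nearestSubgradient_mul_self (τ j) (X i j) (G i j)
  have hsub (G : Fin n → Fin n → ℝ) :
      Matrix.of G - Z G = Matrix.of fun i j => residual i j (G i j) := rfl
  have hwidth : gwidth (descCone X) ^ 2 ≤ ∫ G, frob (Matrix.of G - Z G) ^ 2 ∂gaussPi n :=
    sq_gwidth_le_of_mem_polarCone hZ (by simpa only [hsub] using memLp_frob_entrywise hmem)
  simp only [hsub] at hwidth
  rwa [integral_sq_frob_entrywise hmem, Finset.sum_comm] at hwidth

/-- The set of columns of `X` of maximal `l₁`-norm. -/
def maxCols (X : Matrix (Fin n) (Fin n) ℝ) : Finset (Fin n) :=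
  Finset.univ.filter fun j => colNorm1 X j = mnorm1 X

lemma mem_maxCols {X : Matrix (Fin n) (Fin n) ℝ} {j : Fin n} :
    j ∈ maxCols X ↔ colNorm1 X j = mnorm1 X := by
  simp [maxCols]

lemma card_maxCols_pos (hn : 0 < n) (X : Matrix (Fin n) (Fin n) ℝ) : 0 < (maxCols X).card := by
  have : Nonempty (Fin n) := ⟨⟨0, hn⟩⟩
  obtain ⟨j, hj⟩ := exists_eq_ciSup_of_finite (f := colNorm1 X)
  exact Finset.card_pos.2 ⟨j, mem_maxCols.2 hj⟩

theorem sq_gwidth_descCone_le {s : ℕ} {X : Matrix (Fin n) (Fin n) ℝ} (hX : ColSparse s X)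
    {τ : ℝ} (hτ : 0 < τ) :
    gwidth (descCone X) ^ 2 ≤
      (n : ℝ) ^ 2 - (maxCols X).card * (n - subdifferentialDistBound n s τ) := by
  set b := subdifferentialDistBound n s τ with hb
  have hcol (j : Fin n) :
      ∑ i, ∫ g, (g - nearestSubgradient (if j ∈ maxCols X then τ else 0) (X i j) g) ^ 2
        ∂gaussianReal 0 1 ≤ n + if j ∈ maxCols X then b - n else 0 := by
    split_ifs with hj
    · simpa [hb] using sum_integral_sq_sub_nearestSubgradient_le (fun i => X i j) (hX j) hτ
    · have hone : ∫ g, g ^ 2 ∂gaussianReal 0 1 = 1 := by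
        simpa using integral_sub_const_sq_gaussianReal 0 1 0
      simp [nearestSubgradient_zero_left, hone]
  calc gwidth (descCone X) ^ 2
      ≤ ∑ j, ∑ i, ∫ g, (g - nearestSubgradient (if j ∈ maxCols X then τ else 0) (X i j) g) ^ 2
          ∂gaussianReal 0 1 :=
        sq_gwidth_descCone_le_sum (fun j hj => if_neg (mt mem_maxCols.1 hj))
          fun j => by split_ifs <;> positivity
    _ ≤ ∑ j, (n + if j ∈ maxCols X then b - n else 0) := Finset.sum_le_sum fun j _ => hcol j
    _ = (n : ℝ) ^ 2 - (maxCols X).card * (n - b) := by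
        simp only [Finset.sum_add_distrib, Finset.sum_ite_mem, Finset.univ_inter,
          Finset.sum_const, nsmul_eq_mul, Finset.card_univ, Fintype.card_fin]
        ring

end GaussianMatrix

lemma five_add_two_mul_log_le {n r : ℕ} (hn : 0 < n) (hr : 0 < r) :
    5 + 2 * Real.log n ≤ Real.log (Real.exp 5 * n ^ 4 * r ^ 2) := by
  rw [Real.log_mul (by positivity) (by positivity), Real.log_mul (by positivity) (by positivity),
    Real.log_exp, Real.log_pow, Real.log_pow]
  push_cast
  linarith [Real.log_natCast_nonneg n, Real.log_natCast_nonneg r]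

/-- bound on the squared conic Gaussian width of the descent cone of
‖·‖₁ at a column-wise s-sparse matrix (Lemma 5.1). -/
theorem gaussian_width_bound :
    ∃ C : ℝ, 0 < C ∧ ∀ n s : ℕ, 0 < n → 0 < s →
      ∀ X : Matrix (Fin n) (Fin n) ℝ, ColSparse s X →
        ∀ r : ℕ,
          r = ((Finset.univ : Finset (Fin n)).filter fun j => colNorm1 X j = mnorm1 X).card →
          (gwidth (descCone X))^2
              ≤ 1 + (n : ℝ)^2 - r * (n - s * Real.log (C * n^4 * r^2))
            ∧ (r = n →
              (gwidth (descCone X))^2 ≤ 1 + (n : ℝ) * s * Real.log (C * n^6)) := by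
  refine ⟨Real.exp 5, Real.exp_pos 5, fun n s hn hs X hX r hr => ?_⟩
  obtain rfl : r = (maxCols X).card := hr
  have hτ : 0 < √(2 + 2 * Real.log n) :=
    Real.sqrt_pos.2 (by linarith [Real.log_natCast_nonneg n])
  set r := (maxCols X).card
  have hbound : gwidth (descCone X) ^ 2 ≤
      1 + (n : ℝ) ^ 2 - r * (n - s * Real.log (Real.exp 5 * n ^ 4 * r ^ 2)) := calc
    gwidth (descCone X) ^ 2 ≤ (n : ℝ) ^ 2 - r * (n - s * (5 + 2 * Real.log n)) :=
      (sq_gwidth_descCone_le hX hτ).trans (by gcongr; exact subdifferentialDistBound_sqrt_le hn hs)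
    _ ≤ (n : ℝ) ^ 2 - r * (n - s * Real.log (Real.exp 5 * n ^ 4 * r ^ 2)) := by
      gcongr
      exact five_add_two_mul_log_le hn (card_maxCols_pos hn X)
    _ ≤ 1 + (n : ℝ) ^ 2 - r * (n - s * Real.log (Real.exp 5 * n ^ 4 * r ^ 2)) := by linarith
  refine ⟨hbound, fun hrn => ?_⟩
  rw [hrn, show Real.exp 5 * (n : ℝ) ^ 4 * (n : ℝ) ^ 2 = Real.exp 5 * n ^ 6 by ring] at hbound
  linarith

end
end

section
/- There is an absolute constant C > 0 such that the following holds. Let Φ : ℝ^{n×n} → ℝ^m be a random linear operator given by Φ(Z)_k = ⟨Φ_k, Z⟩ with all entries Φ_{kij} i.i.d. standard Gaussian N(0,1). Let X ∈ Σ_s^{n×n} be column-wise s-sparse and l₁-column-flat, y = Φ(X) + e ∈ ℝ^m with |e|₂ ≤ η, and X* a minimizer of inf ‖Z‖₁ subject to |y − Φ(Z)|₂ ≤ η. For any δ > 0 and t > 0, if m ≥ (t + 2η/δ + (n·s·log(Cn⁶))^{1/2})², then P[‖X* − X‖_F ≤ δ] ≥ 1 − exp(−t²/2). -/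
open scoped BigOperators
open scoped Classical

noncomputable section

open MeasureTheory ProbabilityTheory

/-- The law of a random linear measurement operator ℝ^{n×n} → ℝ^m with i.i.d. standard
Gaussian N(0,1) entries Φ_{kij}. -/
def gaussOp (m n : ℕ) : Measure (Fin m → Fin n → Fin n → ℝ) :=
  Measure.pi fun _ => Measure.pi fun _ => Measure.pi fun _ => gaussianReal 0 1

/-!
Let `u = X* - X` and let `S` be the support of `X`. By minimality of `X*` and flatness of `X`, no
column of `X*` has a larger l₁ norm than the corresponding column of `X`, so that, in the entrywise
norms, `‖u_{Sᶜ}‖₁ ≤ ‖u_S‖₁ ≤ √(ns) ‖u‖₂`. As `X` and `X*` are both feasible, `‖Φ u‖ ≤ 2η`. Hence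
an error larger than `δ` produces a unit vector of this cone whose image has norm at most `2η / δ`.

Gordon's escape through a mesh bounds the probability of that event. For independent Gaussian
`Φ`, `g`, `h`, `w`, the probability that `‖Φ u‖ + g ≤ l` for some `u` in the cone is compared with
the same probability for `‖h‖ + ⟨u, w⟩`. Along the rotation of one process into the other, with the
norm smoothed to a 1-Lipschitz `N`, the derivative of `𝔼 ∏_u ψ(·)` has a sign: the second order
operator governing it vanishes on every `ψ`-transformed process and has carré du champ
`(1 - ⟨u, v⟩) (1 - ⟨∇N, ∇N'⟩) ≥ 0` between the processes at `u` and `v`, where `∇N` and `∇N'` are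
taken at the respective arguments. Exponential moments then suffice: `‖h‖` is of order `√m`, and
soft thresholding `w` at level `√(2 log n)` off `S` shows `sup_u -⟨u, w⟩` to be of order
`√(ns log n)`.
-/

/-! ### Gaussian integration by parts -/

section IntegrationByParts

lemma hasDerivAt_gaussianPDFReal_zero_one (x : ℝ) :
    HasDerivAt (gaussianPDFReal 0 1) (-x * gaussianPDFReal 0 1 x) x := by
  have hexponent : HasDerivAt (fun y : ℝ => -(y - 0) ^ 2 / (2 * ((1 : NNReal) : ℝ))) (-x) x := by
    have := (((hasDerivAt_id x).sub_const 0).pow 2).neg.div_const (2 * ((1 : NNReal) : ℝ))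
    refine this.congr_deriv ?_
    simp
    ring
  refine (hexponent.exp.const_mul ((√(2 * Real.pi * ((1 : NNReal) : ℝ)))⁻¹)).congr_deriv ?_
  rw [gaussianPDFReal_def]
  ring

lemma integrable_gaussianReal_zero_one_iff {f : ℝ → ℝ} :
    Integrable f (gaussianReal 0 1) ↔ Integrable (fun x => gaussianPDFReal 0 1 x * f x) := by
  rw [gaussianReal_of_var_ne_zero _ one_ne_zero,
    integrable_withDensity_iff_integrable_smul' (measurable_gaussianPDF _ _)
      (ae_of_all _ fun _ => gaussianPDF_lt_top)]
  simp

lemma integral_mul_eq_integral_deriv_gaussianReal {f f' : ℝ → ℝ}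
    (hf : ∀ x, HasDerivAt f (f' x) x) (hfi : Integrable f (gaussianReal 0 1))
    (hf'i : Integrable f' (gaussianReal 0 1))
    (hxf : Integrable (fun x => x * f x) (gaussianReal 0 1)) :
    ∫ x, x * f x ∂gaussianReal 0 1 = ∫ x, f' x ∂gaussianReal 0 1 := by
  have hparts := integral_mul_deriv_eq_deriv_mul_of_integrable
    (fun x _ => hasDerivAt_gaussianPDFReal_zero_one x) (fun x _ => hf x)
    (integrable_gaussianReal_zero_one_iff.1 hf'i)
    ((integrable_gaussianReal_zero_one_iff.1 hxf).neg.congr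
      (ae_of_all _ fun x => by simp only [Pi.neg_apply, Pi.mul_apply]; ring))
    (integrable_gaussianReal_zero_one_iff.1 hfi)
  rw [integral_gaussianReal_eq_integral_smul one_ne_zero,
    integral_gaussianReal_eq_integral_smul one_ne_zero]
  simp only [smul_eq_mul]
  rw [hparts, ← integral_neg]
  congr 1 with x
  ring

lemma integrable_one_add_norm_pow {E : Type*} [NormedAddCommGroup E] [NormedSpace ℝ E]
    [CompleteSpace E] [SecondCountableTopology E] [MeasurableSpace E] [BorelSpace E]
    (μ : Measure E) [IsGaussian μ] (k : ℕ) : Integrable (fun x => (1 + ‖x‖) ^ k) μ := by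
  have hnorm : MemLp (fun x : E => ‖x‖) k μ := (IsGaussian.memLp_id μ k (by simp)).norm
  have hmem : MemLp (fun x : E => 1 + ‖x‖) k μ := MemLp.add (memLp_const (1 : ℝ)) hnorm
  refine hmem.integrable_norm_pow'.congr (ae_of_all _ fun x => ?_)
  simp only
  rw [Real.norm_of_nonneg (by positivity)]

lemma integrable_of_hasTemperateGrowth {E F : Type*} [NormedAddCommGroup E] [NormedSpace ℝ E]
    [CompleteSpace E] [SecondCountableTopology E] [MeasurableSpace E] [BorelSpace E]
    [NormedAddCommGroup F] [NormedSpace ℝ F] {μ : Measure E} [IsGaussian μ] {f : E → F}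
    (hf : f.HasTemperateGrowth) : Integrable f μ := by
  obtain ⟨k, C, hC⟩ := hf.2 0
  refine ((integrable_one_add_norm_pow μ k).const_mul C).mono'
    hf.1.continuous.aestronglyMeasurable (ae_of_all _ fun x => ?_)
  simpa using hC x

/-- The standard Gaussian measure on `ι → ℝ`; Mathlib's `stdGaussian` lives on an inner product
space instead. -/
def gaussianPi (ι : Type*) [Fintype ι] : Measure (ι → ℝ) := Measure.pi fun _ => gaussianReal 0 1

instance (ι : Type*) [Fintype ι] : IsProbabilityMeasure (gaussianPi ι) :=
  inferInstanceAs (IsProbabilityMeasure (Measure.pi _))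

instance (ι : Type*) [Fintype ι] : IsGaussian (gaussianPi ι) := by
  have hmap : (stdGaussian (EuclideanSpace ℝ ι)).map (EuclideanSpace.equiv ι ℝ)
      = gaussianPi ι := by
    rw [← map_pi_eq_stdGaussian, Measure.map_map (by fun_prop) (by fun_prop)]
    exact Measure.map_id
  rw [← hmap]
  infer_instance

lemma measurePreserving_update {ι : Type*} [Fintype ι] {X : ι → Type*}
    [∀ i, MeasurableSpace (X i)] (μ : ∀ i, Measure (X i)) [∀ i, IsProbabilityMeasure (μ i)]
    (i : ι) :
    MeasurePreserving (fun p : (∀ j, X j) × X i => Function.update p.1 i p.2)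
      ((Measure.pi μ).prod (μ i)) (Measure.pi μ) := by
  have hmeas : Measurable (fun p : (∀ j, X j) × X i => Function.update p.1 i p.2) :=
    measurable_update'
  refine ⟨hmeas, (Measure.pi_eq fun s hs => ?_).symm⟩
  have hpre : (fun p : (∀ j, X j) × X i => Function.update p.1 i p.2) ⁻¹' Set.pi Set.univ s
      = (Set.pi Set.univ (Function.update s i Set.univ)) ×ˢ s i := by
    ext p
    simp only [Set.mem_preimage, Set.mem_univ_pi, Set.mem_prod]
    rw [Function.forall_update_iff p.1 fun j y => y ∈ s j,
      Function.forall_update_iff s fun j t => p.1 j ∈ t, and_comm]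
    simp
  rw [Measure.map_apply hmeas (MeasurableSet.univ_pi hs), hpre, Measure.prod_prod, Measure.pi_pi,
    ← Finset.prod_erase_mul _ _ (Finset.mem_univ i),
    ← Finset.prod_erase_mul Finset.univ (fun j => μ j (s j)) (Finset.mem_univ i)]
  simp only [Function.update_self, measure_univ, mul_one]
  congr 1
  exact Finset.prod_congr rfl fun j hj => by rw [Function.update_of_ne (Finset.ne_of_mem_erase hj)]

lemma update_eq_add_smul_basisFun {ι : Type*} [Finite ι] (x : ι → ℝ) (i : ι) (r : ℝ) :
    Function.update x i r = x + (r - x i) • Pi.basisFun ℝ ι i := by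
  ext j
  by_cases hj : j = i
  · subst hj; simp
  · simp [hj]

lemma integrable_comp_update {ι : Type*} [Fintype ι] {f : (ι → ℝ) → ℝ}
    (hf : Integrable f (gaussianPi ι)) (i : ι) :
    Integrable (fun p : (ι → ℝ) × ℝ => f (Function.update p.1 i p.2))
      ((gaussianPi ι).prod (gaussianReal 0 1)) :=
  (measurePreserving_update (fun _ => gaussianReal 0 1) i).integrable_comp_of_integrable hf

lemma integral_eq_integral_integral_update {ι : Type*} [Fintype ι] {f : (ι → ℝ) → ℝ}
    (hf : Integrable f (gaussianPi ι)) (i : ι) :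
    ∫ x, f x ∂gaussianPi ι
      = ∫ x, ∫ r, f (Function.update x i r) ∂gaussianReal 0 1 ∂gaussianPi ι := by
  have hmp : MeasurePreserving (fun p : (ι → ℝ) × ℝ => Function.update p.1 i p.2)
      ((gaussianPi ι).prod (gaussianReal 0 1)) (gaussianPi ι) := measurePreserving_update _ i
  rw [← integral_prod _ (integrable_comp_update hf i), ← hmp.map_eq,
    integral_map hmp.measurable.aemeasurable (by rw [hmp.map_eq]; exact hf.1), hmp.map_eq]

lemma hasTemperateGrowth_fderiv {E F : Type*} [NormedAddCommGroup E] [NormedSpace ℝ E]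
    [NormedAddCommGroup F] [NormedSpace ℝ F] {f : E → F} (hf : f.HasTemperateGrowth) :
    (fderiv ℝ f).HasTemperateGrowth := by
  refine ⟨hf.1.fderiv_right (by simp), fun n => ?_⟩
  simpa only [norm_iteratedFDeriv_fderiv] using hf.2 (n + 1)

lemma hasTemperateGrowth_clm_apply {D E F : Type*} [NormedAddCommGroup D] [NormedSpace ℝ D]
    [NormedAddCommGroup E] [NormedSpace ℝ E] [NormedAddCommGroup F] [NormedSpace ℝ F]
    {f : D → E →L[ℝ] F} (hf : f.HasTemperateGrowth) (v : E) :
    (fun x => f x v).HasTemperateGrowth :=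
  (ContinuousLinearMap.apply ℝ F v).hasTemperateGrowth.comp hf

lemma integral_coord_mul_eq_integral_fderiv {ι : Type*} [Fintype ι] {f : (ι → ℝ) → ℝ}
    (hf : f.HasTemperateGrowth) (i : ι) :
    ∫ x, x i * f x ∂gaussianPi ι = ∫ x, fderiv ℝ f x (Pi.basisFun ℝ ι i) ∂gaussianPi ι := by
  have hxf : (fun x : ι → ℝ => x i * f x).HasTemperateGrowth :=
    (ContinuousLinearMap.proj (R := ℝ) (φ := fun _ : ι => ℝ) i).hasTemperateGrowth.mul hf
  have hdf := hasTemperateGrowth_clm_apply (hasTemperateGrowth_fderiv hf) (Pi.basisFun ℝ ι i)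
  rw [integral_eq_integral_integral_update (integrable_of_hasTemperateGrowth hxf) i,
    integral_eq_integral_integral_update (integrable_of_hasTemperateGrowth hdf) i]
  congr 1 with x
  have hline : (fun r : ℝ => Function.update x i r).HasTemperateGrowth := by
    simp_rw [update_eq_add_smul_basisFun]
    fun_prop
  simp only [Function.update_self]
  refine integral_mul_eq_integral_deriv_gaussianReal (fun r => ?_)
    (integrable_of_hasTemperateGrowth (hf.comp hline))
    (integrable_of_hasTemperateGrowth (hdf.comp hline))
    (integrable_of_hasTemperateGrowth (Function.HasTemperateGrowth.id.mul (hf.comp hline)))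
  have hderiv : HasDerivAt (Function.update x i) (Pi.basisFun ℝ ι i) r := by
    simpa using hasDerivAt_update x i r
  exact (hf.1.differentiable (by simp) _).hasFDerivAt.comp_hasDerivAt r hderiv

end IntegrationByParts

/-! ### Gaussian interpolation -/

section Interpolation

variable {ι : Type*} [Fintype ι]

lemma integral_coord_mul_comp_mul {f : (ι → ℝ) → ℝ} (hf : f.HasTemperateGrowth) (c : ι → ℝ)
    (i : ι) :
    ∫ x, x i * f (c * x) ∂gaussianPi ι
      = c i * ∫ x, fderiv ℝ f (c * x) (Pi.basisFun ℝ ι i) ∂gaussianPi ι := by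
  let scale : (ι → ℝ) →L[ℝ] (ι → ℝ) := ContinuousLinearMap.mul ℝ (ι → ℝ) c
  have hscale : scale (Pi.basisFun ℝ ι i) = c i • Pi.basisFun ℝ ι i := by
    ext j
    by_cases hj : j = i <;> simp [scale, hj]
  rw [← integral_const_mul]
  refine (integral_coord_mul_eq_integral_fderiv (hf.comp scale.hasTemperateGrowth) i).trans ?_
  congr 1 with x
  rw [fderiv_comp _ (hf.1.differentiable (by simp) _) scale.differentiableAt,
    ContinuousLinearMap.fderiv, ContinuousLinearMap.comp_apply, hscale, map_smul, smul_eq_mul]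
  rfl

lemma clm_apply_eq_sum_basisFun {F : Type*} [AddCommGroup F] [Module ℝ F] [TopologicalSpace F]
    (L : (ι → ℝ) →L[ℝ] F) (x : ι → ℝ) : L x = ∑ i, x i • L (Pi.basisFun ℝ ι i) := by
  conv_lhs => rw [← (Pi.basisFun ℝ ι).sum_repr x]
  simp [map_sum]

lemma integral_fderiv_mul_eq_sum {f : (ι → ℝ) → ℝ} (hf : f.HasTemperateGrowth) (c c' : ι → ℝ) :
    ∫ x, fderiv ℝ f (c * x) (c' * x) ∂gaussianPi ι
      = ∑ i, c i * c' i * ∫ x, fderiv ℝ (fderiv ℝ f) (c * x) (Pi.basisFun ℝ ι i)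
          (Pi.basisFun ℝ ι i) ∂gaussianPi ι := by
  have hscale : (fun x : ι → ℝ => c * x).HasTemperateGrowth :=
    (ContinuousLinearMap.mul ℝ (ι → ℝ) c).hasTemperateGrowth
  have hpartial (i : ι) := hasTemperateGrowth_clm_apply (hasTemperateGrowth_fderiv hf)
    (Pi.basisFun ℝ ι i)
  have hcoord (i : ι) : (fun x : ι → ℝ => x i).HasTemperateGrowth :=
    (ContinuousLinearMap.proj (R := ℝ) (φ := fun _ : ι => ℝ) i).hasTemperateGrowth
  have hsum (x : ι → ℝ) : fderiv ℝ f (c * x) (c' * x)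
      = ∑ i, c' i * (x i * fderiv ℝ f (c * x) (Pi.basisFun ℝ ι i)) := by
    simp only [clm_apply_eq_sum_basisFun (fderiv ℝ f (c * x)) (c' * x), Pi.mul_apply,
      smul_eq_mul, mul_assoc]
  simp_rw [hsum]
  rw [integral_finsetSum Finset.univ fun i _ => (integrable_of_hasTemperateGrowth
    ((hcoord i).mul ((hpartial i).comp hscale)) :
      Integrable (fun x => x i * fderiv ℝ f (c * x) (Pi.basisFun ℝ ι i)) _).const_mul (c' i)]
  refine Finset.sum_congr rfl fun i _ => ?_
  rw [integral_const_mul, integral_coord_mul_comp_mul (hpartial i)]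
  simp_rw [fderiv_clm_apply ((hasTemperateGrowth_fderiv hf).1.differentiable (by simp) _)
    (differentiableAt_const _)]
  simp
  ring

lemma hasDerivAt_integral_comp_mul {f : (ι → ℝ) → ℝ} (hf : f.HasTemperateGrowth)
    {c c' : ℝ → ι → ℝ} (hc : ∀ θ, HasDerivAt c (c' θ) θ) (hc_le : ∀ θ, ‖c θ‖ ≤ 1)
    (hc'_le : ∀ θ, ‖c' θ‖ ≤ 1) (θ : ℝ) :
    HasDerivAt (fun θ => ∫ x, f (c θ * x) ∂gaussianPi ι)
      (∫ x, fderiv ℝ f (c θ * x) (c' θ * x) ∂gaussianPi ι) θ := by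
  obtain ⟨k, C, hC⟩ := (hasTemperateGrowth_fderiv hf).2 0
  simp only [norm_iteratedFDeriv_zero] at hC
  have hC0 : 0 ≤ C := by simpa using (norm_nonneg _).trans (hC 0)
  have hcont : Continuous f := hf.1.continuous
  have hdcont : Continuous (fderiv ℝ f) := hf.1.continuous_fderiv (by simp)
  have hscale (θ : ℝ) : (fun x : ι → ℝ => c θ * x).HasTemperateGrowth :=
    (ContinuousLinearMap.mul ℝ (ι → ℝ) (c θ)).hasTemperateGrowth
  have hnorm {a : ι → ℝ} (ha : ‖a‖ ≤ 1) (x : ι → ℝ) : ‖a * x‖ ≤ ‖x‖ :=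
    (norm_mul_le _ _).trans (mul_le_of_le_one_left (norm_nonneg _) ha)
  refine (hasDerivAt_integral_of_dominated_loc_of_deriv_le (F := fun θ x => f (c θ * x))
    (F' := fun θ x => fderiv ℝ f (c θ * x) (c' θ * x))
    (bound := fun x => C * (1 + ‖x‖) ^ (k + 1)) Filter.univ_mem
    (Filter.Eventually.of_forall fun θ => (by fun_prop))
    (integrable_of_hasTemperateGrowth (hf.comp (hscale θ))) (by fun_prop)
    (ae_of_all _ fun x θ _ => ?_) ((integrable_one_add_norm_pow _ _).const_mul C)
    (ae_of_all _ fun x θ _ => ?_)).2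
  · calc ‖fderiv ℝ f (c θ * x) (c' θ * x)‖
        ≤ ‖fderiv ℝ f (c θ * x)‖ * ‖c' θ * x‖ := ContinuousLinearMap.le_opNorm _ _
      _ ≤ C * (1 + ‖c θ * x‖) ^ k * ‖x‖ :=
          mul_le_mul (hC _) (hnorm (hc'_le θ) x) (norm_nonneg _) (by positivity)
      _ ≤ C * (1 + ‖x‖) ^ k * (1 + ‖x‖) := by
          gcongr
          exacts [hnorm (hc_le θ) x, by linarith]
      _ = C * (1 + ‖x‖) ^ (k + 1) := by ring
  · exact (hf.1.differentiable (by simp) _).hasFDerivAt.comp_hasDerivAt θ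
      ((hc θ).mul_const x)

variable {κ : Type*} [Fintype κ] {E : Type*} [NormedAddCommGroup E] [NormedSpace ℝ E]

/-- The second order operator `∑ i, ε i • ∂²/∂(v i)²` attached to a family of directions `v` with
weights `ε`, which are signs in the application. -/
def weightedLaplacian (ε : ι → ℝ) (v : ι → E) (f : E → ℝ) (x : E) : ℝ :=
  ∑ i, ε i * fderiv ℝ (fderiv ℝ f) x (v i) (v i)

/-- The weight `1` on the first block of coordinates and `-1` on the second one. -/
def blockSign : ι ⊕ κ → ℝ := Sum.elim (fun _ => 1) (fun _ => -1)

/-- The weight `sin θ` on the first block of coordinates and `cos θ` on the second one: the path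
along which a Gaussian vector on the second block is deformed into one on the first. -/
def blockScale (θ : ℝ) : ι ⊕ κ → ℝ := Sum.elim (fun _ => Real.sin θ) (fun _ => Real.cos θ)

lemma hasDerivAt_integral_comp_blockScale {f : (ι ⊕ κ → ℝ) → ℝ} (hf : f.HasTemperateGrowth)
    (θ : ℝ) :
    HasDerivAt (fun θ => ∫ x, f (blockScale θ * x) ∂gaussianPi (ι ⊕ κ))
      (Real.sin θ * Real.cos θ * ∫ x, weightedLaplacian blockSign (Pi.basisFun ℝ (ι ⊕ κ)) f
        (blockScale θ * x) ∂gaussianPi (ι ⊕ κ)) θ := by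
  let c' (θ : ℝ) : ι ⊕ κ → ℝ := Sum.elim (fun _ => Real.cos θ) (fun _ => -Real.sin θ)
  have hc (θ : ℝ) : HasDerivAt blockScale (c' θ) θ := by
    refine hasDerivAt_pi.2 ?_
    rintro (_ | _)
    exacts [Real.hasDerivAt_sin θ, Real.hasDerivAt_cos θ]
  have hc_le (θ : ℝ) : ‖(blockScale θ : ι ⊕ κ → ℝ)‖ ≤ 1 := by
    refine (pi_norm_le_iff_of_nonneg zero_le_one).2 ?_
    rintro (_ | _)
    exacts [Real.abs_sin_le_one θ, Real.abs_cos_le_one θ]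
  have hc'_le (θ : ℝ) : ‖c' θ‖ ≤ 1 := by
    refine (pi_norm_le_iff_of_nonneg zero_le_one).2 ?_
    rintro (_ | _)
    exacts [Real.abs_cos_le_one θ, (norm_neg _).trans_le (Real.abs_sin_le_one θ)]
  have hcoef (i : ι ⊕ κ) : blockScale θ i * c' θ i = Real.sin θ * Real.cos θ * blockSign i := by
    rcases i with i | j <;> simp [blockScale, c', blockSign, mul_comm]
  have hint (i : ι ⊕ κ) : Integrable (fun x => fderiv ℝ (fderiv ℝ f) (blockScale θ * x)
      (Pi.basisFun ℝ _ i) (Pi.basisFun ℝ _ i)) (gaussianPi (ι ⊕ κ)) :=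
    integrable_of_hasTemperateGrowth <| (hasTemperateGrowth_clm_apply (hasTemperateGrowth_clm_apply
      (hasTemperateGrowth_fderiv (hasTemperateGrowth_fderiv hf)) _) _).comp
      (ContinuousLinearMap.mul ℝ (ι ⊕ κ → ℝ) (blockScale θ)).hasTemperateGrowth
  refine (hasDerivAt_integral_comp_mul hf hc hc_le hc'_le θ).congr_deriv ?_
  simp_rw [integral_fderiv_mul_eq_sum hf, weightedLaplacian]
  rw [integral_finsetSum _ fun i _ => (hint i).const_mul _, Finset.mul_sum]
  exact Finset.sum_congr rfl fun i _ => by rw [hcoef, integral_const_mul]; ring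

lemma integral_comp_mul_le_of_weightedLaplacian_nonneg {f : (ι ⊕ κ → ℝ) → ℝ}
    (hf : f.HasTemperateGrowth)
    (hL : ∀ x, 0 ≤ weightedLaplacian blockSign (Pi.basisFun ℝ (ι ⊕ κ)) f x) :
    ∫ x, f (Sum.elim (0 : ι → ℝ) (1 : κ → ℝ) * x) ∂gaussianPi (ι ⊕ κ)
      ≤ ∫ x, f (Sum.elim (1 : ι → ℝ) (0 : κ → ℝ) * x) ∂gaussianPi (ι ⊕ κ) := by
  have hderiv := hasDerivAt_integral_comp_blockScale hf
  have hmono := monotoneOn_of_deriv_nonneg (convex_Icc 0 (Real.pi / 2))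
    (fun θ _ => (hderiv θ).continuousAt.continuousWithinAt)
    (fun θ _ => (hderiv θ).differentiableAt.differentiableWithinAt) fun θ hθ => by
      rw [interior_Icc] at hθ
      have hsin : 0 ≤ Real.sin θ := Real.sin_nonneg_of_nonneg_of_le_pi hθ.1.le
        (by linarith [hθ.2, Real.pi_pos])
      have hcos : 0 ≤ Real.cos θ := Real.cos_nonneg_of_neg_pi_div_two_le_of_le
        (by linarith [hθ.1, Real.pi_pos]) hθ.2.le
      rw [(hderiv θ).deriv]
      exact mul_nonneg (mul_nonneg hsin hcos) (integral_nonneg fun x => hL _)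
  have hpi : (0 : ℝ) ≤ Real.pi / 2 := by positivity
  have hleft : (blockScale 0 : ι ⊕ κ → ℝ) = Sum.elim (0 : ι → ℝ) (1 : κ → ℝ) := by
    ext (i | j) <;> simp [blockScale]
  have hright : (blockScale (Real.pi / 2) : ι ⊕ κ → ℝ) = Sum.elim (1 : ι → ℝ) (0 : κ → ℝ) := by
    ext (i | j) <;> simp [blockScale]
  simpa only [hleft, hright] using hmono (Set.left_mem_Icc.2 hpi) (Set.right_mem_Icc.2 hpi) hpi

end Interpolation

/-! ### Carré du champ -/

section CarreDuChamp

variable {ι E : Type*} [Fintype ι] [NormedAddCommGroup E] [NormedSpace ℝ E]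

/-- The carré du champ of `weightedLaplacian ε v`, half of the defect in its Leibniz rule. -/
def carreDuChamp (ε : ι → ℝ) (v : ι → E) (f g : E → ℝ) (x : E) : ℝ :=
  ∑ i, ε i * (fderiv ℝ f x (v i) * fderiv ℝ g x (v i))

variable {ε : ι → ℝ} {v : ι → E} {f g h : E → ℝ} {x : E}

lemma carreDuChamp_mul_right (hg : DifferentiableAt ℝ g x) (hh : DifferentiableAt ℝ h x) :
    carreDuChamp ε v f (g * h) x
      = g x * carreDuChamp ε v f h x + h x * carreDuChamp ε v f g x := by
  simp only [carreDuChamp, Finset.mul_sum, ← Finset.sum_add_distrib, fderiv_mul hg hh,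
    _root_.add_apply, _root_.smul_apply, smul_eq_mul]
  exact Finset.sum_congr rfl fun i _ => by ring

lemma fderiv_real_comp {ψ : ℝ → ℝ} (hψ : DifferentiableAt ℝ ψ (f x))
    (hf : DifferentiableAt ℝ f x) : fderiv ℝ (ψ ∘ f) x = deriv ψ (f x) • fderiv ℝ f x :=
  (hψ.hasDerivAt.comp_hasFDerivAt x hf.hasFDerivAt).fderiv

lemma carreDuChamp_comp {φ ψ : ℝ → ℝ} (hφ : DifferentiableAt ℝ φ (f x))
    (hψ : DifferentiableAt ℝ ψ (g x)) (hf : DifferentiableAt ℝ f x) (hg : DifferentiableAt ℝ g x) :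
    carreDuChamp ε v (φ ∘ f) (ψ ∘ g) x
      = deriv φ (f x) * deriv ψ (g x) * carreDuChamp ε v f g x := by
  simp only [carreDuChamp, Finset.mul_sum, fderiv_real_comp hφ hf, fderiv_real_comp hψ hg,
    _root_.smul_apply, smul_eq_mul]
  exact Finset.sum_congr rfl fun i _ => by ring

lemma weightedLaplacian_mul (hf : ContDiff ℝ 2 f) (hg : ContDiff ℝ 2 g) :
    weightedLaplacian ε v (f * g) x = f x * weightedLaplacian ε v g x
      + g x * weightedLaplacian ε v f x + 2 * carreDuChamp ε v f g x := by
  have hf1 : Differentiable ℝ f := hf.differentiable (by simp)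
  have hg1 : Differentiable ℝ g := hg.differentiable (by simp)
  have hf2 : Differentiable ℝ (fderiv ℝ f) :=
    (hf.fderiv_right (m := 1) (by norm_num)).differentiable (by simp)
  have hg2 : Differentiable ℝ (fderiv ℝ g) :=
    (hg.fderiv_right (m := 1) (by norm_num)).differentiable (by simp)
  have hfg : fderiv ℝ (f * g) = fun y => f y • fderiv ℝ g y + g y • fderiv ℝ f y :=
    funext fun y => fderiv_mul (hf1 y) (hg1 y)
  have hfg2 (w : E) : fderiv ℝ (fderiv ℝ (f * g)) x w w
      = f x * fderiv ℝ (fderiv ℝ g) x w w + g x * fderiv ℝ (fderiv ℝ f) x w w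
        + 2 * (fderiv ℝ f x w * fderiv ℝ g x w) := by
    rw [hfg, fderiv_fun_add ((hf1 x).fun_smul (hg2 x)) ((hg1 x).fun_smul (hf2 x)),
      fderiv_fun_smul (hf1 x) (hg2 x), fderiv_fun_smul (hg1 x) (hf2 x)]
    simp
    ring
  simp only [weightedLaplacian, carreDuChamp, Finset.mul_sum, ← Finset.sum_add_distrib, hfg2]
  exact Finset.sum_congr rfl fun i _ => by ring

lemma weightedLaplacian_comp {ψ : ℝ → ℝ} (hψ : ContDiff ℝ 2 ψ) (hf : ContDiff ℝ 2 f) :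
    weightedLaplacian ε v (ψ ∘ f) x = deriv (deriv ψ) (f x) * carreDuChamp ε v f f x
      + deriv ψ (f x) * weightedLaplacian ε v f x := by
  have hψ1 : Differentiable ℝ ψ := hψ.differentiable (by simp)
  have hf1 : Differentiable ℝ f := hf.differentiable (by simp)
  have hψ2 : Differentiable ℝ (deriv ψ) := hψ.differentiable_deriv_two
  have hf2 : Differentiable ℝ (fderiv ℝ f) :=
    (hf.fderiv_right (m := 1) (by norm_num)).differentiable (by simp)
  have hψf : fderiv ℝ (ψ ∘ f) = fun y => (deriv ψ ∘ f) y • fderiv ℝ f y :=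
    funext fun y => fderiv_real_comp (hψ1 _) (hf1 y)
  have hψf2 (w : E) : fderiv ℝ (fderiv ℝ (ψ ∘ f)) x w w
      = deriv (deriv ψ) (f x) * (fderiv ℝ f x w * fderiv ℝ f x w)
        + deriv ψ (f x) * fderiv ℝ (fderiv ℝ f) x w w := by
    rw [hψf, fderiv_fun_smul ((hψ2 _).comp x (hf1 x)) (hf2 x), fderiv_real_comp (hψ2 _) (hf1 x)]
    simp
    ring
  simp only [weightedLaplacian, carreDuChamp, Finset.mul_sum, ← Finset.sum_add_distrib, hψf2]
  exact Finset.sum_congr rfl fun i _ => by ring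

section Prod

variable {A : Type*} {F : A → E → ℝ} {s : Finset A}

lemma carreDuChamp_prod_nonneg (hF : ∀ a, ContDiff ℝ 2 (F a)) (hF0 : ∀ a, 0 ≤ F a x)
    (hg : ∀ a ∈ s, 0 ≤ carreDuChamp ε v g (F a) x) :
    0 ≤ carreDuChamp ε v g (∏ a ∈ s, F a) x := by
  induction s using Finset.induction_on with
  | empty => simp [carreDuChamp, Finset.prod_empty, Pi.one_def]
  | insert a s has ih =>
    have hprod : ContDiff ℝ 2 (∏ a ∈ s, F a) := by
      simpa only [Finset.prod_fn] using contDiff_prod fun a _ => hF a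
    rw [Finset.prod_insert has, carreDuChamp_mul_right ((hF a).differentiable (by simp) x)
      (hprod.differentiable (by simp) x), Finset.prod_apply]
    have hs := ih fun b hb => hg b (Finset.mem_insert_of_mem hb)
    have ha := hg a (Finset.mem_insert_self a s)
    exact add_nonneg (mul_nonneg (hF0 a) hs)
      (mul_nonneg (Finset.prod_nonneg fun b _ => hF0 b) ha)

lemma weightedLaplacian_prod_nonneg (hF : ∀ a, ContDiff ℝ 2 (F a)) (hF0 : ∀ a, 0 ≤ F a x)
    (hL : ∀ a, 0 ≤ weightedLaplacian ε v (F a) x)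
    (hΓ : ∀ a b, a ≠ b → 0 ≤ carreDuChamp ε v (F a) (F b) x) :
    0 ≤ weightedLaplacian ε v (∏ a ∈ s, F a) x := by
  induction s using Finset.induction_on with
  | empty => simp [weightedLaplacian, Finset.prod_empty, Pi.one_def]
  | insert a s has ih =>
    have hprod : ContDiff ℝ 2 (∏ a ∈ s, F a) := by
      simpa only [Finset.prod_fn] using contDiff_prod fun a _ => hF a
    have hcross : 0 ≤ carreDuChamp ε v (F a) (∏ b ∈ s, F b) x :=
      carreDuChamp_prod_nonneg hF hF0 fun b hb => hΓ a b fun hab => has (hab ▸ hb)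
    have hs0 : 0 ≤ (∏ b ∈ s, F b) x := by
      rw [Finset.prod_apply]
      exact Finset.prod_nonneg fun b _ => hF0 b
    rw [Finset.prod_insert has, weightedLaplacian_mul (hF a) hprod]
    have := hF0 a
    have := hL a
    positivity

end Prod

end CarreDuChamp

/-! ### Gordon's comparison -/

section Gordon

lemma hasTemperateGrowth_smoothTransition : Real.smoothTransition.HasTemperateGrowth := by
  have hcompact : HasCompactSupport (fderiv ℝ Real.smoothTransition) := by
    refine HasCompactSupport.intro (isCompact_Icc (a := 0) (b := 1)) fun x hx => ?_
    rcases not_and_or.1 hx with hx | hx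
    · have : Real.smoothTransition =ᶠ[nhds x] fun _ => 0 :=
        (eventually_lt_nhds (not_le.1 hx)).mono fun y hy =>
          Real.smoothTransition.zero_of_nonpos hy.le
      rw [this.fderiv_eq, fderiv_const_apply]
    · have : Real.smoothTransition =ᶠ[nhds x] fun _ => 1 :=
        (eventually_gt_nhds (not_le.1 hx)).mono fun y hy =>
          Real.smoothTransition.one_of_one_le hy.le
      rw [this.fderiv_eq, fderiv_const_apply]
  refine .of_fderiv (hcompact.hasTemperateGrowth
    ((Real.smoothTransition.contDiff (n := ⊤)).fderiv_right (by simp)))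
    (Real.smoothTransition.contDiff (n := 1).differentiable (by simp)) (k := 0) (C := 1)
    fun x => ?_
  simpa [abs_of_nonneg (Real.smoothTransition.nonneg x)] using Real.smoothTransition.le_one x

lemma hasTemperateGrowth_prod {A E : Type*} [NormedAddCommGroup E] [NormedSpace ℝ E]
    {F : A → E → ℝ} {s : Finset A} (hF : ∀ a, (F a).HasTemperateGrowth) :
    (∏ a ∈ s, F a).HasTemperateGrowth := by
  induction s using Finset.induction_on with
  | empty => exact .const 1
  | insert a s has ih => rw [Finset.prod_insert has]; exact (hF a).mul ih

variable {α β : Type*}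

/-- Coordinates of a Gaussian matrix and a Gaussian scalar (first block), and of Gaussian vectors in
`α → ℝ` and `β → ℝ` (second block). -/
abbrev GordonIndex (α β : Type*) := ((α × β) ⊕ Unit) ⊕ (α ⊕ β)

variable [Fintype β]

/-- The vector `Φ u + h` of Gordon's comparison. -/
def gordonVector (u : EuclideanSpace ℝ β) : (GordonIndex α β → ℝ) →L[ℝ] EuclideanSpace ℝ α :=
  ((EuclideanSpace.equiv α ℝ).symm : (α → ℝ) →L[ℝ] EuclideanSpace ℝ α) ∘L
    ContinuousLinearMap.pi fun k => (∑ j, u j • .proj (.inl (.inl (k, j)))) + .proj (.inr (.inl k))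

/-- The scalar `g + ⟪u, w⟫` of Gordon's comparison. -/
def gordonScalar (u : EuclideanSpace ℝ β) : (GordonIndex α β → ℝ) →L[ℝ] ℝ :=
  .proj (.inl (.inr ())) + ∑ j, u j • .proj (.inr (.inr j))

lemma gordonVector_apply (u : EuclideanSpace ℝ β) (x : GordonIndex α β → ℝ) (k : α) :
    gordonVector u x k = ∑ j, u j * x (.inl (.inl (k, j))) + x (.inr (.inl k)) := by
  simp [gordonVector]

lemma gordonScalar_apply (u : EuclideanSpace ℝ β) (x : GordonIndex α β → ℝ) :
    gordonScalar u x = x (.inl (.inr ())) + ∑ j, u j * x (.inr (.inr j)) := by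
  simp [gordonScalar]

lemma gordonScalar_basisFun [Finite α] (u : EuclideanSpace ℝ β) (i : GordonIndex α β) :
    gordonScalar u (Pi.basisFun ℝ _ i)
      = Sum.elim (Sum.elim (fun _ => 0) fun _ => 1) (Sum.elim (fun _ => 0) u) i := by
  rcases i with (⟨k', j⟩ | _) | (k' | j) <;> simp [gordonScalar_apply, Pi.single_apply]

/-- The process whose first block part is `N (Φ u) + g` and whose second block part is
`N h + ⟪u, w⟫`, where `N` is a smooth approximation of the Euclidean norm. -/
def gordonProcess (N : EuclideanSpace ℝ α → ℝ) (u : EuclideanSpace ℝ β)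
    (x : GordonIndex α β → ℝ) : ℝ := N (gordonVector u x) + gordonScalar u x

variable {N : EuclideanSpace ℝ α → ℝ} {u v : EuclideanSpace ℝ β} {x : GordonIndex α β → ℝ}

lemma fderiv_gordonProcess [Finite α] (hN : Differentiable ℝ N) (x : GordonIndex α β → ℝ) :
    fderiv ℝ (gordonProcess N u) x
      = fderiv ℝ N (gordonVector u x) ∘L gordonVector u + gordonScalar u := by
  have := Fintype.ofFinite α
  exact (((hN _).hasFDerivAt.comp x (gordonVector u).hasFDerivAt).add
    (gordonScalar u).hasFDerivAt).fderiv

variable [Fintype α]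

lemma gordonVector_basisFun (u : EuclideanSpace ℝ β) (i : GordonIndex α β) :
    gordonVector u (Pi.basisFun ℝ _ i) = Sum.elim
      (Sum.elim (fun kj => u kj.2 • EuclideanSpace.basisFun α ℝ kj.1) fun _ => 0)
      (Sum.elim (fun k => EuclideanSpace.basisFun α ℝ k) fun _ => 0) i := by
  ext k
  rcases i with (⟨k', j⟩ | _) | (k' | j) <;>
    simp [gordonVector_apply, Pi.single_apply, Prod.ext_iff, ite_and]

lemma hasTemperateGrowth_gordonProcess (hN : N.HasTemperateGrowth) :
    (gordonProcess (β := β) N u).HasTemperateGrowth :=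
  (hN.comp (gordonVector u).hasTemperateGrowth).add (gordonScalar u).hasTemperateGrowth

lemma sum_mul_basisFun_le (L L' : EuclideanSpace ℝ α →L[ℝ] ℝ) :
    ∑ k, L (EuclideanSpace.basisFun α ℝ k) * L' (EuclideanSpace.basisFun α ℝ k)
      ≤ ‖L‖ * ‖L'‖ := by
  let riesz := (InnerProductSpace.toDual ℝ (EuclideanSpace ℝ α)).symm
  calc ∑ k, L (EuclideanSpace.basisFun α ℝ k) * L' (EuclideanSpace.basisFun α ℝ k)
      = ∑ k, inner ℝ (riesz L) (EuclideanSpace.basisFun α ℝ k)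
          * inner ℝ (EuclideanSpace.basisFun α ℝ k) (riesz L') := by
        simp_rw [real_inner_comm (riesz L'), riesz, InnerProductSpace.toDual_symm_apply]
    _ = inner ℝ (riesz L) (riesz L') := (EuclideanSpace.basisFun α ℝ).sum_inner_mul_inner _ _
    _ ≤ ‖riesz L‖ * ‖riesz L'‖ := real_inner_le_norm _ _
    _ = ‖L‖ * ‖L'‖ := by simp only [riesz, LinearIsometryEquiv.norm_map]

lemma carreDuChamp_gordonProcess (hN : Differentiable ℝ N) :
    carreDuChamp blockSign (Pi.basisFun ℝ _) (gordonProcess N u) (gordonProcess N v) x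
      = (1 - inner ℝ u v) * (1 - ∑ k, fderiv ℝ N (gordonVector u x) (EuclideanSpace.basisFun α ℝ k)
          * fderiv ℝ N (gordonVector v x) (EuclideanSpace.basisFun α ℝ k)) := by
  have hvector : ∑ j, u j * v j = inner ℝ u v := by simp [PiLp.inner_apply, mul_comm]
  have hmatrix (D D' : α → ℝ) : ∑ k, ∑ j, u j * D k * (v j * D' k)
      = inner ℝ u v * ∑ k, D k * D' k := by
    rw [← hvector, Finset.sum_comm, Finset.sum_mul]
    refine Finset.sum_congr rfl fun j _ => ?_
    rw [Finset.mul_sum]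
    exact Finset.sum_congr rfl fun k _ => by ring
  simp only [carreDuChamp, fderiv_gordonProcess hN, _root_.add_apply,
    ContinuousLinearMap.comp_apply, gordonVector_basisFun, gordonScalar_basisFun, blockSign,
    Fintype.sum_sum_type, Sum.elim_inl, Sum.elim_inr, map_smul, map_zero, smul_eq_mul,
    Fintype.sum_prod_type, add_zero, zero_add, one_mul, neg_mul, Finset.sum_neg_distrib,
    Finset.univ_unique, Finset.sum_singleton, hmatrix, hvector]
  ring

lemma weightedLaplacian_gordonProcess (hN : ContDiff ℝ 2 N) (hu : ‖u‖ = 1) :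
    weightedLaplacian blockSign (Pi.basisFun ℝ _) (gordonProcess N u) x = 0 := by
  have hN2 : Differentiable ℝ (fderiv ℝ N) :=
    (hN.fderiv_right (m := 1) (by norm_num)).differentiable (by simp)
  have hfderiv2 (w : GordonIndex α β → ℝ) : fderiv ℝ (fderiv ℝ (gordonProcess N u)) x w w
      = fderiv ℝ (fderiv ℝ N) (gordonVector u x) (gordonVector u w) (gordonVector u w) := by
    have hcomp : HasFDerivAt (fun y => fderiv ℝ N (gordonVector u y)) _ x :=
      (hN2 (gordonVector u x)).hasFDerivAt.comp x (gordonVector u).hasFDerivAt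
    rw [funext (fderiv_gordonProcess (hN.differentiable (by simp))),
      ((hcomp.clm_comp (hasFDerivAt_const (gordonVector u) x)).add_const _).fderiv]
    simp
  have hnorm : ∑ j, u j * u j = 1 := by
    simp [← sq, ← EuclideanSpace.real_norm_sq_eq, hu]
  have hmatrix (D : α → ℝ) : ∑ k, ∑ j, u j * (u j * D k) = ∑ k, D k := by
    simp only [← mul_assoc, ← Finset.sum_mul, hnorm, one_mul]
  simp only [weightedLaplacian, hfderiv2, gordonVector_basisFun, blockSign,
    Fintype.sum_sum_type, Sum.elim_inl, Sum.elim_inr, map_smul, map_zero, _root_.smul_apply,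
    smul_eq_mul, Fintype.sum_prod_type, one_mul, neg_mul, Finset.sum_neg_distrib,
    Finset.sum_const_zero, hmatrix, add_zero, add_neg_cancel]

variable {A : Type*} {s : Finset A} {U : A → EuclideanSpace ℝ β}

lemma carreDuChamp_gordonProcess_nonneg (hN : Differentiable ℝ N) (hNlip : LipschitzWith 1 N)
    (hu : ‖u‖ = 1) (hv : ‖v‖ = 1) :
    0 ≤ carreDuChamp blockSign (Pi.basisFun ℝ _) (gordonProcess N u) (gordonProcess N v) x := by
  have hfderiv (y : EuclideanSpace ℝ α) : ‖fderiv ℝ N y‖ ≤ 1 := norm_fderiv_le_of_lipschitz ℝ hNlip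
  have hinner : inner ℝ u v ≤ 1 := by simpa [hu, hv] using real_inner_le_norm u v
  rw [carreDuChamp_gordonProcess hN]
  refine mul_nonneg (sub_nonneg.2 hinner) (sub_nonneg.2 ((sum_mul_basisFun_le _ _).trans ?_))
  exact mul_le_one₀ (hfderiv _) (norm_nonneg _) (hfderiv _)

lemma integrable_prod_gordonProcess {ψ : ℝ → ℝ} (hψ : ψ.HasTemperateGrowth)
    (hN : N.HasTemperateGrowth) (c : GordonIndex α β → ℝ) :
    Integrable (fun x => ∏ a ∈ s, ψ (gordonProcess N (U a) (c * x)))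
      (gaussianPi (GordonIndex α β)) := by
  have hF : (∏ a ∈ s, ψ ∘ gordonProcess N (U a)).HasTemperateGrowth :=
    hasTemperateGrowth_prod fun a => hψ.comp (hasTemperateGrowth_gordonProcess hN)
  simpa [Function.comp_def] using integrable_of_hasTemperateGrowth (μ := gaussianPi _)
    (hF.comp (ContinuousLinearMap.mul ℝ _ c).hasTemperateGrowth)

lemma integral_prod_gordonProcess_le {ψ : ℝ → ℝ} (hψ : ψ.HasTemperateGrowth) (hψmono : Monotone ψ)
    (hψ0 : ∀ r, 0 ≤ ψ r) (hN : N.HasTemperateGrowth) (hNlip : LipschitzWith 1 N)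
    (hU : ∀ a, ‖U a‖ = 1) :
    ∫ x, ∏ a ∈ s, ψ (gordonProcess N (U a) (Sum.elim (0 : (α × β) ⊕ Unit → ℝ) 1 * x))
        ∂gaussianPi (GordonIndex α β)
      ≤ ∫ x, ∏ a ∈ s, ψ (gordonProcess N (U a) (Sum.elim (1 : (α × β) ⊕ Unit → ℝ) 0 * x))
        ∂gaussianPi (GordonIndex α β) := by
  let F (a : A) : (GordonIndex α β → ℝ) → ℝ := ψ ∘ gordonProcess N (U a)
  have hM (a : A) : ContDiff ℝ 2 (gordonProcess (α := α) N (U a)) :=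
    (hasTemperateGrowth_gordonProcess hN).1.of_le (by norm_cast)
  have hψ2 : ContDiff ℝ 2 ψ := hψ.1.of_le (by norm_cast)
  have hN2 : ContDiff ℝ 2 N := hN.1.of_le (by norm_cast)
  have hF : (∏ a ∈ s, F a).HasTemperateGrowth :=
    hasTemperateGrowth_prod fun a => hψ.comp (hasTemperateGrowth_gordonProcess hN)
  have hΓ (a b : A) (x : GordonIndex α β → ℝ) :
      0 ≤ carreDuChamp blockSign (Pi.basisFun ℝ _) (F a) (F b) x := by
    rw [carreDuChamp_comp (hψ2.differentiable (by simp) _) (hψ2.differentiable (by simp) _)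
      ((hM a).differentiable (by simp) _) ((hM b).differentiable (by simp) _)]
    exact mul_nonneg (mul_nonneg hψmono.deriv_nonneg hψmono.deriv_nonneg)
      (carreDuChamp_gordonProcess_nonneg (hN2.differentiable (by simp)) hNlip (hU a) (hU b))
  have hL (a : A) (x : GordonIndex α β → ℝ) :
      weightedLaplacian blockSign (Pi.basisFun ℝ _) (F a) x = 0 := by
    rw [weightedLaplacian_comp hψ2 (hM a), weightedLaplacian_gordonProcess hN2 (hU a),
      carreDuChamp_gordonProcess (hN2.differentiable (by simp)), real_inner_self_eq_norm_sq, hU]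
    ring
  simpa [F] using integral_comp_mul_le_of_weightedLaplacian_nonneg hF fun x =>
    weightedLaplacian_prod_nonneg (fun a => hψ2.comp (hM a)) (fun a => hψ0 _)
      (fun a => (hL a x).ge) fun a b _ => hΓ a b x

lemma measure_le_measure_of_integral_le {X Y : Type*} [MeasurableSpace X] [MeasurableSpace Y]
    {μ : Measure X} {ν : Measure Y} [IsProbabilityMeasure μ] [IsProbabilityMeasure ν]
    {F : X → ℝ} {G : Y → ℝ} {S : Set X} {T : Set Y} (hS : MeasurableSet S) (hT : MeasurableSet T)
    (hF : Integrable F μ) (hG : Integrable G ν) (hFS : F ≤ Sᶜ.indicator 1)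
    (hGT : Tᶜ.indicator 1 ≤ G) (hGF : ∫ y, G y ∂ν ≤ ∫ x, F x ∂μ) : μ S ≤ ν T := by
  have hreal : ν.real Tᶜ ≤ μ.real Sᶜ := by
    rw [← integral_indicator_one hT.compl, ← integral_indicator_one hS.compl]
    exact (integral_mono ((integrable_const (1 : ℝ)).indicator hT.compl) hG hGT).trans
      (hGF.trans (integral_mono hF ((integrable_const (1 : ℝ)).indicator hS.compl) hFS))
  rw [probReal_compl_eq_one_sub hS, probReal_compl_eq_one_sub hT] at hreal
  rw [← ENNReal.toReal_le_toReal (measure_ne_top _ _) (measure_ne_top _ _)]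
  exact (sub_le_sub_iff_left 1).1 hreal

/-- A smooth function approximating the Euclidean norm up to an additive error `1`. -/
def smoothNorm (y : EuclideanSpace ℝ α) : ℝ := √(1 + ‖y‖ ^ 2)

lemma hasTemperateGrowth_smoothNorm : (smoothNorm (α := α)).HasTemperateGrowth := by
  have hrpow := Function.hasTemperateGrowth_one_add_norm_sq_rpow (EuclideanSpace ℝ α) (1 / 2)
  simp only [← Real.sqrt_eq_rpow] at hrpow
  exact hrpow

lemma norm_le_smoothNorm (y : EuclideanSpace ℝ α) : ‖y‖ ≤ smoothNorm y :=
  Real.le_sqrt_of_sq_le (by linarith)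

lemma smoothNorm_le (y : EuclideanSpace ℝ α) : smoothNorm y ≤ ‖y‖ + 1 :=
  (Real.sqrt_le_left (by positivity)).2 (by nlinarith [norm_nonneg y])

lemma lipschitzWith_smoothNorm : LipschitzWith 1 (smoothNorm (α := α)) := by
  refine LipschitzWith.of_le_add fun y z => ?_
  have hy : ‖y‖ ≤ ‖z‖ + dist y z := by simpa [dist_eq_norm] using norm_le_norm_add_norm_sub' y z
  have hz : smoothNorm z ^ 2 = 1 + ‖z‖ ^ 2 := Real.sq_sqrt (by positivity)
  have hz0 : 0 ≤ smoothNorm z := Real.sqrt_nonneg _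
  refine (Real.sqrt_le_left (by positivity)).2 ?_
  calc 1 + ‖y‖ ^ 2 ≤ 1 + (‖z‖ + dist y z) ^ 2 := by gcongr
    _ = smoothNorm z ^ 2 + 2 * (‖z‖ * dist y z) + dist y z ^ 2 := by rw [hz]; ring
    _ ≤ smoothNorm z ^ 2 + 2 * (smoothNorm z * dist y z) + dist y z ^ 2 := by
        gcongr
        exact norm_le_smoothNorm z
    _ = (smoothNorm z + dist y z) ^ 2 := by ring

lemma measurableSet_exists_gordonProcess_le (c : GordonIndex α β → ℝ) (l : ℝ) :
    MeasurableSet {x | ∃ a ∈ s, gordonProcess norm (U a) (c * x) ≤ l} := by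
  have hset : {x | ∃ a ∈ s, gordonProcess norm (U a) (c * x) ≤ l}
      = ⋃ a ∈ s, {x | gordonProcess norm (U a) (c * x) ≤ l} := by ext; simp
  rw [hset]
  refine s.measurableSet_biUnion fun a _ => (isClosed_le ?_ continuous_const).measurableSet
  unfold gordonProcess
  fun_prop

/-- The shift by `2` pays for the smoothing of the norm and for the width of the smooth step. -/
lemma measure_exists_gordonProcess_le (hU : ∀ a, ‖U a‖ = 1) (l : ℝ) :
    gaussianPi (GordonIndex α β)
        {x | ∃ a ∈ s, gordonProcess norm (U a) (Sum.elim (1 : (α × β) ⊕ Unit → ℝ) 0 * x) ≤ l}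
      ≤ gaussianPi (GordonIndex α β)
        {x | ∃ a ∈ s, gordonProcess norm (U a) (Sum.elim (0 : (α × β) ⊕ Unit → ℝ) 1 * x)
          ≤ l + 2} := by
  let ψ (r : ℝ) : ℝ := Real.smoothTransition (r - (l + 1))
  have hψ : ψ.HasTemperateGrowth := hasTemperateGrowth_smoothTransition.comp (by fun_prop)
  have hψmono : Monotone ψ := fun a b hab => Real.smoothTransition.monotone (by gcongr)
  have hψ0 (r : ℝ) : 0 ≤ ψ r := Real.smoothTransition.nonneg _
  have hψ1 (r : ℝ) : ψ r ≤ 1 := Real.smoothTransition.le_one _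
  refine measure_le_measure_of_integral_le (measurableSet_exists_gordonProcess_le _ _)
    (measurableSet_exists_gordonProcess_le _ _)
    (integrable_prod_gordonProcess (s := s) (U := U) hψ hasTemperateGrowth_smoothNorm _)
    (integrable_prod_gordonProcess (s := s) (U := U) hψ hasTemperateGrowth_smoothNorm _)
    (Set.le_indicator ?_ ?_) (Set.indicator_le' ?_ ?_)
    (integral_prod_gordonProcess_le hψ hψmono hψ0 hasTemperateGrowth_smoothNorm
      lipschitzWith_smoothNorm hU)
  · exact fun x _ => Finset.prod_le_one (fun a _ => hψ0 _) fun a _ => hψ1 _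
  · intro x hx
    obtain ⟨a, has, ha⟩ := Set.notMem_compl_iff.1 hx
    refine (Finset.prod_eq_zero has (Real.smoothTransition.zero_of_nonpos ?_)).le
    simp only [gordonProcess] at ha ⊢
    linarith [smoothNorm_le (gordonVector (U a) (Sum.elim (1 : (α × β) ⊕ Unit → ℝ) 0 * x))]
  · intro x hx
    refine (Finset.prod_eq_one fun a has => Real.smoothTransition.one_of_one_le ?_).ge
    have ha : l + 2 < gordonProcess norm (U a) (Sum.elim (0 : (α × β) ⊕ Unit → ℝ) 1 * x) :=
      not_le.1 fun h => hx ⟨a, has, h⟩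
    simp only [gordonProcess] at ha ⊢
    linarith [norm_le_smoothNorm (gordonVector (U a) (Sum.elim (0 : (α × β) ⊕ Unit → ℝ) 1 * x))]
  · exact fun x _ => Finset.prod_nonneg fun a _ => hψ0 _

end Gordon

/-! ### Escape through a mesh -/

section Escape

lemma lintegral_exp_neg_le_of_measure_le {X Y : Type*} [MeasurableSpace X] [MeasurableSpace Y]
    {μ : Measure X} {ν : Measure Y} {f : X → ℝ} {g : Y → ℝ} (hf : Measurable f) (hg : Measurable g)
    (hfg : ∀ l, μ {x | f x ≤ l} ≤ ν {y | g y ≤ l}) {c : ℝ} (hc : 0 < c) :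
    ∫⁻ x, ENNReal.ofReal (Real.exp (-(c * f x))) ∂μ
      ≤ ∫⁻ y, ENNReal.ofReal (Real.exp (-(c * g y))) ∂ν := by
  have hlevel {s : ℝ} (hs : 0 < s) (r : ℝ) : s ≤ Real.exp (-(c * r)) ↔ r ≤ -Real.log s / c := by
    rw [← Real.log_le_iff_le_exp hs, le_div_iff₀ hc, mul_comm r, le_neg]
  rw [lintegral_eq_lintegral_meas_le _ (ae_of_all _ fun x => (Real.exp_pos _).le) (by fun_prop),
    lintegral_eq_lintegral_meas_le _ (ae_of_all _ fun y => (Real.exp_pos _).le) (by fun_prop)]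
  refine setLIntegral_mono' measurableSet_Ioi fun s hs => ?_
  simpa only [hlevel hs] using hfg (-Real.log s / c)

lemma measurePreserving_sum {ι κ : Type*} [Fintype ι] [Fintype κ] :
    MeasurePreserving (fun x : ι ⊕ κ → ℝ => ((fun i => x (.inl i)), fun j => x (.inr j)))
      (gaussianPi (ι ⊕ κ)) ((gaussianPi ι).prod (gaussianPi κ)) :=
  measurePreserving_sumPiEquivProdPi _

variable {α β : Type*} [Fintype β]

/-- The product `Φ u` of a matrix, given by its family of entries, and a Euclidean vector. -/
def matVec (Φ : α × β → ℝ) (u : EuclideanSpace ℝ β) : EuclideanSpace ℝ α :=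
  WithLp.toLp 2 fun k => ∑ j, u j * Φ (k, j)

lemma continuous_matVec :
    Continuous fun p : (α × β → ℝ) × EuclideanSpace ℝ β => matVec p.1 p.2 := by
  unfold matVec
  fun_prop

variable [Fintype α]

lemma measurePreserving_gordonIndex_left :
    MeasurePreserving (fun x : GordonIndex α β → ℝ =>
        ((fun p => x (.inl (.inl p))), x (.inl (.inr ()))))
      (gaussianPi (GordonIndex α β)) ((gaussianPi (α × β)).prod (gaussianReal 0 1)) :=
  ((MeasurePreserving.id _).prod (measurePreserving_piUnique fun _ : Unit => gaussianReal 0 1)).comp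
    (measurePreserving_sum.comp (measurePreserving_fst.comp measurePreserving_sum))

lemma measurePreserving_gordonIndex_right :
    MeasurePreserving (fun x : GordonIndex α β → ℝ =>
        ((fun k => x (.inr (.inl k))), fun j => x (.inr (.inr j))))
      (gaussianPi (GordonIndex α β)) ((gaussianPi α).prod (gaussianPi β)) :=
  measurePreserving_sum.comp (measurePreserving_snd.comp measurePreserving_sum)

lemma gordonProcess_norm_left (u : EuclideanSpace ℝ β) (x : GordonIndex α β → ℝ) :
    gordonProcess norm u (Sum.elim (1 : (α × β) ⊕ Unit → ℝ) 0 * x)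
      = ‖matVec (fun p => x (.inl (.inl p))) u‖ + x (.inl (.inr ())) := by
  have hvec : gordonVector u (Sum.elim (1 : (α × β) ⊕ Unit → ℝ) 0 * x)
      = matVec (fun p => x (.inl (.inl p))) u := by
    ext k
    simp [gordonVector_apply, matVec]
  simp [gordonProcess, hvec, gordonScalar_apply]

lemma gordonProcess_norm_right (u : EuclideanSpace ℝ β) (x : GordonIndex α β → ℝ) :
    gordonProcess norm u (Sum.elim (0 : (α × β) ⊕ Unit → ℝ) 1 * x)
      = ‖WithLp.toLp 2 fun k => x (.inr (.inl k))‖ + ∑ j, u j * x (.inr (.inr j)) := by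
  have hvec : gordonVector u (Sum.elim (0 : (α × β) ⊕ Unit → ℝ) 1 * x)
      = WithLp.toLp 2 fun k => x (.inr (.inl k)) := by
    ext k
    simp [gordonVector_apply]
  simp [gordonProcess, hvec, gordonScalar_apply]

variable {A : Type*} {s : Finset A} {U : A → EuclideanSpace ℝ β} {c : ℝ}

lemma lintegral_exp_inf'_le (hs : s.Nonempty) (hU : ∀ a, ‖U a‖ = 1) (hc : 0 < c) :
    ∫⁻ p, ENNReal.ofReal (Real.exp (-(c * s.inf' hs fun a => ‖matVec p.1 (U a)‖ + p.2)))
        ∂(gaussianPi (α × β)).prod (gaussianReal 0 1)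
      ≤ ∫⁻ p, ENNReal.ofReal (Real.exp (-(c * s.inf' hs fun a =>
          ‖WithLp.toLp 2 p.1‖ + ∑ j, U a j * p.2 j - 2)))
        ∂(gaussianPi α).prod (gaussianPi β) := by
  have hleft : Measurable fun p : (α × β → ℝ) × ℝ =>
      s.inf' hs fun a => ‖matVec p.1 (U a)‖ + p.2 :=
    (Continuous.finset_inf'_apply hs fun a _ => (continuous_matVec.comp (by fun_prop :
      Continuous fun p : (α × β → ℝ) × ℝ => (p.1, U a))).norm.add continuous_snd).measurable
  have hright : Measurable fun p : (α → ℝ) × (β → ℝ) =>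
      s.inf' hs fun a => ‖WithLp.toLp 2 p.1‖ + ∑ j, U a j * p.2 j - 2 :=
    (Continuous.finset_inf'_apply hs fun a _ => by fun_prop).measurable
  refine lintegral_exp_neg_le_of_measure_le hleft hright (fun l => ?_) hc
  rw [← measurePreserving_gordonIndex_left.measure_preimage
      (measurableSet_le hleft measurable_const).nullMeasurableSet,
    ← measurePreserving_gordonIndex_right.measure_preimage
      (measurableSet_le hright measurable_const).nullMeasurableSet]
  simpa only [gordonProcess_norm_left, gordonProcess_norm_right, Finset.inf'_le_iff,
    Set.preimage_ofPred_eq, sub_le_iff_le_add] using measure_exists_gordonProcess_le hU l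

lemma lintegral_exp_neg_mul_gaussianReal (c : ℝ) :
    ∫⁻ x, ENNReal.ofReal (Real.exp (-(c * x))) ∂gaussianReal 0 1
      = ENNReal.ofReal (Real.exp (c ^ 2 / 2)) := by
  simp only [← neg_mul]
  rw [← ofReal_integral_eq_lintegral_ofReal (integrable_exp_mul_gaussianReal _)
    (ae_of_all _ fun x => (Real.exp_pos _).le)]
  simpa [mgf] using congrArg ENNReal.ofReal (congrFun (mgf_id_gaussianReal (μ := 0) (v := 1)) (-c))

lemma measure_exists_mem_finset_mul_le_lintegral (hs : s.Nonempty) (hc : 0 < c) (r : ℝ) :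
    gaussianPi (α × β) {Φ | ∃ a ∈ s, ‖matVec Φ (U a)‖ ≤ r}
        * ENNReal.ofReal (Real.exp (-(c * r) + c ^ 2 / 2))
      ≤ ∫⁻ p, ENNReal.ofReal (Real.exp (-(c * s.inf' hs fun a => ‖matVec p.1 (U a)‖ + p.2)))
        ∂(gaussianPi (α × β)).prod (gaussianReal 0 1) := by
  let S : Set (α × β → ℝ) := {Φ | ∃ a ∈ s, ‖matVec Φ (U a)‖ ≤ r}
  have hS : MeasurableSet S := by
    have hS' : S = ⋃ a ∈ s, {Φ | ‖matVec Φ (U a)‖ ≤ r} := by ext; simp [S]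
    rw [hS']
    exact s.measurableSet_biUnion fun a _ => (isClosed_le (continuous_matVec.comp
      (by fun_prop : Continuous fun Φ : α × β → ℝ => (Φ, U a))).norm continuous_const).measurableSet
  calc gaussianPi (α × β) S * ENNReal.ofReal (Real.exp (-(c * r) + c ^ 2 / 2))
      = ∫⁻ p, S.indicator (fun _ => ENNReal.ofReal (Real.exp (-(c * r)))) p.1
          * ENNReal.ofReal (Real.exp (-(c * p.2)))
        ∂(gaussianPi (α × β)).prod (gaussianReal 0 1) := by
        rw [lintegral_prod_mul (g := fun g => ENNReal.ofReal (Real.exp (-(c * g))))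
          (measurable_const.indicator hS).aemeasurable (by fun_prop),
          lintegral_indicator_const hS, lintegral_exp_neg_mul_gaussianReal, Real.exp_add,
          ENNReal.ofReal_mul (Real.exp_pos _).le]
        ring
    _ ≤ _ := by
        refine lintegral_mono fun p => ?_
        by_cases hp : p.1 ∈ S
        · obtain ⟨a, has, ha⟩ := id hp
          rw [Set.indicator_of_mem hp, ← ENNReal.ofReal_mul (Real.exp_pos _).le, ← Real.exp_add]
          gcongr
          nlinarith [s.inf'_le (fun a => ‖matVec p.1 (U a)‖ + p.2) has]
        · simp [hp]

lemma lintegral_exp_inf'_le_mul (hs : s.Nonempty) {W : (β → ℝ) → ENNReal} (hW : Measurable W)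
    (hUW : ∀ a w, ENNReal.ofReal (Real.exp (-(c * ∑ j, U a j * w j))) ≤ W w) :
    ∫⁻ p, ENNReal.ofReal (Real.exp (-(c * s.inf' hs fun a =>
          ‖WithLp.toLp 2 p.1‖ + ∑ j, U a j * p.2 j - 2)))
        ∂(gaussianPi α).prod (gaussianPi β)
      ≤ ENNReal.ofReal (Real.exp (2 * c))
        * ((∫⁻ h, ENNReal.ofReal (Real.exp (-(c * ‖WithLp.toLp 2 h‖))) ∂gaussianPi α)
          * ∫⁻ w, W w ∂gaussianPi β) := by
  let H (h : α → ℝ) : ENNReal := ENNReal.ofReal (Real.exp (-(c * ‖WithLp.toLp 2 h‖)))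
  have hH : Measurable H := by fun_prop
  rw [← lintegral_prod_mul (f := H) hH.aemeasurable hW.aemeasurable,
    ← lintegral_const_mul _ (by fun_prop)]
  refine lintegral_mono fun p => ?_
  obtain ⟨a, _, ha⟩ := s.exists_mem_eq_inf' hs fun a =>
    ‖WithLp.toLp 2 p.1‖ + ∑ j, U a j * p.2 j - 2
  have hexp : -(c * (‖WithLp.toLp 2 p.1‖ + ∑ j, U a j * p.2 j - 2))
      = 2 * c + (-(c * ‖WithLp.toLp 2 p.1‖) + -(c * ∑ j, U a j * p.2 j)) := by ring
  dsimp only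
  rw [ha, hexp, Real.exp_add, Real.exp_add, ENNReal.ofReal_mul (Real.exp_pos _).le,
    ENNReal.ofReal_mul (Real.exp_pos _).le]
  gcongr
  exact hUW a p.2

/-- Gordon's escape through a mesh; `W` majorizes the exponential of the Gaussian width of `K`. -/
lemma measure_exists_norm_matVec_lt_mul_le {K : Set (EuclideanSpace ℝ β)}
    (hK : ∀ u ∈ K, ‖u‖ = 1) (hc : 0 < c) (r : ℝ) {W : (β → ℝ) → ENNReal} (hW : Measurable W)
    (hKW : ∀ u ∈ K, ∀ w, ENNReal.ofReal (Real.exp (-(c * ∑ j, u j * w j))) ≤ W w) :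
    gaussianPi (α × β) {Φ | ∃ u ∈ K, ‖matVec Φ u‖ < r}
        * ENNReal.ofReal (Real.exp (-(c * r) + c ^ 2 / 2))
      ≤ ENNReal.ofReal (Real.exp (2 * c))
        * ((∫⁻ h, ENNReal.ofReal (Real.exp (-(c * ‖WithLp.toLp 2 h‖))) ∂gaussianPi α)
          * ∫⁻ w, W w ∂gaussianPi β) := by
  rcases K.eq_empty_or_nonempty with rfl | hne
  · simp
  have := hne.to_subtype
  let U : ℕ → K := TopologicalSpace.denseSeq K
  let S (N : ℕ) : Set (α × β → ℝ) := {Φ | ∃ i ∈ Finset.range (N + 1), ‖matVec Φ (U i)‖ ≤ r}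
  have hmono : Monotone S := fun N N' hN Φ ⟨i, hi, hΦ⟩ =>
    ⟨i, Finset.range_mono (Nat.add_le_add_right hN 1) hi, hΦ⟩
  have hsub : {Φ | ∃ u ∈ K, ‖matVec Φ u‖ < r} ⊆ ⋃ N, S N := by
    rintro Φ ⟨u, hu, hΦ⟩
    have hopen : IsOpen {v : K | ‖matVec Φ v‖ < r} := isOpen_lt (continuous_matVec.comp
      (by fun_prop : Continuous fun v : K => (Φ, (v : EuclideanSpace ℝ β)))).norm continuous_const
    obtain ⟨i, hi⟩ := (TopologicalSpace.denseRange_denseSeq K).exists_mem_open hopen ⟨⟨u, hu⟩, hΦ⟩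
    exact Set.mem_iUnion.2 ⟨i, i, Finset.self_mem_range_succ i, hi.le⟩
  refine (mul_le_mul_left (measure_mono hsub) _).trans ?_
  rw [hmono.measure_iUnion, ENNReal.iSup_mul]
  refine iSup_le fun N => ?_
  have hN : (Finset.range (N + 1)).Nonempty := Finset.nonempty_range_add_one
  exact (measure_exists_mem_finset_mul_le_lintegral hN hc r).trans <|
    (lintegral_exp_inf'_le hN (fun i => hK _ (U i).2) hc).trans <|
      lintegral_exp_inf'_le_mul hN hW fun i w => hKW _ (U i).2 w

end Escape

/-! ### Exponential moments of the norm and of the width -/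

section Moments

lemma lintegral_prod_gaussianPi {ι : Type*} [Fintype ι] {f : ι → ℝ → ENNReal}
    (hf : ∀ i, Measurable (f i)) :
    ∫⁻ x, ∏ i, f i (x i) ∂gaussianPi ι = ∏ i, ∫⁻ r, f i r ∂gaussianReal 0 1 := by
  have hindep : iIndepFun (fun i (x : ι → ℝ) => f i (x i)) (gaussianPi ι) :=
    iIndepFun_pi (μ := fun _ : ι => gaussianReal 0 1) fun i => (hf i).aemeasurable
  rw [lintegral_prod_eq_prod_lintegral_of_indepFun Finset.univ _ hindep
    fun i => (hf i).comp (measurable_pi_apply i)]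
  exact Finset.prod_congr rfl fun i _ =>
    (measurePreserving_eval (fun _ : ι => gaussianReal 0 1) i).lintegral_comp (hf i)

lemma lintegral_gaussianReal (μ : ℝ) {v : NNReal} (hv : v ≠ 0) {f : ℝ → ENNReal}
    (hf : Measurable f) :
    ∫⁻ x, f x ∂gaussianReal μ v = ∫⁻ x, gaussianPDF μ v x * f x := by
  rw [gaussianReal_of_var_ne_zero _ hv,
    lintegral_withDensity_eq_lintegral_mul _ (measurable_gaussianPDF _ _) hf]
  rfl

lemma gaussianPDF_mul_exp_sq (a x : ℝ) :
    gaussianPDF 0 1 x * ENNReal.ofReal (Real.exp (a * x ^ 2))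
      = ENNReal.ofReal ((√(2 * Real.pi))⁻¹ * Real.exp (-((1 - 2 * a) / 2) * x ^ 2)) := by
  rw [gaussianPDF_def, ← ENNReal.ofReal_mul (gaussianPDFReal_nonneg _ _ _), gaussianPDFReal_def]
  simp only [NNReal.coe_one, mul_one, sub_zero]
  rw [mul_assoc, ← Real.exp_add]
  ring_nf

lemma lintegral_gaussianPDF_mul_exp_sq {a : ℝ} (ha : a < 1 / 2) :
    ∫⁻ x, gaussianPDF 0 1 x * ENNReal.ofReal (Real.exp (a * x ^ 2))
      = ENNReal.ofReal (1 / √(1 - 2 * a)) := by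
  have hpos : 0 < (1 - 2 * a) / 2 := by linarith
  have hpi : Real.pi / ((1 - 2 * a) / 2) = 2 * Real.pi / (1 - 2 * a) := by field_simp
  simp only [gaussianPDF_mul_exp_sq]
  rw [← ofReal_integral_eq_lintegral_ofReal ((integrable_exp_neg_mul_sq hpos).const_mul _)
    (ae_of_all _ fun _ => by positivity), integral_const_mul, integral_gaussian, hpi,
    Real.sqrt_div (by positivity)]
  field_simp

lemma lintegral_exp_mul_sq_gaussianReal {a : ℝ} (ha : a < 1 / 2) :
    ∫⁻ x, ENNReal.ofReal (Real.exp (a * x ^ 2)) ∂gaussianReal 0 1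
      = ENNReal.ofReal (1 / √(1 - 2 * a)) := by
  rw [lintegral_gaussianReal _ one_ne_zero (by fun_prop), lintegral_gaussianPDF_mul_exp_sq ha]

lemma lintegral_exp_mul_norm_sq_gaussianPi {ι : Type*} [Fintype ι] {a : ℝ} (ha : a < 1 / 2) :
    ∫⁻ x, ENNReal.ofReal (Real.exp (a * ‖WithLp.toLp 2 x‖ ^ 2)) ∂gaussianPi ι
      = ENNReal.ofReal ((1 / √(1 - 2 * a)) ^ Fintype.card ι) := by
  have hprod (x : ι → ℝ) : ENNReal.ofReal (Real.exp (a * ‖WithLp.toLp 2 x‖ ^ 2))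
      = ∏ i, ENNReal.ofReal (Real.exp (a * x i ^ 2)) := by
    rw [EuclideanSpace.real_norm_sq_eq, Finset.mul_sum, Real.exp_sum,
      ENNReal.ofReal_prod_of_nonneg fun _ _ => (Real.exp_pos _).le]
  simp_rw [hprod]
  rw [lintegral_prod_gaussianPi (f := fun _ r => ENNReal.ofReal (Real.exp (a * r ^ 2)))
    fun _ => by fun_prop]
  simp only [lintegral_exp_mul_sq_gaussianReal ha, Finset.prod_const, Finset.card_univ]
  rw [ENNReal.ofReal_pow (by positivity)]

lemma gaussianPDF_add_le {y κ : ℝ} (hy : 0 ≤ y) (hκ : 0 ≤ κ) :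
    gaussianPDF 0 1 (y + κ) ≤ ENNReal.ofReal (Real.exp (-κ ^ 2 / 2)) * gaussianPDF 0 1 y := by
  simp only [gaussianPDF_def, gaussianPDFReal_def, NNReal.coe_one, mul_one, sub_zero]
  rw [← ENNReal.ofReal_mul (Real.exp_pos _).le, mul_left_comm, ← Real.exp_add]
  gcongr
  nlinarith [mul_nonneg hy hκ]

lemma gaussianPDF_zero_abs (x : ℝ) : gaussianPDF 0 1 |x| = gaussianPDF 0 1 x := by
  simp [gaussianPDF_def, gaussianPDFReal_def]

lemma gaussianPDF_mul_exp_softThreshold_le (a : ℝ) {κ : ℝ} (hκ : 0 ≤ κ) (x : ℝ) :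
    gaussianPDF 0 1 x * ENNReal.ofReal (Real.exp (a * max (|x| - κ) 0 ^ 2))
      ≤ gaussianPDF 0 1 x + ENNReal.ofReal (Real.exp (-κ ^ 2 / 2))
        * (gaussianPDF 0 1 (x - κ) * ENNReal.ofReal (Real.exp (a * (x - κ) ^ 2))
          + gaussianPDF 0 1 (-x - κ) * ENNReal.ofReal (Real.exp (a * (-x - κ) ^ 2))) := by
  rcases le_total (|x| - κ) 0 with h | h
  · simp [max_eq_right h]
  · have hshift := gaussianPDF_add_le h hκ
    rw [sub_add_cancel, gaussianPDF_zero_abs] at hshift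
    rw [max_eq_left h]
    refine ((mul_le_mul_left hshift _).trans ?_).trans le_add_self
    rw [mul_assoc]
    gcongr
    rcases abs_choice x with hx | hx
    · rw [hx]
      exact le_self_add
    · rw [hx]
      exact le_add_self

lemma lintegral_exp_softThreshold_le {a κ : ℝ} (ha : a < 1 / 2) (hκ : 0 ≤ κ) :
    ∫⁻ x, ENNReal.ofReal (Real.exp (a * max (|x| - κ) 0 ^ 2)) ∂gaussianReal 0 1
      ≤ ENNReal.ofReal (1 + 2 * Real.exp (-κ ^ 2 / 2) * (1 / √(1 - 2 * a))) := by
  let q (y : ℝ) : ENNReal := gaussianPDF 0 1 y * ENNReal.ofReal (Real.exp (a * y ^ 2))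
  have hq : Measurable q := by
    have := measurable_gaussianPDF 0 1
    fun_prop
  have hq₁ : Measurable fun x => q (x - κ) := by fun_prop
  have hint₁ : ∫⁻ x, q (x - κ) = ENNReal.ofReal (1 / √(1 - 2 * a)) := by
    rw [lintegral_sub_right_eq_self q κ]
    exact lintegral_gaussianPDF_mul_exp_sq ha
  have hint₂ : ∫⁻ x, q (-x - κ) = ENNReal.ofReal (1 / √(1 - 2 * a)) := by
    rw [← hint₁]
    exact (Measure.measurePreserving_neg volume).lintegral_comp hq₁
  calc _ = ∫⁻ x, gaussianPDF 0 1 x * ENNReal.ofReal (Real.exp (a * max (|x| - κ) 0 ^ 2)) :=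
        lintegral_gaussianReal _ one_ne_zero (by fun_prop)
    _ ≤ ∫⁻ x, gaussianPDF 0 1 x
          + ENNReal.ofReal (Real.exp (-κ ^ 2 / 2)) * (q (x - κ) + q (-x - κ)) :=
        lintegral_mono (gaussianPDF_mul_exp_softThreshold_le a hκ)
    _ = 1 + ENNReal.ofReal (Real.exp (-κ ^ 2 / 2))
          * (ENNReal.ofReal (1 / √(1 - 2 * a)) + ENNReal.ofReal (1 / √(1 - 2 * a))) := by
        rw [lintegral_add_left (measurable_gaussianPDF _ _), lintegral_const_mul _ (by fun_prop),
          lintegral_add_left hq₁, hint₁, hint₂, lintegral_gaussianPDF_eq_one _ one_ne_zero]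
    _ = _ := by
        rw [← ENNReal.ofReal_add (by positivity) (by positivity),
          ← ENNReal.ofReal_mul (by positivity), ← ENNReal.ofReal_one,
          ← ENNReal.ofReal_add zero_le_one (by positivity)]
        ring_nf

lemma exp_neg_mul_le_add {c L r : ℝ} (hc : 0 ≤ c) (hL : 0 < L) (hr : 0 ≤ r) :
    Real.exp (-(c * r)) ≤ Real.exp (-(c * L)) + Real.exp (-(c / L) * r ^ 2) := by
  rcases le_total L r with h | h
  · have : Real.exp (-(c * r)) ≤ Real.exp (-(c * L)) := by gcongr
    linarith [Real.exp_pos (-(c / L) * r ^ 2)]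
  · have hcr : c / L * r ^ 2 ≤ c * r := by
      rw [div_mul_eq_mul_div, div_le_iff₀ hL]
      nlinarith [mul_nonneg (mul_nonneg hc hr) (sub_nonneg.2 h)]
    have : Real.exp (-(c * r)) ≤ Real.exp (-(c / L) * r ^ 2) := by
      gcongr
      linarith
    linarith [Real.exp_pos (-(c * L))]

lemma one_div_sqrt_one_add_pow_le {θ : ℝ} (hθ : 0 ≤ θ) (N : ℕ) :
    (1 / √(1 + 2 * θ)) ^ N ≤ Real.exp (-(N * (θ / (1 + θ)))) := by
  have hpos : 0 < 1 + 2 * θ := by positivity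
  have hlog := Real.le_log_one_add_of_nonneg (x := 2 * θ) (by positivity)
  have hfrac : 2 * (2 * θ) / (2 * θ + 2) = 2 * (θ / (1 + θ)) := by field_simp; ring
  have hsqrt : 1 / √(1 + 2 * θ) = Real.exp (-(Real.log (1 + 2 * θ) / 2)) := by
    rw [Real.exp_neg, ← Real.log_sqrt hpos.le, Real.exp_log (Real.sqrt_pos.2 hpos), one_div]
  rw [hsqrt, ← Real.exp_nat_mul, mul_neg, Real.exp_le_exp, neg_le_neg_iff]
  refine mul_le_mul_of_nonneg_left ?_ N.cast_nonneg
  linarith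

/-- Above the level `M - c / 2` the norm is controlled directly; below it
`lintegral_exp_mul_norm_sq_gaussianPi` applies. -/
lemma lintegral_exp_neg_mul_norm_le {α : Type*} [Fintype α] {M c : ℝ}
    (hM : M ^ 2 = Fintype.card α) (hc : 0 < c) (hcM : c ≤ M) :
    ∫⁻ h, ENNReal.ofReal (Real.exp (-(c * ‖WithLp.toLp 2 h‖))) ∂gaussianPi α
      ≤ ENNReal.ofReal (2 * Real.exp (-(c * M) + c ^ 2 / 2)) := by
  have hL : 0 < M - c / 2 := by linarith
  have hM' : 0 < M + c / 2 := by linarith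
  let θ := c / (M - c / 2)
  have hθ : 0 < θ := div_pos hc hL
  have hθ' : θ / (1 + θ) = c / (M + c / 2) := by
    simp only [θ]
    rw [one_add_div hL.ne', div_div_div_cancel_right₀ hL.ne']
    ring_nf
  have hpow : (1 / √(1 + 2 * θ)) ^ Fintype.card α ≤ Real.exp (-(c * (M - c / 2))) := by
    refine (one_div_sqrt_one_add_pow_le hθ.le _).trans (Real.exp_le_exp.2 (neg_le_neg ?_))
    rw [hθ', ← hM, mul_div_assoc', le_div_iff₀ hM']
    nlinarith [pow_pos hc 3]
  calc _ ≤ ∫⁻ h, (ENNReal.ofReal (Real.exp (-(c * (M - c / 2))))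
          + ENNReal.ofReal (Real.exp (-θ * ‖WithLp.toLp 2 h‖ ^ 2))) ∂gaussianPi α := by
        refine lintegral_mono fun h => ?_
        rw [← ENNReal.ofReal_add (by positivity) (by positivity)]
        exact ENNReal.ofReal_le_ofReal (exp_neg_mul_le_add hc.le hL (norm_nonneg _))
    _ = ENNReal.ofReal (Real.exp (-(c * (M - c / 2))) + (1 / √(1 + 2 * θ)) ^ Fintype.card α) := by
        rw [lintegral_add_left measurable_const, lintegral_const, measure_univ, mul_one,
          lintegral_exp_mul_norm_sq_gaussianPi (by linarith), mul_neg, sub_neg_eq_add,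
          ← ENNReal.ofReal_add (by positivity) (by positivity)]
    _ ≤ ENNReal.ofReal (2 * Real.exp (-(c * (M - c / 2)))) :=
        ENNReal.ofReal_le_ofReal (by linarith)
    _ = _ := by ring_nf

lemma one_div_sqrt_one_sub_le {c R : ℝ} (hc : 0 ≤ c) (hR : 0 < R) :
    1 / √(1 - 2 * (c / (2 * (c + R)))) ≤ 1 + c / (2 * R) := by
  have hinv : 1 - 2 * (c / (2 * (c + R))) = (1 + c / R)⁻¹ := by
    field_simp
    ring
  have hcR : -1 ≤ c / R := neg_one_lt_zero.le.trans (by positivity)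
  rw [hinv, Real.sqrt_inv, one_div, inv_inv]
  refine (Real.sqrt_one_add_le hcR).trans_eq ?_
  field_simp

lemma lintegral_exp_softThreshold_le_exp {β : Type*} [DecidableEq β] (S : Finset β) {R κ c : ℝ}
    (hR : 0 < R) (hκ : 0 ≤ κ) (hc : 0 ≤ c) (i : β) :
    ∫⁻ r, ENNReal.ofReal (Real.exp
        (c / (2 * (c + R)) * max (|r| - if i ∈ S then 0 else κ) 0 ^ 2)) ∂gaussianReal 0 1
      ≤ ENNReal.ofReal (Real.exp ((if i ∈ S then c / (2 * R) else 0)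
        + 2 * Real.exp (-κ ^ 2 / 2) * (1 + c / (2 * R)))) := by
  have ha : c / (2 * (c + R)) < 1 / 2 := by
    rw [div_lt_div_iff₀ (by positivity) two_pos]
    linarith
  have hv := one_div_sqrt_one_sub_le hc hR
  by_cases hi : i ∈ S
  · have hmax (r : ℝ) : max |r| 0 = |r| := max_eq_left (abs_nonneg r)
    simp only [hi, if_true, sub_zero, hmax, sq_abs]
    rw [lintegral_exp_mul_sq_gaussianReal ha]
    refine ENNReal.ofReal_le_ofReal ((hv.trans ?_).trans (Real.add_one_le_exp _))
    have : 0 ≤ 2 * Real.exp (-κ ^ 2 / 2) * (1 + c / (2 * R)) := by positivity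
    linarith
  · simp only [hi, if_false, zero_add]
    refine (lintegral_exp_softThreshold_le ha hκ).trans (ENNReal.ofReal_le_ofReal ?_)
    refine le_trans ?_ (Real.add_one_le_exp _)
    rw [add_comm]
    gcongr

end Moments

/-! ### The cone of error directions -/

section Cone

variable {β : Type*} [Fintype β]

lemma neg_sum_mul_le_sum_abs_mul_add_sqrt {u : EuclideanSpace ℝ β} (hu : ‖u‖ = 1) (τ w : β → ℝ) :
    -∑ i, u i * w i ≤ ∑ i, |u i| * τ i + √(∑ i, max (|w i| - τ i) 0 ^ 2) := by
  have hpointwise (i : β) : -(u i * w i) ≤ |u i| * τ i + |u i| * max (|w i| - τ i) 0 := by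
    have habs : -(u i * w i) ≤ |u i| * |w i| := by
      rw [← abs_mul]
      exact neg_le_abs _
    have hmax := mul_le_mul_of_nonneg_left (le_max_left (|w i| - τ i) 0) (abs_nonneg (u i))
    linarith
  have hcauchy : ∑ i, |u i| * max (|w i| - τ i) 0 ≤ √(∑ i, max (|w i| - τ i) 0 ^ 2) := by
    refine (Real.sum_mul_le_sqrt_mul_sqrt _ _ _).trans_eq ?_
    simp only [sq_abs]
    rw [← EuclideanSpace.real_norm_sq_eq, hu, one_pow, Real.sqrt_one, one_mul]
  rw [← Finset.sum_neg_distrib]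
  refine (Finset.sum_le_sum fun i _ => hpointwise i).trans ?_
  rw [Finset.sum_add_distrib]
  gcongr

lemma sqrt_le_half_add_div {T γ : ℝ} (hT : 0 ≤ T) (hγ : 0 < γ) : √T ≤ γ / 2 + T / (2 * γ) := by
  rw [div_add_div _ _ two_ne_zero (by positivity), le_div_iff₀ (by positivity)]
  nlinarith [sq_nonneg (√T - γ), Real.sq_sqrt hT]

variable [DecidableEq β]

/-- The unit vectors whose `l₁` norm off `S` is at most `R`. This is the relaxation of the
cone `‖u_{Sᶜ}‖₁ ≤ ‖u_S‖₁` of possible error directions for which `R = √|S|`. -/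
def unitCone (S : Finset β) (R : ℝ) : Set (EuclideanSpace ℝ β) :=
  {u | ‖u‖ = 1 ∧ ∑ i ∈ Sᶜ, |u i| ≤ R}

/-- A bound for `exp (-c ⟨u, w⟩)` which is uniform over `u ∈ unitCone S R` and a product over the
coordinates of `w`: those off `S` are soft-thresholded at level `κ`. -/
def widthMajorant (S : Finset β) (R κ c : ℝ) (w : β → ℝ) : ENNReal :=
  ENNReal.ofReal (Real.exp (c * (R * κ + (c + R) / 2))) *
    ∏ i, ENNReal.ofReal
      (Real.exp (c / (2 * (c + R)) * max (|w i| - if i ∈ S then 0 else κ) 0 ^ 2))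

lemma measurable_widthMajorant (S : Finset β) (R κ c : ℝ) : Measurable (widthMajorant S R κ c) :=
  measurable_const.mul (Finset.measurable_prod _ fun i _ => by fun_prop)

lemma exp_neg_mul_le_widthMajorant {S : Finset β} {R κ c : ℝ} (hR : 0 < R) (hκ : 0 ≤ κ)
    (hc : 0 < c) {u : EuclideanSpace ℝ β} (hu : u ∈ unitCone S R) (w : β → ℝ) :
    ENNReal.ofReal (Real.exp (-(c * ∑ i, u i * w i))) ≤ widthMajorant S R κ c w := by
  let τ (i : β) : ℝ := if i ∈ S then 0 else κ
  have hτ : ∑ i, |u i| * τ i ≤ R * κ := by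
    simp only [τ, mul_ite, mul_zero]
    rw [Finset.sum_ite, Finset.sum_const_zero, zero_add, ← Finset.sum_mul, ← Finset.compl_filter,
      Finset.filter_univ_mem]
    exact mul_le_mul_of_nonneg_right hu.2 hκ
  have hwidth := neg_sum_mul_le_sum_abs_mul_add_sqrt hu.1 τ w
  have hsqrt := sqrt_le_half_add_div (T := ∑ i, max (|w i| - τ i) 0 ^ 2)
    (Finset.sum_nonneg fun _ _ => sq_nonneg _) (add_pos hc hR)
  rw [widthMajorant, ← ENNReal.ofReal_prod_of_nonneg fun _ _ => (Real.exp_pos _).le,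
    ← ENNReal.ofReal_mul (Real.exp_pos _).le, ← Real.exp_sum, ← Real.exp_add, ← Finset.mul_sum]
  refine ENNReal.ofReal_le_ofReal (Real.exp_le_exp.2 ?_)
  calc -(c * ∑ i, u i * w i) = c * -∑ i, u i * w i := by ring
    _ ≤ c * (R * κ + ((c + R) / 2 + (∑ i, max (|w i| - τ i) 0 ^ 2) / (2 * (c + R)))) := by
        gcongr
        linarith
    _ = c * (R * κ + (c + R) / 2) + c / (2 * (c + R)) * ∑ i, max (|w i| - τ i) 0 ^ 2 := by ring

lemma lintegral_widthMajorant_le {S : Finset β} {R κ c : ℝ} (hR : 0 < R) (hκ : 0 ≤ κ) (hc : 0 ≤ c)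
    (hS : (S.card : ℝ) ≤ R ^ 2) (hβ : Fintype.card β * Real.exp (-κ ^ 2 / 2) ≤ R ^ 2) :
    ∫⁻ w, widthMajorant S R κ c w ∂gaussianPi β
      ≤ ENNReal.ofReal (Real.exp (c ^ 2 / 2 + c * R * (κ + 2) + 2 * R ^ 2)) := by
  have hon : S.card * (c / (2 * R)) ≤ c * R / 2 := by
    refine (mul_le_mul_of_nonneg_right hS (by positivity)).trans_eq ?_
    field_simp
  have hoff : Fintype.card β * (2 * Real.exp (-κ ^ 2 / 2) * (1 + c / (2 * R)))
      ≤ 2 * R ^ 2 + c * R := by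
    calc _ = 2 * (Fintype.card β * Real.exp (-κ ^ 2 / 2)) * (1 + c / (2 * R)) := by ring
      _ ≤ 2 * R ^ 2 * (1 + c / (2 * R)) := by gcongr
      _ = _ := by field_simp
  unfold widthMajorant
  rw [lintegral_const_mul _ (Finset.measurable_prod _ fun i _ => by fun_prop),
    lintegral_prod_gaussianPi (f := fun i r => ENNReal.ofReal (Real.exp
      (c / (2 * (c + R)) * max (|r| - if i ∈ S then 0 else κ) 0 ^ 2))) fun _ => by fun_prop]
  refine (mul_le_mul_right (Finset.prod_le_prod' fun i _ =>
    lintegral_exp_softThreshold_le_exp S hR hκ hc i) _).trans ?_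
  rw [← ENNReal.ofReal_prod_of_nonneg fun _ _ => (Real.exp_pos _).le, ← Real.exp_sum,
    ← ENNReal.ofReal_mul (Real.exp_pos _).le, ← Real.exp_add, Finset.sum_add_distrib,
    Finset.sum_ite_mem, Finset.univ_inter, Finset.sum_const, Finset.sum_const, nsmul_eq_mul,
    nsmul_eq_mul, Finset.card_univ]
  refine ENNReal.ofReal_le_ofReal (Real.exp_le_exp.2 ?_)
  linarith

/-- The choice `c = t + 3 R` leaves a surplus `c ^ 2 / 2 - t ^ 2 / 2 ≥ 9 R ^ 2 / 2` that absorbs the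
constants `2 R ^ 2 + 1` of the moment bounds. -/
lemma exp_moments_le {R κ t a M : ℝ} (hR : 1 ≤ R) (ht : 0 ≤ t)
    (hM : t + a + R * (κ + 8) ≤ M) {c : ℝ} (hc : c = t + 3 * R) :
    Real.exp (2 * c) * (2 * Real.exp (-(c * M) + c ^ 2 / 2)
        * Real.exp (c ^ 2 / 2 + c * R * (κ + 2) + 2 * R ^ 2))
      ≤ Real.exp (-t ^ 2 / 2) * Real.exp (-(c * (a + 1)) + c ^ 2 / 2) := by
  have hc₀ : 0 ≤ c := by rw [hc]; positivity
  have htwo : (2 : ℝ) ≤ Real.exp 1 := by linarith [Real.add_one_le_exp (1 : ℝ)]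
  have hgap : 0 ≤ c * (M - (a + 1) - 2 - R * (κ + 2) - c) :=
    mul_nonneg hc₀ (by rw [hc]; linarith)
  have hc_sq : c ^ 2 = t ^ 2 + 6 * (t * R) + 9 * R ^ 2 := by rw [hc]; ring
  have htR : 0 ≤ t * R := by positivity
  have hR_sq : 1 ≤ R ^ 2 := one_le_pow₀ hR
  calc _ ≤ Real.exp (2 * c) * (Real.exp 1 * Real.exp (-(c * M) + c ^ 2 / 2)
          * Real.exp (c ^ 2 / 2 + c * R * (κ + 2) + 2 * R ^ 2)) := by gcongr
    _ = Real.exp (2 * c + (1 + (-(c * M) + c ^ 2 / 2)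
          + (c ^ 2 / 2 + c * R * (κ + 2) + 2 * R ^ 2))) := by simp only [Real.exp_add]
    _ ≤ Real.exp (-t ^ 2 / 2 + (-(c * (a + 1)) + c ^ 2 / 2)) := by
        rw [Real.exp_le_exp]
        nlinarith
    _ = _ := Real.exp_add _ _

lemma measure_exists_mem_unitCone_norm_matVec_le {α : Type*} [Fintype α] {S : Finset β}
    {M R κ t a : ℝ} (hα : M ^ 2 = Fintype.card α) (hR : 1 ≤ R) (hκ : 0 ≤ κ) (ht : 0 ≤ t)
    (ha : 0 ≤ a) (hS : (S.card : ℝ) ≤ R ^ 2)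
    (hβ : Fintype.card β * Real.exp (-κ ^ 2 / 2) ≤ R ^ 2) (hM : t + a + R * (κ + 8) ≤ M) :
    gaussianPi (α × β) {Φ | ∃ u ∈ unitCone S R, ‖matVec Φ u‖ ≤ a}
      ≤ ENNReal.ofReal (Real.exp (-t ^ 2 / 2)) := by
  have hR₀ : 0 < R := one_pos.trans_le hR
  have hRκ : 0 ≤ R * κ := by positivity
  let c := t + 3 * R
  have hc : 0 < c := by positivity
  have hcM : c ≤ M := by simp only [c]; linarith
  let Y := Real.exp (-(c * (a + 1)) + c ^ 2 / 2)
  have hY : ENNReal.ofReal Y ≠ 0 := by simp [Y, Real.exp_pos]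
  have hescape := (measure_exists_norm_matVec_lt_mul_le (α := α) (K := unitCone S R)
    (fun u hu => hu.1) hc (a + 1) (measurable_widthMajorant S R κ c)
    fun u hu => exp_neg_mul_le_widthMajorant hR₀ hκ hc hu).trans <|
      mul_le_mul_right (mul_le_mul' (lintegral_exp_neg_mul_norm_le hα hc hcM)
        (lintegral_widthMajorant_le hR₀ hκ hc.le hS hβ)) _
  rw [← ENNReal.ofReal_mul (by positivity), ← ENNReal.ofReal_mul (by positivity)] at hescape
  have hbound := hescape.trans (ENNReal.ofReal_le_ofReal (exp_moments_le hR ht hM rfl))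
  rw [ENNReal.ofReal_mul (Real.exp_pos _).le,
    ENNReal.mul_le_mul_iff_left hY ENNReal.ofReal_ne_top] at hbound
  refine (measure_mono ?_).trans hbound
  rintro Φ ⟨u, hu, hΦ⟩
  exact ⟨u, hu, hΦ.trans_lt (lt_add_one a)⟩

end Cone

/-! ### Reduction of the reconstruction problem to the cone -/

section Reduction

section Recovery

variable {α β : Type*} [Fintype β] {S : Finset β}

lemma matVec_smul (Φ : α × β → ℝ) (a : ℝ) (u : EuclideanSpace ℝ β) :
    matVec Φ (a • u) = a • matVec Φ u := by
  ext k
  simp [matVec, Finset.mul_sum, mul_assoc]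

lemma sum_abs_le_mul_norm {R : ℝ} (hR : 0 ≤ R) (hS : (S.card : ℝ) ≤ R ^ 2)
    (v : EuclideanSpace ℝ β) : ∑ i ∈ S, |v i| ≤ R * ‖v‖ := by
  have hcauchy := sq_sum_le_card_mul_sum_sq (s := S) (f := fun i => |v i|)
  refine le_of_abs_le (abs_le_of_sq_le_sq (hcauchy.trans ?_) (by positivity))
  rw [mul_pow, EuclideanSpace.real_norm_sq_eq]
  simp only [sq_abs]
  gcongr
  exact S.subset_univ

variable [DecidableEq β]

lemma sum_compl_abs_sub_le {x z : β → ℝ} (hx : ∀ i ∉ S, x i = 0)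
    (h : ∑ i, |z i| ≤ ∑ i, |x i|) :
    ∑ i ∈ Sᶜ, |z i - x i| ≤ ∑ i ∈ S, |z i - x i| := by
  have hz : ∑ i ∈ Sᶜ, |z i - x i| = ∑ i ∈ Sᶜ, |z i| :=
    Finset.sum_congr rfl fun i hi => by rw [hx i (Finset.mem_compl.1 hi), sub_zero]
  have hx' : ∑ i ∈ Sᶜ, |x i| = 0 :=
    Finset.sum_eq_zero fun i hi => by rw [hx i (Finset.mem_compl.1 hi), abs_zero]
  have htriangle : ∑ i ∈ S, |x i| ≤ ∑ i ∈ S, |z i| + ∑ i ∈ S, |z i - x i| := by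
    rw [← Finset.sum_add_distrib]
    refine Finset.sum_le_sum fun i _ => ?_
    linarith [abs_sub_abs_le_abs_sub (x i) (z i), abs_sub_comm (x i) (z i)]
  linarith [Finset.sum_add_sum_compl S fun i => |z i|, Finset.sum_add_sum_compl S fun i => |x i|]

lemma inv_norm_smul_mem_unitCone {R : ℝ} (hR : 0 ≤ R) (hS : (S.card : ℝ) ≤ R ^ 2)
    {v : EuclideanSpace ℝ β} (hv : v ≠ 0) (hcone : ∑ i ∈ Sᶜ, |v i| ≤ ∑ i ∈ S, |v i|) :
    ‖v‖⁻¹ • v ∈ unitCone S R := by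
  refine ⟨norm_smul_inv_norm hv, ?_⟩
  simp only [PiLp.smul_apply, smul_eq_mul, abs_mul, abs_inv, abs_norm]
  rw [← Finset.mul_sum, inv_mul_le_iff₀ (norm_pos_iff.2 hv), mul_comm]
  exact hcone.trans (sum_abs_le_mul_norm hR hS v)

lemma exists_mem_unitCone_norm_matVec_le [Fintype α] {R δ b : ℝ} (hR : 0 ≤ R)
    (hS : (S.card : ℝ) ≤ R ^ 2) {v : EuclideanSpace ℝ β} (hδ : 0 < δ) (hv : δ < ‖v‖)
    (hcone : ∑ i ∈ Sᶜ, |v i| ≤ ∑ i ∈ S, |v i|) {Φ : α × β → ℝ} (hΦ : ‖matVec Φ v‖ ≤ b) :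
    ∃ u ∈ unitCone S R, ‖matVec Φ u‖ ≤ b / δ := by
  refine ⟨‖v‖⁻¹ • v, inv_norm_smul_mem_unitCone hR hS (norm_pos_iff.1 (hδ.trans hv)) hcone, ?_⟩
  rw [matVec_smul, norm_smul, norm_inv, norm_norm, ← div_eq_inv_mul]
  have hb : 0 ≤ b := (norm_nonneg _).trans hΦ
  gcongr

end Recovery

/-- The entries of a measurement operator as those of a matrix acting on `Matrix.vec`, which
stacks columns; hence the order of the indices. -/
def measurementMatrix {m n : ℕ} (ω : Fin m → Fin n → Fin n → ℝ) : Fin m × (Fin n × Fin n) → ℝ :=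
  fun p => ω p.1 p.2.2 p.2.1

lemma measurePreserving_measurementMatrix (m n : ℕ) :
    MeasurePreserving measurementMatrix (gaussOp m n) (gaussianPi (Fin m × (Fin n × Fin n))) := by
  have hmeas : Measurable (measurementMatrix (m := m) (n := n)) := by
    unfold measurementMatrix
    fun_prop
  refine ⟨hmeas, (Measure.pi_eq fun s hs => ?_).symm⟩
  have hpreimage : measurementMatrix ⁻¹' Set.univ.pi s
      = Set.univ.pi fun k => Set.univ.pi fun i => Set.univ.pi fun j => s (k, (j, i)) := by
    ext ω
    simp only [measurementMatrix, Set.mem_preimage, Set.mem_univ_pi, Prod.forall]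
    exact forall_congr' fun k => forall_comm
  rw [Measure.map_apply hmeas (MeasurableSet.univ_pi hs), hpreimage, gaussOp, Measure.pi_pi]
  simp_rw [Measure.pi_pi, Fintype.prod_prod_type]
  exact Finset.prod_congr rfl fun k _ => Finset.prod_comm

instance (m n : ℕ) : IsProbabilityMeasure (gaussOp m n) := by
  unfold gaussOp
  infer_instance

variable {m n s : ℕ}

lemma frob_eq_norm_vec (Z : Matrix (Fin n) (Fin n) ℝ) : frob Z = ‖WithLp.toLp 2 Z.vec‖ := by
  rw [frob, EuclideanSpace.norm_eq, Fintype.sum_prod_type, Finset.sum_comm]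
  simp [Matrix.vec]

lemma norm_matVec_sub_le {X Z : Matrix (Fin n) (Fin n) ℝ} {η : ℝ} {ω : Fin m → Fin n → Fin n → ℝ}
    {e : Fin m → ℝ} (he : vnorm2 e ≤ η)
    (hZ : vnorm2 (fun k => ((∑ i, ∑ j, ω k i j * X i j) + e k) - ∑ i, ∑ j, ω k i j * Z i j) ≤ η) :
    ‖matVec (measurementMatrix ω) (WithLp.toLp 2 (Z - X).vec)‖ ≤ 2 * η := by
  let residual (k : Fin m) : ℝ :=
    ((∑ i, ∑ j, ω k i j * X i j) + e k) - ∑ i, ∑ j, ω k i j * Z i j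
  have hnorm (y : Fin m → ℝ) : vnorm2 y = ‖WithLp.toLp 2 y‖ := by
    simp [vnorm2, EuclideanSpace.norm_eq]
  have hsub : matVec (measurementMatrix ω) (WithLp.toLp 2 (Z - X).vec)
      = WithLp.toLp 2 e - WithLp.toLp 2 residual := by
    ext k
    simp only [matVec, measurementMatrix, Matrix.vec, Matrix.sub_apply, PiLp.sub_apply, residual]
    rw [Fintype.sum_prod_type, Finset.sum_comm]
    simp only [sub_mul, Finset.sum_sub_distrib, mul_comm (Z _ _), mul_comm (X _ _)]
    ring
  rw [hsub, two_mul]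
  refine (norm_sub_le _ _).trans (add_le_add ?_ ?_)
  · exact (hnorm e).symm.trans_le he
  · exact (hnorm residual).symm.trans_le hZ

lemma exists_support_card_le {X : Matrix (Fin n) (Fin n) ℝ} (hX : ColSparse s X) :
    ∃ S : Finset (Fin n × Fin n), (∀ p ∉ S, X.vec p = 0) ∧ S.card ≤ n * s := by
  refine ⟨Finset.univ.filter fun p => X.vec p ≠ 0, fun p hp => ?_, ?_⟩
  · by_contra hXp
    exact hp (Finset.mem_filter.2 ⟨Finset.mem_univ p, hXp⟩)
  · calc _ = ∑ j, ((Finset.univ : Finset (Fin n)).filter fun i => X i j ≠ 0).card := by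
          simp_rw [Finset.card_filter, Fintype.sum_prod_type]
          rfl
      _ ≤ ∑ _j : Fin n, s := Finset.sum_le_sum fun j _ => hX j
      _ = n * s := by simp

/-- Flatness turns the bound on the maximal column norm into one column by column. -/
lemma sum_abs_vec_le_of_mnorm1_le {X Z : Matrix (Fin n) (Fin n) ℝ} (hX : Flat X)
    (h : mnorm1 Z ≤ mnorm1 X) : ∑ p, |Z.vec p| ≤ ∑ p, |X.vec p| := by
  rw [Fintype.sum_prod_type, Fintype.sum_prod_type]
  refine Finset.sum_le_sum fun j _ => ?_
  have : Nonempty (Fin n) := ⟨j⟩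
  calc colNorm1 Z j ≤ mnorm1 Z := le_ciSup (Set.finite_range (colNorm1 Z)).bddAbove j
    _ ≤ mnorm1 X := h
    _ ≤ colNorm1 X j := ciSup_le fun k => (hX k j).le

lemma sum_compl_abs_vec_sub_le {X Z : Matrix (Fin n) (Fin n) ℝ} (hX : Flat X)
    {S : Finset (Fin n × Fin n)} (hS : ∀ p ∉ S, X.vec p = 0) (h : mnorm1 Z ≤ mnorm1 X) :
    ∑ p ∈ Sᶜ, |(Z - X).vec p| ≤ ∑ p ∈ S, |(Z - X).vec p| :=
  sum_compl_abs_sub_le hS (sum_abs_vec_le_of_mnorm1_le hX h)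

lemma sq_mul_exp_neg_log {x : ℝ} (hx : 1 ≤ x) :
    x ^ 2 * Real.exp (-√(2 * Real.log x) ^ 2 / 2) = x := by
  have hx₀ : 0 < x := one_pos.trans_le hx
  have hlog := Real.log_nonneg hx
  rw [Real.sq_sqrt (by positivity), neg_div, mul_div_cancel_left₀ _ two_ne_zero, Real.exp_neg,
    Real.exp_log hx₀, sq, mul_inv_cancel_right₀ hx₀.ne']

/-- For `κ = √(2 log n)` the inequality `(κ + 8) ^ 2 ≤ 3 κ ^ 2 + 96`, that is
`2 (κ - 4) ^ 2 ≥ 0`, fixes the absolute constant `exp 96`. -/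
lemma sqrt_mul_add_le_sqrt_mul_log {n : ℕ} (hn : 0 < n) {d : ℝ} (hd : 0 ≤ d) :
    √d * (√(2 * Real.log n) + 8) ≤ √(d * Real.log (Real.exp 96 * (n : ℝ) ^ 6)) := by
  have hlog : 0 ≤ Real.log n := Real.log_natCast_nonneg n
  rw [Real.sqrt_mul hd, Real.log_mul (Real.exp_pos _).ne' (by positivity), Real.log_exp,
    Real.log_pow]
  refine mul_le_mul_of_nonneg_left (Real.le_sqrt_of_sq_le ?_) (Real.sqrt_nonneg _)
  push_cast
  nlinarith [sq_nonneg (√(2 * Real.log n) - 4), Real.sq_sqrt (mul_nonneg two_pos.le hlog)]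

lemma measure_exists_mem_unitCone_le_of_measurements {S : Finset (Fin n × Fin n)} {a t : ℝ}
    (hn : 0 < n) (hs : 0 < s) (hS : S.card ≤ n * s) (ha : 0 ≤ a) (ht : 0 ≤ t)
    (hm : (t + a + √(n * s * Real.log (Real.exp 96 * (n : ℝ) ^ 6))) ^ 2 ≤ m) :
    gaussianPi (Fin m × (Fin n × Fin n)) {Φ | ∃ u ∈ unitCone S √(n * s), ‖matVec Φ u‖ ≤ a}
      ≤ ENNReal.ofReal (Real.exp (-t ^ 2 / 2)) := by
  have hn₁ : (1 : ℝ) ≤ n := by exact_mod_cast hn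
  have hs₁ : (1 : ℝ) ≤ s := by exact_mod_cast hs
  have hns : √((n : ℝ) * s) ^ 2 = n * s := Real.sq_sqrt (by positivity)
  refine measure_exists_mem_unitCone_norm_matVec_le (M := √m) (κ := √(2 * Real.log n))
    (by simp) (Real.one_le_sqrt.2 (one_le_mul_of_one_le_of_one_le hn₁ hs₁)) (Real.sqrt_nonneg _)
    ht ha (by rw [hns]; exact_mod_cast hS) ?_ ?_
  · rw [hns, Fintype.card_prod, Fintype.card_fin, Nat.cast_mul, ← sq, sq_mul_exp_neg_log hn₁]
    exact le_mul_of_one_le_right (by positivity) hs₁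
  · refine le_trans ?_ (Real.le_sqrt_of_sq_le hm)
    gcongr
    exact sqrt_mul_add_le_sqrt_mul_log hn (by positivity)

lemma ofReal_one_sub_le_measure {Ω Ω' : Type*} [MeasurableSpace Ω] [MeasurableSpace Ω']
    {μ : Measure Ω} {ν : Measure Ω'} [IsProbabilityMeasure μ] {f : Ω → Ω'}
    (hf : MeasurePreserving f μ ν) {B : Set Ω'} {E : Set Ω} (hBE : ∀ ω, f ω ∉ B → ω ∈ E)
    {ε : ℝ} (hε : 0 ≤ ε) (hB : ν B ≤ ENNReal.ofReal ε) : ENNReal.ofReal (1 - ε) ≤ μ E := by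
  -- `B` need not be measurable.
  let T := toMeasurable ν B
  have hT : MeasurableSet T := measurableSet_toMeasurable ν B
  calc ENNReal.ofReal (1 - ε) = 1 - ENNReal.ofReal ε := by
        rw [ENNReal.ofReal_sub _ hε, ENNReal.ofReal_one]
    _ ≤ 1 - μ (f ⁻¹' T) := by
        rw [hf.measure_preimage hT.nullMeasurableSet, measure_toMeasurable]
        exact tsub_le_tsub_left hB 1
    _ = μ (f ⁻¹' T)ᶜ := (prob_compl_eq_one_sub (hf.measurable hT)).symm
    _ ≤ μ E := measure_mono fun ω hω => hBE ω fun hB => hω (subset_toMeasurable ν B hB)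

end Reduction

/-- number of Gaussian measurements for robust reconstruction
(Theorem 5.1). -/
theorem gaussian_measurements_robust_reconstruction :
    ∃ C : ℝ, 0 < C ∧ ∀ n m s : ℕ, 0 < n → 0 < s →
      ∀ X : Matrix (Fin n) (Fin n) ℝ, ColSparse s X → Flat X →
      ∀ η δ t : ℝ, 0 ≤ η → 0 < δ → 0 < t →
      ∀ e : (Fin m → Fin n → Fin n → ℝ) → (Fin m → ℝ), (∀ ω, vnorm2 (e ω) ≤ η) →
      ∀ Xs : (Fin m → Fin n → Fin n → ℝ) → Matrix (Fin n) (Fin n) ℝ,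
        -- X* ω is a minimizer of inf ‖Z‖₁ s.t. |y − Φ(Z)|₂ ≤ η, where y = Φ(X) + e
        (∀ ω, vnorm2 (fun k => ((∑ i, ∑ j, ω k i j * X i j) + e ω k)
                  - ∑ i, ∑ j, ω k i j * Xs ω i j) ≤ η) →
        (∀ ω, ∀ Z : Matrix (Fin n) (Fin n) ℝ,
            vnorm2 (fun k => ((∑ i, ∑ j, ω k i j * X i j) + e ω k)
                  - ∑ i, ∑ j, ω k i j * Z i j) ≤ η →
            mnorm1 (Xs ω) ≤ mnorm1 Z) →
        (m : ℝ) ≥ (t + 2 * η / δ + Real.sqrt (n * s * Real.log (C * n^6)))^2 →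
        ENNReal.ofReal (1 - Real.exp (-t^2 / 2))
          ≤ gaussOp m n {ω | frob (Xs ω - X) ≤ δ} := by
  refine ⟨Real.exp 96, Real.exp_pos _, ?_⟩
  intro n m s hn hs X hX hflat η δ t hη hδ ht e he Xs hfeas hmin hm
  obtain ⟨S, hXS, hS⟩ := exists_support_card_le hX
  have hS' : (S.card : ℝ) ≤ √(n * s) ^ 2 := by
    rw [Real.sq_sqrt (by positivity)]
    exact_mod_cast hS
  refine ofReal_one_sub_le_measure (measurePreserving_measurementMatrix m n) (fun ω hω => ?_)
    (Real.exp_pos _).le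
    (measure_exists_mem_unitCone_le_of_measurements hn hs hS (by positivity) ht.le hm)
  have hX_feasible : vnorm2 (fun k => ((∑ i, ∑ j, ω k i j * X i j) + e ω k)
      - ∑ i, ∑ j, ω k i j * X i j) ≤ η := by simpa only [add_sub_cancel_left] using he ω
  by_contra hlt
  rw [Set.mem_ofPred_eq, not_le, frob_eq_norm_vec] at hlt
  exact hω <| exists_mem_unitCone_norm_matVec_le (Real.sqrt_nonneg _) hS' hδ hlt
    (sum_compl_abs_vec_sub_le hflat hXS (hmin ω X hX_feasible))
    (norm_matVec_sub_le (he ω) (hfeas ω))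

end
end
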